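/- Let Γ ⊂ ℂ be a quasismooth Jordan curve, ν ∈ A∞(Γ), and 1 ≤ p < ∞. There exist constants c₃, c₄ > 0 depending only on Γ, p, λ_ν such that for every n ∈ ℕ, every polynomial p_n ∈ ℙ_n, every s with 0 < s < (diam Γ)/4, and every Borel set A ⊂ Γ with |A| ≥ |Γ| − s, one has ∫_Γ |p_n|^p w_n ds ≤ c₃ exp(c₄ δ(s) n) ∫_A |p_n|^p w_n ds. -/

import Mathlib

open MeasureTheory Metric Set Filter Bornology Complex
open scoped ENNReal NNReal Topology

noncomputable section

/-- `Γ` is a Jordan curve: the image of an injective continuous map of the unit circle. -/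
def IsJordanCurve (Γ : Set ℂ) : Prop :=
  ∃ γ : ℂ → ℂ, ContinuousOn γ (Metric.sphere (0:ℂ) 1) ∧
    Set.InjOn γ (Metric.sphere (0:ℂ) 1) ∧ Γ = γ '' (Metric.sphere (0:ℂ) 1)

/-- A (closed) subarc of `Γ`: a closed connected subset. -/
def IsSubarc (Γ J : Set ℂ) : Prop :=
  J ⊆ Γ ∧ IsClosed J ∧ IsPreconnected J

/-- `|Γ(z₁,z₂)|`: the length (1-dimensional Hausdorff measure) of the shorter subarc of `Γ`
joining `z₁` and `z₂`, described as the infimum of lengths of closed connected subsets of `Γ`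
containing both points. -/
def shorterArcLength (Γ : Set ℂ) (z₁ z₂ : ℂ) : ℝ≥0∞ :=
  ⨅ (J : Set ℂ) (_ : IsSubarc Γ J ∧ z₁ ∈ J ∧ z₂ ∈ J), μH[1] J

/-- `J` is (a realization of) the shorter arc `Γ(z₁,z₂)` of `Γ` between `z₁` and `z₂`. -/
def IsShorterArc (Γ : Set ℂ) (z₁ z₂ : ℂ) (J : Set ℂ) : Prop :=
  IsSubarc Γ J ∧ z₁ ∈ J ∧ z₂ ∈ J ∧ μH[1] J = shorterArcLength Γ z₁ z₂

/-- `Γ` is quasismooth (in the sense of Lavrentiev) with constant `Λ ≥ 1`: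
`|Γ(z₁,z₂)| ≤ Λ |z₁ - z₂|`. -/
def IsQuasismooth (Γ : Set ℂ) (Λ : ℝ) : Prop :=
  1 ≤ Λ ∧ ∀ z₁ ∈ Γ, ∀ z₂ ∈ Γ,
    shorterArcLength Γ z₁ z₂ ≤ ENNReal.ofReal (Λ * dist z₁ z₂)

/-- The union of the unbounded connected components of `Γᶜ`; for a Jordan curve `Γ` this is
the (unique) unbounded component `Ω` of the complement of `Γ`. -/
def unboundedComponent (Γ : Set ℂ) : Set ℂ :=
  {z | z ∉ Γ ∧ ¬ Bornology.IsBounded (connectedComponentIn Γᶜ z)}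

/-- `d(A,B) := inf {|z-ζ| : z ∈ A, ζ ∈ B}`. -/
def setDist (A B : Set ℂ) : ℝ := sInf (Set.image2 dist A B)

/-- The exterior `𝔻*` of the closed unit disk (finite part). -/
def extDisk : Set ℂ := {w : ℂ | 1 < ‖w‖}

/-- `Φ` is the conformal (holomorphic bijective) map of `Ω` onto `𝔻* = {|w| > 1}` normalized
by `Φ(∞) = ∞` and `Φ'(∞) := lim_{z→∞} Φ(z)/z > 0`. -/
def IsExtConformal (Ω : Set ℂ) (Φ : ℂ → ℂ) : Prop :=
  DifferentiableOn ℂ Φ Ω ∧ Set.BijOn Φ Ω extDisk ∧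
    ∃ c : ℝ, 0 < c ∧
      Filter.Tendsto (fun z => Φ z / z) (Bornology.cobounded ℂ) (nhds (c : ℂ))

/-- `Φ` additionally extends to a homeomorphism of `closure Ω` onto `{|w| ≥ 1}`. -/
def IsExtConformalClosure (Ω : Set ℂ) (Φ : ℂ → ℂ) : Prop :=
  IsExtConformal Ω Φ ∧ ContinuousOn Φ (closure Ω) ∧
    Set.BijOn Φ (closure Ω) {w : ℂ | 1 ≤ ‖w‖}

/-- The level curve `Γ_δ := {ζ ∈ Ω : |Φ(ζ)| = 1 + δ}`. -/
def levelCurve (Ω : Set ℂ) (Φ : ℂ → ℂ) (δ : ℝ) : Set ℂ :=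
  {ζ ∈ Ω | ‖Φ ζ‖ = 1 + δ}

/-- `ρ_δ(z) := d({z}, Γ_δ)`. -/
def rho (Ω : Set ℂ) (Φ : ℂ → ℂ) (δ : ℝ) (z : ℂ) : ℝ :=
  Metric.infDist z (levelCurve Ω Φ δ)

/-- `ν ∈ A∞(Γ)` with constant `lam ≥ 1`: `ν(J) ≤ lam · ν(S)` for every subarc `J ⊂ Γ` and
every Borel set `S ⊂ J` with `|J| ≤ 2|S|`. -/
def IsAInftyMeasure (Γ : Set ℂ) (ν : MeasureTheory.Measure ℂ) (lam : ℝ) : Prop :=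
  1 ≤ lam ∧ ∀ J S : Set ℂ, IsSubarc Γ J → S ⊆ J → MeasurableSet S →
    μH[1] J ≤ 2 * μH[1] S → ν J ≤ ENNReal.ofReal lam * ν S

/-- The family `z ↦ l_n(z)` of arcs: for `z ∈ Γ` and `1/n < δ₀`, `l_n(z) = Γ(z'_{1/n}, z''_{1/n})`
is a shorter arc around `z` whose two halves `Γ(z'_{1/n},z)`, `Γ(z,z''_{1/n})` both have length
`ρ_{1/n}(z)/2`; for `1/n ≥ δ₀` it is all of `Γ`. -/
def IsArcFamily (Γ Ω : Set ℂ) (Φ : ℂ → ℂ) (δ₀ : ℝ) (n : ℕ) (ℓ : ℂ → Set ℂ) : Prop :=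
  ∀ z ∈ Γ,
    (1 / (n:ℝ) < δ₀ →
      ∃ z' z'' : ℂ, z' ∈ Γ ∧ z'' ∈ Γ ∧ IsShorterArc Γ z' z'' (ℓ z) ∧ z ∈ ℓ z ∧
        shorterArcLength Γ z' z = ENNReal.ofReal (rho Ω Φ (1/(n:ℝ)) z / 2) ∧
        shorterArcLength Γ z z'' = ENNReal.ofReal (rho Ω Φ (1/(n:ℝ)) z / 2)) ∧
    (δ₀ ≤ 1 / (n:ℝ) → ℓ z = Γ)

/-- The weight `w_n(z) := ν(l_n(z)) / ρ_{1/n}(z)`. -/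
def wFun (ν : MeasureTheory.Measure ℂ) (Ω : Set ℂ) (Φ : ℂ → ℂ) (n : ℕ)
    (ℓ : ℂ → Set ℂ) (z : ℂ) : ℝ :=
  (ν (ℓ z)).toReal / rho Ω Φ (1/(n:ℝ)) z

/-- `g` is a continuous `T`-periodic parametrization of the Jordan curve `Γ`, injective on each
half-open period. -/
structure IsLoop (Γ : Set ℂ) (g : ℝ → ℂ) (T : ℝ) : Prop where
  cont : Continuous g
  pos : 0 < T
  per : ∀ t, g (t + T) = g t
  inj : ∀ x y, x ≤ y → y < x + T → g x = g y → x = y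
  image : ∀ a, g '' Icc a (a + T) = Γ

lemma IsJordanCurve.exists_isLoop {Γ : Set ℂ} (h : IsJordanCurve Γ) :
    ∃ g T, IsLoop Γ g T := by
  obtain ⟨γ, hc, hi, rfl⟩ := h
  have hmem : ∀ t : ℝ, Complex.exp (t * I) ∈ Metric.sphere (0:ℂ) 1 := fun t => by
    simp [Complex.norm_exp_ofReal_mul_I]
  refine ⟨fun t => γ (Complex.exp (t * I)), 2 * Real.pi, ?_, by positivity, ?_, ?_, ?_⟩
  · exact hc.comp_continuous (by fun_prop) hmem
  · intro t
    congr 1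
    push_cast
    rw [add_mul, Complex.exp_add, Complex.exp_two_pi_mul_I, mul_one]
  · intro x y hxy hyx he
    have := hi (hmem x) (hmem y) he
    rw [Complex.exp_eq_exp_iff_exists_int] at this
    obtain ⟨n, hn⟩ := this
    have hn' : x = y + n * (2 * Real.pi) := by
      have h2 : (x : ℂ) = y + n * (2 * Real.pi) := by
        apply mul_right_cancel₀ I_ne_zero
        rw [hn]; ring
      exact_mod_cast h2
    have hpi := Real.pi_pos
    have h1 : (-1 : ℝ) < n := by
      by_contra! h
      nlinarith
    have h2 : (n : ℝ) ≤ 0 := by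
      by_contra! h
      nlinarith
    have h3 : n = 0 := by
      have h1' : (-1 : ℤ) < n := by exact_mod_cast h1
      have h2' : n ≤ 0 := by exact_mod_cast h2
      omega
    simpa [h3] using hn'
  · intro a
    apply Subset.antisymm
    · rintro _ ⟨t, -, rfl⟩
      exact ⟨_, hmem t, rfl⟩
    · rintro _ ⟨z, hz, rfl⟩
      have hz1 : ‖z‖ = 1 := by simpa using hz
      have hp : (0:ℝ) < 2 * Real.pi := by positivity
      refine ⟨toIcoMod hp a z.arg, ?_, ?_⟩
      · have := toIcoMod_mem_Ico hp a z.arg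
        exact ⟨this.1, this.2.le⟩
      · have h1 : toIcoMod hp a z.arg = z.arg - toIcoDiv hp a z.arg * (2 * Real.pi) := by
          rw [toIcoMod, zsmul_eq_mul]
        rw [h1]
        change γ _ = γ z
        congr 1
        have h2 : ((z.arg - toIcoDiv hp a z.arg * (2 * Real.pi) : ℝ) : ℂ) * I
            = z.arg * I - toIcoDiv hp a z.arg * (2 * Real.pi * I) := by
          push_cast; ring
        rw [h2, Complex.exp_sub, Complex.exp_int_mul_two_pi_mul_I, div_one]
        have := Complex.norm_mul_exp_arg_mul_I z
        rw [hz1] at this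
        simpa using this

lemma length_singleton (x : ℂ) : μH[1] ({x} : Set ℂ) = 0 :=
  haveI := Measure.nullSingletonClass_hausdorff ℂ one_pos
  measure_singleton x

lemma ofReal_dist_le_length {J : Set ℂ} (hJ : IsPreconnected J) {x y : ℂ} (hx : x ∈ J)
    (hy : y ∈ J) : ENNReal.ofReal (dist x y) ≤ μH[1] J := by
  have h1 : Icc 0 (dist x y) ⊆ (fun w => dist x w) '' J := by
    have := (hJ.image (fun w => dist x w) (by fun_prop)).ordConnected.out
      (mem_image_of_mem _ hx) (mem_image_of_mem _ hy)
    simpa using this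
  have h2 := (LipschitzWith.dist_right x).hausdorffMeasure_image_le (d := 1) zero_le_one J
  calc ENNReal.ofReal (dist x y) = volume (Icc 0 (dist x y)) := by simp
    _ ≤ volume ((fun w => dist x w) '' J) := measure_mono h1
    _ = μH[1] ((fun w => dist x w) '' J) := by rw [hausdorffMeasure_real]
    _ ≤ μH[1] J := by simpa using h2

namespace IsLoop

variable {Γ : Set ℂ} {g : ℝ → ℂ} {T : ℝ}

lemma reflect (h : IsLoop Γ g T) : IsLoop Γ (fun t => g (-t)) T where
  cont := h.cont.comp continuous_neg
  pos := h.pos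
  per t := by
    have := h.per (-(t + T))
    rw [← this]; congr 1; ring
  inj x y hxy hyx he := by
    have := h.inj (-y) (-x) (by linarith) (by linarith) he.symm
    linarith
  image a := by
    rw [← h.image (-(a + T))]
    ext z
    constructor
    · rintro ⟨t, ht, rfl⟩
      exact ⟨-t, ⟨by linarith [ht.2], by linarith [ht.1]⟩, rfl⟩
    · rintro ⟨t, ht, rfl⟩
      exact ⟨-t, ⟨by linarith [ht.2], by linarith [ht.1]⟩, by simp⟩

lemma mem (h : IsLoop Γ g T) (t : ℝ) : g t ∈ Γ := by
  rw [← h.image t]; exact ⟨t, ⟨le_rfl, by linarith [h.pos]⟩, rfl⟩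

lemma isCompact_arc (h : IsLoop Γ g T) (a b : ℝ) : IsCompact (g '' Icc a b) :=
  isCompact_Icc.image h.cont

lemma isSubarc (h : IsLoop Γ g T) (a b : ℝ) : IsSubarc Γ (g '' Icc a b) := by
  refine ⟨?_, (h.isCompact_arc a b).isClosed, isPreconnected_Icc.image _ h.cont.continuousOn⟩
  rintro _ ⟨t, -, rfl⟩
  exact h.mem t

lemma isCompact (h : IsLoop Γ g T) : IsCompact Γ := by
  rw [← h.image 0]; exact h.isCompact_arc _ _

lemma isPreconnected (h : IsLoop Γ g T) : IsPreconnected Γ := by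
  rw [← h.image 0]; exact (h.isSubarc _ _).2.2

lemma isSubarc_self (h : IsLoop Γ g T) : IsSubarc Γ Γ :=
  ⟨Subset.rfl, h.isCompact.isClosed, h.isPreconnected⟩

lemma exists_param (h : IsLoop Γ g T) (a : ℝ) {z : ℂ} (hz : z ∈ Γ) :
    ∃ t ∈ Icc a (a + T), g t = z := by
  rw [← h.image a] at hz; exact hz

lemma arc_subset_or (h : IsLoop Γ g T) {J : Set ℂ} (hJ : IsPreconnected J) (hJΓ : J ⊆ Γ)
    {a b : ℝ} (ha' : g a ∈ J) (hb' : g b ∈ J) :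
    g '' Icc a b ⊆ J ∨ g '' Icc b (a + T) ⊆ J := by
  by_contra! hcon
  obtain ⟨h1, h2⟩ := hcon
  rw [Set.not_subset] at h1 h2
  obtain ⟨_, ⟨u, hu, rfl⟩, huJ⟩ := h1
  obtain ⟨_, ⟨v, hv, rfl⟩, hvJ⟩ := h2
  have hT := h.pos
  have hcov : J ⊆ g '' Icc u v ∪ g '' Icc v (u + T) := by
    rw [← image_union, Icc_union_Icc_eq_Icc (hu.2.trans hv.1) (by linarith [hv.2, hu.1]), h.image]
    exact hJΓ
  have := isPreconnected_closed_iff.1 hJ _ _ (h.isSubarc u v).2.1 (h.isSubarc v (u + T)).2.1 hcov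
    ⟨g b, hb', mem_image_of_mem _ ⟨hu.2, hv.1⟩⟩
    ⟨g a, ha', ⟨a + T, ⟨hv.2, by linarith [hu.1]⟩, h.per a⟩⟩
  obtain ⟨w, hwJ, ⟨x, hx, rfl⟩, ⟨y, hy, hxy⟩⟩ := this
  have hlt : x ≤ y := hx.2.trans hy.1
  rcases lt_or_ge y (x + T) with hlt2 | hge
  · have := h.inj x y hlt hlt2 hxy.symm
    have hxv : x = v := le_antisymm hx.2 (this ▸ hy.1)
    exact hvJ (hxv ▸ hwJ)
  · have hxu : x = u := le_antisymm (by linarith [hy.2]) hx.1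
    exact huJ (hxu ▸ hwJ)

lemma min_le_shorterArcLength (h : IsLoop Γ g T) (a b : ℝ) :
    min (μH[1] (g '' Icc a b)) (μH[1] (g '' Icc b (a + T))) ≤ shorterArcLength Γ (g a) (g b) := by
  refine le_iInf₂ fun J hJ => ?_
  rcases h.arc_subset_or hJ.1.2.2 hJ.1.1 hJ.2.1 hJ.2.2 with h1 | h1
  · exact (min_le_left _ _).trans (measure_mono h1)
  · exact (min_le_right _ _).trans (measure_mono h1)

/-- The set of parameters whose initial arc has length at most `c` has a largest element. -/
lemma exists_max_param (g : ℝ → ℂ) {θ S : ℝ} (hS : θ ≤ S) (c : ℝ≥0∞) :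
    ∃ b ∈ Icc θ S, μH[1] (g '' Icc θ b) ≤ c ∧
      ∀ t ∈ Icc θ S, μH[1] (g '' Icc θ t) ≤ c → t ≤ b := by
  set X := {t ∈ Icc θ S | μH[1] (g '' Icc θ t) ≤ c} with hX
  have hne : X.Nonempty := ⟨θ, ⟨le_rfl, hS⟩, by simp [length_singleton]⟩
  have hbdd : BddAbove X := ⟨S, fun t ht => ht.1.2⟩
  have hmemI : sSup X ∈ Icc θ S :=
    ⟨le_csSup hbdd ⟨⟨le_rfl, hS⟩, by simp [length_singleton]⟩, csSup_le hne fun t ht => ht.1.2⟩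
  refine ⟨sSup X, hmemI, ?_, fun t ht htc => le_csSup hbdd ⟨ht, htc⟩⟩
  obtain ⟨u, hu, hul, huX⟩ := exists_seq_tendsto_sSup hne hbdd
  have hsub : g '' Icc θ (sSup X) ⊆ (⋃ n, g '' Icc θ (u n)) ∪ {g (sSup X)} := by
    rintro _ ⟨t, ht, rfl⟩
    rcases eq_or_lt_of_le ht.2 with he | hlt
    · right; simp [he]
    · left
      obtain ⟨n, hn⟩ := (hul.eventually (lt_mem_nhds hlt)).exists
      exact mem_iUnion.2 ⟨n, ⟨t, ⟨ht.1, hn.le⟩, rfl⟩⟩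
  calc μH[1] (g '' Icc θ (sSup X)) ≤ μH[1] ((⋃ n, g '' Icc θ (u n)) ∪ {g (sSup X)}) :=
        measure_mono hsub
    _ ≤ μH[1] (⋃ n, g '' Icc θ (u n)) + μH[1] {g (sSup X)} := measure_union_le _ _
    _ = μH[1] (⋃ n, g '' Icc θ (u n)) := by simp [length_singleton]
    _ = ⨆ n, μH[1] (g '' Icc θ (u n)) := by
        apply Monotone.measure_iUnion
        intro i j hij
        exact image_mono (Icc_subset_Icc_right (hu hij))
    _ ≤ c := iSup_le fun n => (huX n).2

variable {Λ : ℝ}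

/-- Points of `Γ` near `g θ` lie on an arc around `g θ` with short halves. -/
lemma exists_arc_cover (h : IsLoop Γ g T) (hq : IsQuasismooth Γ Λ) (θ : ℝ) (r : ℝ) :
    ∃ a b, θ - T ≤ a ∧ a ≤ θ ∧ θ ≤ b ∧ b ≤ θ + T ∧ Γ ∩ ball (g θ) r ⊆ g '' Icc a b ∧
      μH[1] (g '' Icc a θ) ≤ ENNReal.ofReal (Λ * r) ∧
      μH[1] (g '' Icc θ b) ≤ ENNReal.ofReal (Λ * r) := by
  have hT := h.pos
  obtain ⟨b, hb, hbc, hbm⟩ := exists_max_param g (θ := θ) (S := θ + T) (by linarith)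
    (ENNReal.ofReal (Λ * r))
  obtain ⟨a, ha, hac, ham⟩ := exists_max_param (fun t => g (-t)) (θ := -θ) (S := -θ + T)
    (by linarith)
    (ENNReal.ofReal (Λ * r))
  have himg : ∀ x y : ℝ, (fun t => g (-t)) '' Icc x y = g '' Icc (-y) (-x) := by
    intro x y
    rw [show (fun t => g (-t)) = g ∘ Neg.neg from rfl, image_comp, image_neg_Icc]
  rw [himg, neg_neg] at hac
  refine ⟨-a, b, by linarith [ha.2], by linarith [ha.1], hb.1, hb.2, ?_, hac, hbc⟩
  rintro z ⟨hz, hzb⟩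
  obtain ⟨t, ht, rfl⟩ := h.exists_param θ hz
  have h1 := (h.min_le_shorterArcLength θ t).trans (hq.2 _ (h.mem θ) _ (h.mem t))
  have h2 : ENNReal.ofReal (Λ * dist (g θ) (g t)) ≤ ENNReal.ofReal (Λ * r) := by
    apply ENNReal.ofReal_le_ofReal
    have := hq.1
    rw [mem_ball, dist_comm] at hzb
    gcongr
  rcases min_le_iff.1 (h1.trans h2) with h3 | h3
  · exact ⟨t, ⟨by linarith [ha.1, ht.1], hbm t ht h3⟩, rfl⟩
  · have := ham (T - t) ⟨by linarith [ht.2], by linarith [ht.1]⟩ (by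
      rw [himg]
      have e : g '' Icc (-(T - t)) (- -θ) = g '' Icc t (θ + T) := by
        ext w
        constructor
        · rintro ⟨x, hx, rfl⟩
          exact ⟨x + T, ⟨by linarith [hx.1], by linarith [hx.2]⟩, h.per x⟩
        · rintro ⟨x, hx, rfl⟩
          exact ⟨x - T, ⟨by linarith [hx.1], by linarith [hx.2]⟩, by rw [← h.per, sub_add_cancel]⟩
      rw [e]; exact h3)
    refine ⟨t - T, ⟨by linarith, by linarith [hb.1, ht.2]⟩, ?_⟩
    rw [← h.per, sub_add_cancel]

lemma measure_ball_le (h : IsLoop Γ g T) (hq : IsQuasismooth Γ Λ) (a : ℂ) (r : ℝ) :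
    μH[1] (Γ ∩ ball a r) ≤ ENNReal.ofReal (4 * Λ * r) := by
  rcases (Γ ∩ ball a r).eq_empty_or_nonempty with he | ⟨z, hz, hza⟩
  · simp [he]
  obtain ⟨θ, -, rfl⟩ := h.exists_param 0 hz
  have hr : 0 < r := pos_of_mem_ball hza
  obtain ⟨x, y, -, hxθ, hθy, -, hsub, h1, h2⟩ := h.exists_arc_cover hq θ (2 * r)
  have hsub' : Γ ∩ ball a r ⊆ g '' Icc x θ ∪ g '' Icc θ y := by
    rw [← image_union, Icc_union_Icc_eq_Icc hxθ hθy]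
    refine Subset.trans (inter_subset_inter_right _ ?_) hsub
    apply ball_subset_ball'
    rw [mem_ball, dist_comm] at hza
    linarith
  calc _ ≤ _ := measure_mono hsub'
    _ ≤ _ := measure_union_le _ _
    _ ≤ ENNReal.ofReal (Λ * (2 * r)) + ENNReal.ofReal (Λ * (2 * r)) := add_le_add h1 h2
    _ = _ := by
      have := hq.1
      rw [← ENNReal.ofReal_add (by positivity) (by positivity)]; congr 1; ring

lemma length_lt_top (h : IsLoop Γ g T) (hq : IsQuasismooth Γ Λ) : μH[1] Γ < ∞ := by
  obtain ⟨r, hr⟩ := h.isCompact.isBounded.subset_ball 0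
  have := h.measure_ball_le hq 0 r
  rw [inter_eq_self_of_subset_left hr] at this
  exact this.trans_lt ENNReal.ofReal_lt_top

lemma exists_dist_eq (h : IsLoop Γ g T) {z : ℂ} (hz : z ∈ Γ) {r : ℝ} (hr : 0 ≤ r)
    (hex : ∃ w ∈ Γ, r ≤ dist z w) : ∃ w ∈ Γ, dist z w = r := by
  obtain ⟨w, hw, hwr⟩ := hex
  have := (h.isPreconnected.image (fun w => dist z w) (by fun_prop)).ordConnected.out
      (mem_image_of_mem _ hz) (mem_image_of_mem _ hw)
  have h2 := this ⟨by simpa using hr, hwr⟩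
  exact h2

lemma exists_le_dist (h : IsLoop Γ g T) {z : ℂ} (hz : z ∈ Γ) {r : ℝ}
    (hr : 2 * r ≤ diam Γ) : ∃ w ∈ Γ, r ≤ dist z w := by
  by_contra! hcon
  obtain ⟨w, hw, hmax⟩ := h.isCompact.exists_isMaxOn ⟨z, hz⟩
    (f := fun w => dist z w) (by fun_prop)
  have : diam Γ ≤ 2 * dist z w := by
    apply diam_le_of_forall_dist_le (by positivity)
    intro x hx y hy
    have h1 : dist z x ≤ dist z w := hmax hx
    have h2 : dist z y ≤ dist z w := hmax hy
    linarith [dist_triangle_left x y z]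
  linarith [hcon w hw]

lemma le_measure_ball (h : IsLoop Γ g T) {z : ℂ} (hz : z ∈ Γ) {r : ℝ}
    (hr : 2 * r ≤ diam Γ) : ENNReal.ofReal r ≤ μH[1] (Γ ∩ ball z r) := by
  have h1 : Ico 0 r ⊆ (fun w => dist z w) '' (Γ ∩ ball z r) := by
    rintro x ⟨hx0, hxr⟩
    obtain ⟨w, hw, hwx⟩ := h.exists_dist_eq hz hx0
      ((h.exists_le_dist hz hr).imp fun w hw => ⟨hw.1, hxr.le.trans hw.2⟩)
    exact ⟨w, ⟨hw, by rw [mem_ball, dist_comm, hwx]; exact hxr⟩, hwx⟩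
  have h2 := (LipschitzWith.dist_right z).hausdorffMeasure_image_le (d := 1) zero_le_one
    (Γ ∩ ball z r)
  calc ENNReal.ofReal r = volume (Ico 0 r) := by simp
    _ ≤ volume ((fun w => dist z w) '' (Γ ∩ ball z r)) := measure_mono h1
    _ = μH[1] ((fun w => dist z w) '' (Γ ∩ ball z r)) := by rw [hausdorffMeasure_real]
    _ ≤ μH[1] (Γ ∩ ball z r) := by simpa using h2

/-- Two distinct points of `Γ` are joined by a subarc of length at most `2Λ|z-w|`. -/
lemma exists_short_arc (hq : IsQuasismooth Γ Λ) {z w : ℂ} (hz : z ∈ Γ)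
    (hw : w ∈ Γ) (hne : z ≠ w) :
    ∃ J, IsSubarc Γ J ∧ z ∈ J ∧ w ∈ J ∧ μH[1] J ≤ ENNReal.ofReal (2 * Λ * dist z w) := by
  have hd : 0 < dist z w := dist_pos.2 hne
  have hΛ := hq.1
  have : shorterArcLength Γ z w < ENNReal.ofReal (2 * Λ * dist z w) := by
    refine (hq.2 z hz w hw).trans_lt ?_
    rw [ENNReal.ofReal_lt_ofReal_iff (by positivity)]
    nlinarith
  unfold shorterArcLength at this
  rw [iInf_lt_iff] at this
  obtain ⟨J, hJ⟩ := this
  rw [iInf_lt_iff] at hJ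
  obtain ⟨hJ1, hJ2⟩ := hJ
  exact ⟨J, hJ1.1, hJ1.2.1, hJ1.2.2, hJ2.le⟩

end IsLoop

namespace IsLoop

variable {Γ : Set ℂ} {g : ℝ → ℂ} {T Λ : ℝ}

lemma exists_param_length_eq (h : IsLoop Γ g T) (hq : IsQuasismooth Γ Λ) {a b' b : ℝ}
    (hab' : a ≤ b') (hb'b : b' ≤ b) (hb : b ≤ a + T) {c : ℝ≥0∞}
    (h1 : μH[1] (g '' Icc a b') ≤ c) (h2 : c < μH[1] (g '' Icc a b)) :
    ∃ t ∈ Icc b' b, μH[1] (g '' Icc a t) = c := by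
  obtain ⟨t, ht, htc, htm⟩ := exists_max_param g (hab'.trans hb'b) c
  have hb't : b' ≤ t := htm b' ⟨hab', hb'b⟩ h1
  refine ⟨t, ⟨hb't, ht.2⟩, le_antisymm htc ?_⟩
  have htb : t < b := lt_of_le_of_ne ht.2 (by rintro rfl; exact absurd htc (not_le.2 h2))
  set u : ℕ → ℝ := fun n => t + (b - t) / (n + 2) with hu
  have hd : 0 < b - t := sub_pos.2 htb
  have hut : ∀ n, t < u n := fun n => by
    have : 0 < (b - t) / ((n:ℝ) + 2) := by positivity
    simp only [hu]; linarith
  have hub : ∀ n, u n < b := fun n => by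
    have : (b - t) / ((n:ℝ) + 2) < b - t := by
      apply div_lt_self hd
      have : (0:ℝ) ≤ n := n.cast_nonneg
      linarith
    simp only [hu]; linarith
  have hanti : Antitone u := by
    intro i j hij
    simp only [hu]
    gcongr
  have hlim : Tendsto u atTop (𝓝 t) := by
    have : Tendsto (fun n : ℕ => (b - t) / ((n:ℝ) + 2)) atTop (𝓝 0) := by
      apply Tendsto.div_atTop tendsto_const_nhds
      exact tendsto_atTop_add_const_right _ _ tendsto_natCast_atTop_atTop
    simpa [hu] using this.const_add t
  have hsub : (⋂ n, g '' Icc a (u n)) ⊆ g '' Icc a t := by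
    intro z hz
    rw [mem_iInter] at hz
    obtain ⟨x, hx, rfl⟩ := hz 0
    refine ⟨x, ⟨hx.1, ?_⟩, rfl⟩
    refine ge_of_tendsto' hlim fun n => ?_
    obtain ⟨y, hy, hyx⟩ := hz n
    have e : x = y := by
      rcases le_total x y with hxy | hxy
      · exact h.inj x y hxy (by linarith [hx.1, hy.2, hub n]) hyx.symm
      · exact (h.inj y x hxy (by linarith [hy.1, hx.2, hub 0]) hyx).symm
    rw [e]; exact hy.2
  have hfin : μH[1] (g '' Icc a (u 0)) ≠ ∞ :=
    ((measure_mono (h.isSubarc _ _).1).trans_lt (h.length_lt_top hq)).ne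
  have hmeas : μH[1] (⋂ n, g '' Icc a (u n)) = ⨅ n, μH[1] (g '' Icc a (u n)) := by
    apply Antitone.measure_iInter
    · intro i j hij
      exact image_mono (Icc_subset_Icc_right (hanti hij))
    · intro i
      exact ((h.isCompact_arc _ _).isClosed.measurableSet).nullMeasurableSet
    · exact ⟨0, hfin⟩
  refine le_trans ?_ (measure_mono hsub)
  rw [hmeas]
  refine le_iInf fun n => ?_
  by_contra! hcon
  exact absurd (htm (u n) ⟨ht.1.trans (hut n).le, (hub n).le⟩ hcon.le) (not_le.2 (hut n))

variable {ν : Measure ℂ} {lam : ℝ}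

lemma measure_arc_extend_right (h : IsLoop Γ g T) (hq : IsQuasismooth Γ Λ)
    (hν : IsAInftyMeasure Γ ν lam) {a : ℝ} (k : ℕ) : ∀ {b' b : ℝ}, a ≤ b' → b' ≤ b →
    b ≤ a + T → μH[1] (g '' Icc a b) ≤ 2 ^ k * μH[1] (g '' Icc a b') →
    ν (g '' Icc a b) ≤ ENNReal.ofReal lam ^ (k + 1) * ν (g '' Icc a b') := by
  have hms : ∀ x y, MeasurableSet (g '' Icc x y) := fun x y =>
    (h.isCompact_arc x y).isClosed.measurableSet
  have hlam : 1 ≤ ENNReal.ofReal lam := by simpa using ENNReal.ofReal_le_ofReal hν.1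
  induction k with
  | zero =>
    intro b' b hab' hb'b hb hm
    rw [zero_add, pow_one]
    apply hν.2 _ _ (h.isSubarc a b) (image_mono (Icc_subset_Icc_right hb'b)) (hms _ _)
    calc _ ≤ 1 * μH[1] (g '' Icc a b') := by simpa using hm
      _ ≤ _ := by gcongr; norm_num
  | succ k ih =>
    intro b' b hab' hb'b hb hm
    rcases le_or_gt (μH[1] (g '' Icc a b)) (2 * μH[1] (g '' Icc a b')) with hle | hlt
    · calc ν (g '' Icc a b) ≤ ENNReal.ofReal lam * ν (g '' Icc a b') :=
            hν.2 _ _ (h.isSubarc a b) (image_mono (Icc_subset_Icc_right hb'b)) (hms _ _) hle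
        _ ≤ _ := by gcongr; exact le_self_pow hlam (by omega)
    · have hfin : μH[1] (g '' Icc a b) ≠ ∞ :=
        ((measure_mono (h.isSubarc _ _).1).trans_lt (h.length_lt_top hq)).ne
      have hpos : μH[1] (g '' Icc a b) ≠ 0 := (pos_of_gt hlt).ne'
      obtain ⟨t, ht, htc⟩ := h.exists_param_length_eq hq hab' hb'b hb
        (c := μH[1] (g '' Icc a b) / 2)
        (by rw [ENNReal.le_div_iff_mul_le (by simp) (by simp), mul_comm]; exact hlt.le)
        (ENNReal.half_lt_self hpos hfin)
      have h1 : ν (g '' Icc a b) ≤ ENNReal.ofReal lam * ν (g '' Icc a t) := by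
        apply hν.2 _ _ (h.isSubarc a b) (image_mono (Icc_subset_Icc_right ht.2)) (hms _ _)
        rw [htc, ENNReal.mul_div_cancel (by simp) (by simp)]
      have h2 : ν (g '' Icc a t) ≤ ENNReal.ofReal lam ^ (k + 1) * ν (g '' Icc a b') := by
        apply ih hab' ht.1 (ht.2.trans hb)
        rw [htc]
        apply ENNReal.div_le_of_le_mul
        calc _ ≤ _ := hm
          _ = _ := by ring
      calc _ ≤ _ := h1
        _ ≤ ENNReal.ofReal lam * (ENNReal.ofReal lam ^ (k + 1) * ν (g '' Icc a b')) := by gcongr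
        _ = _ := by ring

lemma image_reflect_Icc (g : ℝ → ℂ) (x y : ℝ) :
    (fun t => g (-t)) '' Icc x y = g '' Icc (-y) (-x) := by
  rw [show (fun t => g (-t)) = g ∘ Neg.neg from rfl, image_comp, image_neg_Icc]

lemma measure_arc_extend (h : IsLoop Γ g T) (hq : IsQuasismooth Γ Λ)
    (hν : IsAInftyMeasure Γ ν lam) (k : ℕ) {a a' b' b : ℝ} (ha : a ≤ a') (hab' : a' ≤ b')
    (hb : b' ≤ b) (hT : b ≤ a + T) (hm : μH[1] (g '' Icc a b) ≤ 2 ^ k * μH[1] (g '' Icc a' b')) :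
    ν (g '' Icc a b) ≤ ENNReal.ofReal lam ^ (2 * k + 2) * ν (g '' Icc a' b') := by
  have h1 : ν (g '' Icc a' b) ≤ ENNReal.ofReal lam ^ (k + 1) * ν (g '' Icc a' b') := by
    apply h.measure_arc_extend_right hq hν k hab' hb (by linarith)
    exact le_trans (measure_mono (image_mono (Icc_subset_Icc_left ha))) hm
  have h2 : ν (g '' Icc a b) ≤ ENNReal.ofReal lam ^ (k + 1) * ν (g '' Icc a' b) := by
    have := h.reflect.measure_arc_extend_right hq hν k (a := -b) (b' := -a') (b := -a)
      (by linarith) (by linarith) (by linarith)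
    simp only [image_reflect_Icc, neg_neg] at this
    apply this
    refine hm.trans ?_
    gcongr
  calc _ ≤ _ := h2
    _ ≤ ENNReal.ofReal lam ^ (k + 1) * (ENNReal.ofReal lam ^ (k + 1) * ν (g '' Icc a' b')) := by
      gcongr
    _ = _ := by ring

lemma measure_ball_le_of_right_arc (h : IsLoop Γ g T) (hq : IsQuasismooth Γ Λ)
    (hν : IsAInftyMeasure Γ ν lam) {θ t R : ℝ} (hθt : θ ≤ t) (ht : t ≤ θ + T)
    (k : ℕ) (hk : 2 * Λ * R + dist (g θ) (g t) ≤ 2 ^ k * dist (g θ) (g t)) (hR : 0 < R) :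
    ν (Γ ∩ ball (g θ) R) ≤ ENNReal.ofReal lam ^ (2 * k + 2) * ν (g '' Icc θ t) := by
  obtain ⟨a, b, haT, haθ, hθb, hbT, hsub, h1, h2⟩ := h.exists_arc_cover hq θ R
  have hpos := h.pos
  have hΛ := hq.1
  set b₁ := max b t with hb₁
  set a₁ := max a (b₁ - T) with ha₁
  have hb₁T : b₁ ≤ θ + T := max_le hbT ht
  have hbb₁ : b ≤ b₁ := le_max_left _ _
  have htb₁ : t ≤ b₁ := le_max_right _ _
  have ha₁θ : a₁ ≤ θ := max_le haθ (by linarith)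
  have haa₁ : a ≤ a₁ := le_max_left _ _
  have hsub2 : Γ ∩ ball (g θ) R ⊆ g '' Icc a₁ b₁ := by
    rcases le_total (b₁ - T) a with hle | hle
    · have : a₁ = a := max_eq_left hle
      rw [this]
      exact hsub.trans (image_mono (Icc_subset_Icc_right hbb₁))
    · have : a₁ = b₁ - T := max_eq_right hle
      have e := h.image (b₁ - T)
      rw [sub_add_cancel] at e
      rw [this, e]
      exact inter_subset_left
  refine (measure_mono hsub2).trans ?_
  apply h.measure_arc_extend hq hν k ha₁θ hθt htb₁
  · have : b₁ - T ≤ a₁ := le_max_right _ _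
    linarith
  have hsub3 : g '' Icc a₁ b₁ ⊆ (g '' Icc a θ ∪ g '' Icc θ b) ∪ g '' Icc θ t := by
    rintro _ ⟨x, hx, rfl⟩
    rcases le_total x θ with hxθ | hxθ
    · exact Or.inl (Or.inl ⟨x, ⟨haa₁.trans hx.1, hxθ⟩, rfl⟩)
    · rcases le_total x b with hxb | hxb
      · exact Or.inl (Or.inr ⟨x, ⟨hxθ, hxb⟩, rfl⟩)
      · rcases le_total x t with hxt | hxt
        · exact Or.inr ⟨x, ⟨hxθ, hxt⟩, rfl⟩
        · have : x = b ∨ x = t := by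
            rcases max_choice b t with hm | hm
            · left; apply le_antisymm _ hxb; rw [← hm]; exact hx.2
            · right; apply le_antisymm _ hxt; rw [← hm]; exact hx.2
          rcases this with rfl | rfl
          · exact Or.inl (Or.inr ⟨x, ⟨hxθ, le_rfl⟩, rfl⟩)
          · exact Or.inr ⟨x, ⟨hxθ, le_rfl⟩, rfl⟩
  set m := μH[1] (g '' Icc θ t) with hm
  have hdm : ENNReal.ofReal (dist (g θ) (g t)) ≤ m :=
    ofReal_dist_le_length (h.isSubarc θ t).2.2 (mem_image_of_mem _ ⟨le_rfl, hθt⟩)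
      (mem_image_of_mem _ ⟨hθt, le_rfl⟩)
  have hmfin : m ≠ ∞ := ((measure_mono (h.isSubarc _ _).1).trans_lt (h.length_lt_top hq)).ne
  have hd0 : 0 ≤ dist (g θ) (g t) := dist_nonneg
  calc μH[1] (g '' Icc a₁ b₁) ≤ (ENNReal.ofReal (Λ * R) + ENNReal.ofReal (Λ * R)) + m := by
        refine (measure_mono hsub3).trans ((measure_union_le _ _).trans ?_)
        gcongr
        exact (measure_union_le _ _).trans (add_le_add h1 h2)
    _ = ENNReal.ofReal (2 * Λ * R + m.toReal) := by
        have e : 2 * Λ * R + m.toReal = (Λ * R + Λ * R) + m.toReal := by ring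
        rw [e, ENNReal.ofReal_add (by positivity) (by positivity),
          ENNReal.ofReal_add (by positivity) (by positivity), ENNReal.ofReal_toReal hmfin]
    _ ≤ ENNReal.ofReal (2 ^ k * m.toReal) := by
        apply ENNReal.ofReal_le_ofReal
        have h3 : dist (g θ) (g t) ≤ m.toReal := (ENNReal.ofReal_le_iff_le_toReal hmfin).1 hdm
        have h4 : (1:ℝ) ≤ 2 ^ k := one_le_pow₀ (by norm_num)
        nlinarith
    _ = 2 ^ k * m := by
        rw [ENNReal.ofReal_mul (by positivity), ENNReal.ofReal_toReal hmfin,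
          ENNReal.ofReal_pow (by norm_num)]
        norm_num

/-- A subarc through `z` and `w` carries a fixed share of the `ν`-mass near `z`. -/
lemma measure_ball_le_of_subarc (h : IsLoop Γ g T) (hq : IsQuasismooth Γ Λ)
    (hν : IsAInftyMeasure Γ ν lam) {J : Set ℂ} (hJ : IsSubarc Γ J) {z w : ℂ} (hz : z ∈ J)
    (hw : w ∈ J) {R : ℝ} (hR : 0 < R) (k : ℕ)
    (hk : 2 * Λ * R + dist z w ≤ 2 ^ k * dist z w) :
    ν (Γ ∩ ball z R) ≤ ENNReal.ofReal lam ^ (2 * k + 2) * ν J := by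
  obtain ⟨θ, -, rfl⟩ := h.exists_param 0 (hJ.1 hz)
  obtain ⟨t, ht, rfl⟩ := h.exists_param θ (hJ.1 hw)
  rcases h.arc_subset_or hJ.2.2 hJ.1 hz hw with h1 | h1
  · refine (h.measure_ball_le_of_right_arc hq hν ht.1 ht.2 k hk hR).trans ?_
    gcongr
  · have e1 : g (- -θ) = g θ := by rw [neg_neg]
    have e2 : g (-(T - t)) = g t := by rw [← h.per (-(T - t))]; congr 1; ring
    have := h.reflect.measure_ball_le_of_right_arc hq hν (θ := -θ) (t := T - t) (R := R)
      (by linarith [ht.2]) (by linarith [ht.1]) k (by simpa only [e1, e2] using hk) hR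
    simp only [image_reflect_Icc, neg_neg] at this
    refine this.trans ?_
    gcongr
    refine Subset.trans ?_ h1
    rintro _ ⟨x, hx, rfl⟩
    exact ⟨x + T, ⟨by linarith [hx.1], by linarith [hx.2]⟩, h.per x⟩

lemma measure_ball_two_mul_le (h : IsLoop Γ g T) (hq : IsQuasismooth Γ Λ)
    (hν : IsAInftyMeasure Γ ν lam) (k : ℕ) (hk : 16 * Λ ^ 2 + 1 ≤ 2 ^ k) {z : ℂ} (hz : z ∈ Γ)
    (r : ℝ) : ν (Γ ∩ ball z (2 * r)) ≤ ENNReal.ofReal lam ^ (2 * k + 2) * ν (Γ ∩ ball z r) := by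
  have hΛ := hq.1
  have hlam : 1 ≤ ENNReal.ofReal lam := by simpa using ENNReal.ofReal_le_ofReal hν.1
  rcases le_or_gt r 0 with hr | hr
  · rw [ball_eq_empty.2 (by linarith : 2 * r ≤ 0)]; simp
  set d := r / (4 * Λ) with hd
  have hd0 : 0 < d := by positivity
  have hdΛ : 4 * Λ * d = r := by rw [hd]; field_simp
  by_cases hex : ∃ w ∈ Γ, d ≤ dist z w
  · obtain ⟨w, hw, hzw⟩ := h.exists_dist_eq hz hd0.le hex
    have hne : z ≠ w := by rintro rfl; simp at hzw; linarith
    obtain ⟨J, hJ, hzJ, hwJ, hlen⟩ := exists_short_arc hq hz hw hne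
    refine (h.measure_ball_le_of_subarc hq hν hJ hzJ hwJ (by positivity) k ?_).trans ?_
    · rw [hzw, ← hdΛ]
      nlinarith
    · gcongr
      refine subset_inter hJ.1 fun x hx => ?_
      have := (ofReal_dist_le_length hJ.2.2 hx hzJ).trans hlen
      rw [ENNReal.ofReal_le_ofReal_iff (by positivity), hzw] at this
      rw [mem_ball]
      nlinarith
  · push Not at hex
    have : Γ ∩ ball z (2 * r) ⊆ Γ ∩ ball z r := fun x hx => ⟨hx.1, by
      have := hex x hx.1
      rw [mem_ball, dist_comm]
      nlinarith⟩
    calc _ ≤ 1 * ν (Γ ∩ ball z r) := by rw [one_mul]; exact measure_mono this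
      _ ≤ _ := by gcongr; exact one_le_pow₀ hlam

end IsLoop

lemma measurable_measure_ball {N : Measure ℂ} [SFinite N] {f : ℂ → ℝ} (hf : Measurable f) :
    Measurable fun y => N (ball y (f y)) := by
  have hS : MeasurableSet {q : ℂ × ℂ | dist q.2 q.1 < f q.1} :=
    measurableSet_lt (by fun_prop) (by fun_prop)
  exact measurable_measure_prodMk_left hS

lemma lintegral_measure_ball_mul {μ N : Measure ℂ} [SFinite μ] [SFinite N] {f : ℂ → ℝ}
    (hf : Measurable f) {g : ℂ → ℝ≥0∞} (hg : Measurable g) :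
    ∫⁻ y, N (ball y (f y)) * g y ∂μ =
      ∫⁻ t, ∫⁻ y in {y | dist t y < f y}, g y ∂μ ∂N := by
  have hS : MeasurableSet {q : ℂ × ℂ | dist q.2 q.1 < f q.1} :=
    measurableSet_lt (by fun_prop) (by fun_prop)
  have h1 : ∀ y, N (ball y (f y)) * g y =
      ∫⁻ t, {q : ℂ × ℂ | dist q.2 q.1 < f q.1}.indicator (fun q => g q.1) (y, t) ∂N := by
    intro y
    have : (fun t => {q : ℂ × ℂ | dist q.2 q.1 < f q.1}.indicator (fun q => g q.1) (y, t)) =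
        (ball y (f y)).indicator (fun _ => g y) := by
      ext t; simp [Set.indicator, mem_ball]
    rw [this, lintegral_indicator measurableSet_ball, setLIntegral_const, mul_comm]
  simp_rw [h1]
  rw [lintegral_lintegral_swap]
  · refine lintegral_congr fun t => ?_
    rw [← lintegral_indicator (measurableSet_lt (by fun_prop) hf)]
    refine lintegral_congr fun y => ?_
    simp [Set.indicator]
  · exact ((hg.comp measurable_fst).indicator hS).aemeasurable

/-- The mean density of `N` at scale `ρ y / 2` around `y`. -/
def meanDensity (N : Measure ℂ) (ρ : ℂ → ℝ) (y : ℂ) : ℝ≥0∞ :=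
  N (ball y (ρ y / 2)) * (ENNReal.ofReal (ρ y))⁻¹

/-- The mass of `ball z r` for the mean density, up to constants. -/
def meanVolume (N : Measure ℂ) (ρ : ℂ → ℝ) (z : ℂ) (r : ℝ) : ℝ≥0∞ :=
  ENNReal.ofReal (r / max r (ρ z)) * N (ball z (max r (ρ z)))

/-- A length-like measure `m` and a doubling measure `N` on `Γ`, with a Lipschitz scale `ρ`. -/
structure IsRegularPair (Γ : Set ℂ) (m N : Measure ℂ) (ρ : ℂ → ℝ) (a b : ℝ≥0) : Prop where
  finite_left : IsFiniteMeasure m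
  finite_right : IsFiniteMeasure N
  upper : ∀ x r, m (ball x r) ≤ a * ENNReal.ofReal r
  lower : ∀ z ∈ Γ, ∀ r, 2 * r ≤ diam Γ → ENNReal.ofReal r ≤ m (ball z r)
  doubling : ∀ z ∈ Γ, ∀ r, N (ball z (2 * r)) ≤ b * N (ball z r)
  one_le : 1 ≤ b
  lip : ∀ x y, ρ x ≤ ρ y + dist x y
  pos : ∀ z ∈ Γ, 0 < ρ z
  ae_left : ∀ᵐ y ∂m, y ∈ Γ
  ae_right : ∀ᵐ y ∂N, y ∈ Γ

namespace IsRegularPair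

variable {Γ : Set ℂ} {m N : Measure ℂ} {ρ : ℂ → ℝ} {a b : ℝ≥0}

lemma continuous (h : IsRegularPair Γ m N ρ a b) : Continuous ρ := by
  refine (LipschitzWith.of_dist_le_mul (K := 1) fun x y => ?_).continuous
  rw [Real.dist_eq, abs_le, NNReal.coe_one, one_mul]
  have h1 := h.lip x y
  have h2 := h.lip y x
  rw [dist_comm y x] at h2
  constructor <;> linarith

lemma measurable_meanDensity (h : IsRegularPair Γ m N ρ a b) : Measurable (meanDensity N ρ) := by
  have := h.finite_right
  have hρ := h.continuous.measurable
  exact (measurable_measure_ball (by fun_prop)).mul (by fun_prop)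

lemma measure_ball_le_pow (h : IsRegularPair Γ m N ρ a b) {z : ℂ} (hz : z ∈ Γ) {r R : ℝ} (j : ℕ)
    (hR : R ≤ 2 ^ j * r) : N (ball z R) ≤ b ^ j * N (ball z r) := by
  refine (measure_mono (ball_subset_ball hR)).trans ?_
  clear hR
  induction j with
  | zero => simp
  | succ j ih =>
    have : (2:ℝ) ^ (j + 1) * r = 2 * (2 ^ j * r) := by ring
    rw [this, pow_succ', mul_assoc]
    exact (h.doubling z hz _).trans (by gcongr)

lemma meanVolume_two_mul_le (h : IsRegularPair Γ m N ρ a b) {z : ℂ} (hz : z ∈ Γ) {r : ℝ}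
    (hr : 0 < r) : meanVolume N ρ z (2 * r) ≤ (2 * b : ℝ≥0) * meanVolume N ρ z r := by
  have hρ := h.pos z hz
  have h1 : max (2 * r) (ρ z) ≤ 2 * max r (ρ z) := by
    rw [mul_max_of_nonneg _ _ (by norm_num)]
    exact max_le_max le_rfl (by linarith)
  have h2 : 2 * r / max (2 * r) (ρ z) ≤ 2 * (r / max r (ρ z)) := by
    rw [mul_div_assoc]
    gcongr
    linarith
  have h3 := h.measure_ball_le_pow hz 1 (R := max (2 * r) (ρ z)) (r := max r (ρ z))
    (by simpa using h1)
  unfold meanVolume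
  calc _ ≤ ENNReal.ofReal (2 * (r / max r (ρ z))) * (b ^ 1 * N (ball z (max r (ρ z)))) := by
        gcongr
    _ = _ := by
        rw [ENNReal.ofReal_mul (by norm_num)]
        push_cast
        rw [pow_one, ENNReal.ofReal_ofNat]
        ring

lemma meanVolume_two_pow_mul_le (h : IsRegularPair Γ m N ρ a b) {z : ℂ} (hz : z ∈ Γ) {r : ℝ}
    (hr : 0 < r) (k : ℕ) :
    meanVolume N ρ z (2 ^ k * r) ≤ (2 * b : ℝ≥0) ^ k * meanVolume N ρ z r := by
  induction k with
  | zero => simp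
  | succ k ih =>
    have : (2:ℝ) ^ (k + 1) * r = 2 * (2 ^ k * r) := by ring
    rw [this, pow_succ', mul_assoc]
    exact (h.meanVolume_two_mul_le hz (by positivity)).trans (by gcongr)

lemma meanVolume_le_of_dist_le (h : IsRegularPair Γ m N ρ a b) {z t : ℂ} (hz : z ∈ Γ)
    (ht : t ∈ Γ) {r K : ℝ} (hr : 0 < r) (hK : 0 ≤ K) (hzt : dist t z ≤ K * r) (j : ℕ)
    (hj : 1 + 2 * K ≤ 2 ^ j) :
    meanVolume N ρ t r ≤ ENNReal.ofReal (1 + K) * b ^ j * meanVolume N ρ z r := by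
  have hρz := h.pos z hz
  have hρt := h.pos t ht
  have hz0 : r ≤ max r (ρ z) := le_max_left _ _
  have hz1 : ρ z ≤ max r (ρ z) := le_max_right _ _
  have ht0 : r ≤ max r (ρ t) := le_max_left _ _
  have ht1 : ρ t ≤ max r (ρ t) := le_max_right _ _
  have h1 : max r (ρ t) ≤ (1 + K) * max r (ρ z) := by
    have := h.lip t z
    refine max_le (by nlinarith) (by nlinarith)
  have h1' : max r (ρ z) ≤ (1 + K) * max r (ρ t) := by
    have := h.lip z t
    rw [dist_comm] at this
    refine max_le (by nlinarith) (by nlinarith)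
  have h2 : r / max r (ρ t) ≤ (1 + K) * (r / max r (ρ z)) := by
    have hp : 0 < max r (ρ z) := hr.trans_le hz0
    have hp' : 0 < max r (ρ t) := hr.trans_le ht0
    rw [← mul_div_assoc, div_le_div_iff₀ hp' hp]
    nlinarith
  have h3 : N (ball t (max r (ρ t))) ≤ b ^ j * N (ball z (max r (ρ z))) := by
    refine le_trans (measure_mono (ball_subset_ball' ?_))
      (h.measure_ball_le_pow hz (R := (1 + 2 * K) * max r (ρ z)) j ?_)
    · nlinarith
    · gcongr
  unfold meanVolume
  calc _ ≤ ENNReal.ofReal ((1 + K) * (r / max r (ρ z))) * (b ^ j * N (ball z (max r (ρ z)))) := by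
        gcongr
    _ = _ := by
        rw [ENNReal.ofReal_mul (by positivity)]
        ring

lemma setLIntegral_meanDensity_le (h : IsRegularPair Γ m N ρ a b) {z : ℂ} (hz : z ∈ Γ) {r : ℝ}
    (hr : 0 < r) :
    ∫⁻ y in ball z r, meanDensity N ρ y ∂m ≤ (6 * a * b ^ 2 : ℝ≥0) * meanVolume N ρ z r := by
  have := h.finite_left
  have := h.finite_right
  have hρ := h.pos z hz
  have hρm := h.continuous.measurable
  rcases le_or_gt r (ρ z / 4) with hr4 | hr4
  · have hmax : max r (ρ z) = ρ z := max_eq_right (by linarith)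
    have hb : ∀ y ∈ ball z r, meanDensity N ρ y ≤
        N (ball z (ρ z)) * (ENNReal.ofReal (3 / 4 * ρ z))⁻¹ := by
      intro y hy
      have hy' : dist y z < r := hy
      have h1 := h.lip y z
      have h2 := h.lip z y
      rw [dist_comm] at h2
      unfold meanDensity
      gcongr
      · exact ball_subset_ball' (by linarith)
      · linarith
    calc _ ≤ ∫⁻ y in ball z r, N (ball z (ρ z)) * (ENNReal.ofReal (3 / 4 * ρ z))⁻¹ ∂m :=
          setLIntegral_mono measurable_const hb
      _ = N (ball z (ρ z)) * (ENNReal.ofReal (3 / 4 * ρ z))⁻¹ * m (ball z r) := by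
          rw [setLIntegral_const]
      _ ≤ N (ball z (ρ z)) * (ENNReal.ofReal (3 / 4 * ρ z))⁻¹ * (a * ENNReal.ofReal r) := by
          gcongr; exact h.upper _ _
      _ = a * (ENNReal.ofReal (4 / 3) * (ENNReal.ofReal (r / ρ z) * N (ball z (ρ z)))) := by
          rw [← ENNReal.ofReal_inv_of_pos (by positivity), ← mul_assoc (ENNReal.ofReal (4 / 3)),
            ← ENNReal.ofReal_mul (by norm_num)]
          have : (4 / 3 * (r / ρ z)) = (3 / 4 * ρ z)⁻¹ * r := by
            field_simp
          rw [this, ENNReal.ofReal_mul (by positivity)]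
          ring
      _ ≤ a * (6 * b ^ 2 * (ENNReal.ofReal (r / ρ z) * N (ball z (ρ z)))) := by
          gcongr
          calc ENNReal.ofReal (4 / 3) ≤ ENNReal.ofReal 6 := ENNReal.ofReal_le_ofReal (by norm_num)
            _ = 6 * 1 := by rw [mul_one, ENNReal.ofReal_ofNat]
            _ ≤ 6 * b ^ 2 := by
              gcongr
              exact_mod_cast one_le_pow₀ h.one_le
      _ = _ := by
          unfold meanVolume
          rw [hmax]
          push_cast
          ring
  · have h0 : ∫⁻ y in ball z r, meanDensity N ρ y ∂m ≤
        ∫⁻ t, (ball z (4 * r)).indicator (fun _ => ((3 / 2 * a : ℝ≥0) : ℝ≥0∞)) t ∂N := by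
      unfold meanDensity
      rw [lintegral_measure_ball_mul (by fun_prop) (by fun_prop)]
      refine lintegral_mono_ae ?_
      filter_upwards [h.ae_right] with t ht
      have hρt := h.pos t ht
      rw [Measure.restrict_restrict (measurableSet_lt (by fun_prop) (by fun_prop))]
      by_cases htz : t ∈ ball z (4 * r)
      · rw [indicator_of_mem htz]
        have hsub : {y | dist t y < ρ y / 2} ∩ ball z r ⊆ ball t (ρ t) := by
          rintro y ⟨hy, -⟩
          have hy' : dist t y < ρ y / 2 := hy
          have := h.lip y t
          rw [dist_comm] at this
          rw [mem_ball, dist_comm]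
          linarith
        calc _ ≤ ∫⁻ y in {y | dist t y < ρ y / 2} ∩ ball z r,
              (ENNReal.ofReal (2 / 3 * ρ t))⁻¹ ∂m := by
              refine setLIntegral_mono measurable_const ?_
              rintro y ⟨hy, -⟩
              have hy' : dist t y < ρ y / 2 := hy
              have := h.lip t y
              gcongr
              linarith
          _ ≤ (ENNReal.ofReal (2 / 3 * ρ t))⁻¹ * (a * ENNReal.ofReal (ρ t)) := by
              rw [setLIntegral_const]
              gcongr
              exact (measure_mono hsub).trans (h.upper _ _)
          _ = a * (ENNReal.ofReal ((2 / 3 * ρ t)⁻¹) * ENNReal.ofReal (ρ t)) := by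
              rw [ENNReal.ofReal_inv_of_pos (by positivity)]
              ring
          _ = ((3 / 2 * a : ℝ≥0) : ℝ≥0∞) := by
              rw [← ENNReal.ofReal_mul (by positivity)]
              have : (2 / 3 * ρ t)⁻¹ * ρ t = ((3 / 2 : ℝ≥0) : ℝ) := by
                push_cast
                field_simp
              rw [this, ENNReal.ofReal_coe_nnreal]
              push_cast
              ring
      · have : {y | dist t y < ρ y / 2} ∩ ball z r = ∅ := by
          ext y
          simp only [mem_inter_iff, mem_ofPred_eq, mem_ball, mem_empty_iff_false, iff_false,
            not_and]
          intro h1 h2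
          apply htz
          have h3 := h.lip y z
          have h4 := dist_triangle t y z
          rw [mem_ball]
          linarith
        rw [this]
        simp
    have h1 : N (ball z (4 * r)) ≤ b ^ 2 * N (ball z (max r (ρ z))) :=
      h.measure_ball_le_pow hz 2 (by
        have := le_max_left r (ρ z)
        linarith)
    have h2 : (1:ℝ≥0∞) ≤ 4 * ENNReal.ofReal (r / max r (ρ z)) := by
      rw [← ENNReal.ofReal_ofNat, ← ENNReal.ofReal_mul (by norm_num), ← ENNReal.ofReal_one]
      apply ENNReal.ofReal_le_ofReal
      rw [← mul_div_assoc, one_le_div (lt_max_of_lt_left hr)]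
      exact max_le (by linarith) (by linarith)
    rw [lintegral_indicator measurableSet_ball, setLIntegral_const] at h0
    refine h0.trans ?_
    calc _ ≤ ((3 / 2 * a : ℝ≥0) : ℝ≥0∞) * (1 * (b ^ 2 * N (ball z (max r (ρ z))))) := by
          rw [one_mul]; gcongr
      _ ≤ ((3 / 2 * a : ℝ≥0) : ℝ≥0∞) *
          (4 * ENNReal.ofReal (r / max r (ρ z)) * (b ^ 2 * N (ball z (max r (ρ z))))) := by
          gcongr
      _ = _ := by
          unfold meanVolume
          have : (6 * a * b ^ 2 : ℝ≥0) = (3 / 2 * a) * 4 * b ^ 2 := by ring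
          rw [this]
          simp only [ENNReal.coe_mul, ENNReal.coe_pow, ENNReal.coe_ofNat]
          ring

lemma meanVolume_le_of_le_scale (h : IsRegularPair Γ m N ρ a b) {z : ℂ} (hz : z ∈ Γ) {s : ℝ}
    (hs : 0 < s) (hsρ : s ≤ ρ z) {S : Set ℂ} (hS : ∀ y ∈ S, 8 * dist y z ≤ ρ z)
    (hSs : ENNReal.ofReal s ≤ m S) :
    meanVolume N ρ z s ≤ (2 * b ^ 2 : ℝ≥0) * ∫⁻ y in S, meanDensity N ρ y ∂m := by
  have hρ := h.pos z hz
  have h1 : ∀ y ∈ S, N (ball z (ρ z / 4)) * (ENNReal.ofReal (2 * ρ z))⁻¹ ≤ meanDensity N ρ y := by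
    intro y hy
    have h1 := hS y hy
    have h2 := h.lip y z
    have h3 := h.lip z y
    rw [dist_comm] at h3
    unfold meanDensity
    gcongr
    · apply ball_subset_ball'
      rw [dist_comm]
      linarith
    · linarith
  have h2 : N (ball z (ρ z / 4)) * (ENNReal.ofReal (2 * ρ z))⁻¹ * ENNReal.ofReal s ≤
      ∫⁻ y in S, meanDensity N ρ y ∂m := by
    calc _ ≤ N (ball z (ρ z / 4)) * (ENNReal.ofReal (2 * ρ z))⁻¹ * m S := by gcongr
      _ = ∫⁻ _ in S, N (ball z (ρ z / 4)) * (ENNReal.ofReal (2 * ρ z))⁻¹ ∂m := by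
          rw [setLIntegral_const]
      _ ≤ _ := setLIntegral_mono h.measurable_meanDensity h1
  have h3 := h.measure_ball_le_pow hz 2 (R := ρ z) (r := ρ z / 4) (by linarith)
  unfold meanVolume
  rw [max_eq_right hsρ]
  calc _ ≤ ENNReal.ofReal (s / ρ z) * (b ^ 2 * N (ball z (ρ z / 4))) := by gcongr
    _ = (2 * b ^ 2 : ℝ≥0) *
        (N (ball z (ρ z / 4)) * (ENNReal.ofReal (2 * ρ z))⁻¹ * ENNReal.ofReal s) := by
      have : s / ρ z = 2 * ((2 * ρ z)⁻¹ * s) := by field_simp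
      rw [this, ENNReal.ofReal_mul (by norm_num), ENNReal.ofReal_mul (by positivity),
        ENNReal.ofReal_inv_of_pos (by positivity), ENNReal.ofReal_ofNat]
      push_cast
      ring
    _ ≤ _ := by gcongr

/-- A set whose density at scale `ρ` is small has small length. -/
lemma measure_le_of_small_density (h : IsRegularPair Γ m N ρ a b) {z : ℂ} {s C K τ : ℝ}
    (hs : 0 < s) (hK : 0 ≤ K) (hsd : 4 * s ≤ diam Γ) {X : Set ℂ}
    (hX : MeasurableSet X) (hXJ : ∀ t ∈ X, t ∈ Γ ∧ dist t z ≤ C * s ∧ ρ t ≤ K * s)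
    (hXτ : ∀ t ∈ X, m.restrict X (ball t (ρ t / 4)) ≤ ENNReal.ofReal (τ * ρ t))
    (hτ : 0 ≤ τ) :
    ENNReal.ofReal (1 / (40 + 2 * K)) * m X ≤ ENNReal.ofReal (2 * τ * (a * ((C + K) * s))) := by
  have := h.finite_left
  have hρm := h.continuous.measurable
  have hup : ∀ y ∈ Γ, m.restrict X (ball y (ρ y / 16)) * (ENNReal.ofReal (ρ y))⁻¹ ≤
      ENNReal.ofReal (2 * τ) := by
    intro y hy
    have hρy := h.pos y hy
    rcases (X ∩ ball y (ρ y / 16)).eq_empty_or_nonempty with he | ⟨t, htX, hty⟩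
    · rw [Measure.restrict_apply measurableSet_ball, inter_comm, he]
      simp
    · have hty' : dist t y < ρ y / 16 := hty
      have h1 := h.lip y t
      have h2 := h.lip t y
      rw [dist_comm] at h1
      calc _ ≤ ENNReal.ofReal (τ * (2 * ρ y)) * (ENNReal.ofReal (ρ y))⁻¹ := by
            gcongr
            refine (measure_mono (ball_subset_ball' ?_)).trans ((hXτ t htX).trans ?_)
            · rw [dist_comm]
              linarith
            · gcongr
              linarith
        _ = ENNReal.ofReal (2 * τ) := by
            rw [← ENNReal.ofReal_inv_of_pos hρy, ← ENNReal.ofReal_mul (by positivity)]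
            congr 1
            field_simp
  have hI1 : ∫⁻ y in ball z ((C + K) * s),
      m.restrict X (ball y (ρ y / 16)) * (ENNReal.ofReal (ρ y))⁻¹ ∂m ≤
      ENNReal.ofReal (2 * τ) * (a * ENNReal.ofReal ((C + K) * s)) := by
    calc _ ≤ ∫⁻ _ in ball z ((C + K) * s), ENNReal.ofReal (2 * τ) ∂m := by
          refine lintegral_mono_ae ?_
          filter_upwards [ae_restrict_of_ae h.ae_left] with y hy using hup y hy
      _ ≤ _ := by
          rw [setLIntegral_const]
          gcongr
          exact h.upper _ _
  have hI2 : ENNReal.ofReal (1 / (40 + 2 * K)) * m X ≤ ∫⁻ y in ball z ((C + K) * s),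
      m.restrict X (ball y (ρ y / 16)) * (ENNReal.ofReal (ρ y))⁻¹ ∂m := by
    rw [lintegral_measure_ball_mul (by fun_prop) (by fun_prop), ← setLIntegral_const]
    refine setLIntegral_mono' hX fun t ht => ?_
    obtain ⟨htΓ, htz, htK⟩ := hXJ t ht
    have hρt := h.pos t htΓ
    rw [Measure.restrict_restrict (measurableSet_lt (by fun_prop) (by fun_prop))]
    have hκ : 1 / (20 + K) * ρ t ≤ ρ t / 20 := by
      rw [one_div, inv_mul_eq_div]
      gcongr
      linarith
    have hκ2 : 1 / (20 + K) * ρ t ≤ s := by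
      rw [one_div, inv_mul_eq_div, div_le_iff₀ (by positivity)]
      nlinarith
    have hsub : ball t (1 / (20 + K) * ρ t) ⊆
        {y | dist t y < ρ y / 16} ∩ ball z ((C + K) * s) := by
      intro y hy
      have hy' : dist y t < 1 / (20 + K) * ρ t := hy
      have h1 := h.lip t y
      have h2 := dist_triangle y t z
      rw [dist_comm] at h1
      have hd : 0 ≤ dist y t := dist_nonneg
      refine ⟨?_, ?_⟩
      · change dist t y < ρ y / 16
        rw [dist_comm]
        linarith
      · rw [mem_ball]
        nlinarith
    calc ENNReal.ofReal (1 / (40 + 2 * K)) =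
        (ENNReal.ofReal (2 * ρ t))⁻¹ * ENNReal.ofReal (1 / (20 + K) * ρ t) := by
          rw [← ENNReal.ofReal_inv_of_pos (by positivity), ← ENNReal.ofReal_mul (by positivity)]
          congr 1
          field_simp
          ring
      _ ≤ (ENNReal.ofReal (2 * ρ t))⁻¹ * m (ball t (1 / (20 + K) * ρ t)) := by
          gcongr
          exact h.lower t htΓ _ (by linarith)
      _ = ∫⁻ _ in ball t (1 / (20 + K) * ρ t), (ENNReal.ofReal (2 * ρ t))⁻¹ ∂m := by
          rw [setLIntegral_const]
      _ ≤ ∫⁻ y in ball t (1 / (20 + K) * ρ t), (ENNReal.ofReal (ρ y))⁻¹ ∂m := by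
          refine setLIntegral_mono (by fun_prop) fun y hy => ?_
          have hy' : dist y t < 1 / (20 + K) * ρ t := hy
          have h1 := h.lip y t
          gcongr
          linarith
      _ ≤ _ := lintegral_mono_set hsub
  refine (hI2.trans hI1).trans (le_of_eq ?_)
  rw [ENNReal.ofReal_mul (p := 2 * τ) (by positivity), ENNReal.ofReal_mul (p := (a:ℝ)) a.2,
    ENNReal.ofReal_coe_nnreal]

/-- Most of `S` sees a fixed share of the length at scale `ρ`. -/
lemma exists_dense_subset (h : IsRegularPair Γ m N ρ a b) {z : ℂ} {s C K : ℝ}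
    (hs : 0 < s) (hK : 0 ≤ K) (hC : 0 < C) (ha : 0 < a) (hsd : 4 * s ≤ diam Γ) {J S : Set ℂ}
    (hS : MeasurableSet S) (hSJ : S ⊆ J)
    (hJ : ∀ t ∈ J, t ∈ Γ ∧ dist t z ≤ C * s ∧ ρ t ≤ K * s)
    (hJs : ENNReal.ofReal (4 * s) ≤ m J) (hJS : m (J \ S) ≤ ENNReal.ofReal (9 / 8 * s)) :
    ∃ U ⊆ S, MeasurableSet U ∧ m J ≤ 2 * m U ∧
      ENNReal.ofReal (1 / (40 * (20 + K) * a * (C + K))) * N U ≤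
        ∫⁻ y in S, meanDensity N ρ y ∂m := by
  have := h.finite_left
  have := h.finite_right
  have hρm := h.continuous.measurable
  have ha' : (0:ℝ) < a := ha
  set τ : ℝ := 1 / (32 * (20 + K) * a * (C + K)) with hτdef
  have hτ : 0 < τ := by positivity
  have hM : Measurable fun t => m.restrict S (ball t (ρ t / 4)) :=
    measurable_measure_ball (by fun_prop)
  set D : Set ℂ := {t | ENNReal.ofReal (τ * ρ t) ≤ m.restrict S (ball t (ρ t / 4))} with hD
  have hDm : MeasurableSet D := measurableSet_le (by fun_prop) hM
  refine ⟨S ∩ D, inter_subset_left, hS.inter hDm, ?_, ?_⟩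
  · have hX := h.measure_le_of_small_density (z := z) (s := s) (C := C) (K := K) (τ := τ)
      (X := S \ D) hs hK hsd (hS.diff hDm) (fun t ht => hJ t (hSJ ht.1)) (fun t ht => ?_) hτ.le
    · have hX' : m (S \ D) ≤ ENNReal.ofReal (s / 8) := by
        have e : 2 * τ * (a * ((C + K) * s)) ≤ 1 / (40 + 2 * K) * (s / 8) := by
          rw [hτdef]
          apply le_of_eq
          have : C + K ≠ 0 := by positivity
          field_simp
          ring
        have h2 := hX.trans (ENNReal.ofReal_le_ofReal e)
        rw [ENNReal.ofReal_mul (by positivity)] at h2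
        refine (ENNReal.mul_le_mul_iff_right ?_ ENNReal.ofReal_ne_top).1 h2
        rw [Ne, ENNReal.ofReal_eq_zero, not_le]
        positivity
      have hsub : J ⊆ (S ∩ D) ∪ ((S \ D) ∪ (J \ S)) := by
        intro t ht
        by_cases h1 : t ∈ S <;> by_cases h2 : t ∈ D <;> simp [h1, h2, ht]
      have hle : m J ≤ m (S ∩ D) + ENNReal.ofReal (5 / 4 * s) := by
        refine (measure_mono hsub).trans ((measure_union_le _ _).trans ?_)
        have e : 5 / 4 * s = s / 8 + 9 / 8 * s := by ring
        rw [e, ENNReal.ofReal_add (by positivity) (by positivity)]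
        gcongr
        exact (measure_union_le _ _).trans (by gcongr)
      have f1 := measure_ne_top m J
      have f2 := measure_ne_top m (S ∩ D)
      rw [← ENNReal.ofReal_toReal f2, ← ENNReal.ofReal_toReal f1] at hle
      rw [← ENNReal.ofReal_add (by positivity) (by positivity),
        ENNReal.ofReal_le_ofReal_iff (by positivity)] at hle
      rw [← ENNReal.ofReal_toReal f1, ENNReal.ofReal_le_ofReal_iff (by positivity)] at hJs
      rw [← ENNReal.ofReal_toReal f2, ← ENNReal.ofReal_toReal f1, ← ENNReal.ofReal_ofNat,
        ← ENNReal.ofReal_mul (by norm_num)]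
      apply ENNReal.ofReal_le_ofReal
      linarith
    · have h1 : ¬ ENNReal.ofReal (τ * ρ t) ≤ m.restrict S (ball t (ρ t / 4)) := ht.2
      refine le_trans ?_ (not_le.1 h1).le
      exact Measure.restrict_mono_set _ sdiff_subset _
  · unfold meanDensity
    rw [lintegral_measure_ball_mul (by fun_prop) (by fun_prop), ← setLIntegral_const]
    refine le_trans (setLIntegral_mono' (hS.inter hDm) (g := fun t =>
      ∫⁻ y in {y | dist t y < ρ y / 2}, (ENNReal.ofReal (ρ y))⁻¹ ∂(m.restrict S)) ?_)
      (setLIntegral_le_lintegral _ _)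
    rintro t ⟨htS, htD⟩
    have htΓ := (hJ t (hSJ htS)).1
    have hρt := h.pos t htΓ
    calc ENNReal.ofReal (1 / (40 * (20 + K) * a * (C + K))) =
        (ENNReal.ofReal (5 / 4 * ρ t))⁻¹ * ENNReal.ofReal (τ * ρ t) := by
          rw [← ENNReal.ofReal_inv_of_pos (by positivity), ← ENNReal.ofReal_mul (by positivity)]
          congr 1
          rw [hτdef]
          field_simp
          norm_num
      _ ≤ (ENNReal.ofReal (5 / 4 * ρ t))⁻¹ * m.restrict S (ball t (ρ t / 4)) := by
          gcongr
          exact htD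
      _ = ∫⁻ _ in ball t (ρ t / 4), (ENNReal.ofReal (5 / 4 * ρ t))⁻¹ ∂(m.restrict S) := by
          rw [setLIntegral_const]
      _ ≤ ∫⁻ y in ball t (ρ t / 4), (ENNReal.ofReal (ρ y))⁻¹ ∂(m.restrict S) := by
          refine setLIntegral_mono (by fun_prop) fun y hy => ?_
          have hy' : dist y t < ρ t / 4 := hy
          have h1 := h.lip y t
          gcongr
          linarith
      _ ≤ _ := by
          refine lintegral_mono_set fun y hy => ?_
          have hy' : dist y t < ρ t / 4 := hy
          have h1 := h.lip t y
          change dist t y < ρ y / 2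
          rw [dist_comm] at h1 ⊢
          linarith

end IsRegularPair

/-- The kernel `(s / (s + |x - y|)) ^ M`. -/
def decay (M : ℕ) (s : ℝ) (x y : ℂ) : ℝ := (s / (s + dist x y)) ^ M

section decay

variable {M : ℕ} {s : ℝ}

lemma decay_pos (hs : 0 < s) (x y : ℂ) : 0 < decay M s x y := by
  have : 0 ≤ dist x y := dist_nonneg
  unfold decay; positivity

lemma decay_self (hs : 0 < s) (x : ℂ) : decay M s x x = 1 := by
  simp [decay, hs.ne']

lemma decay_le_one (hs : 0 < s) (x y : ℂ) : decay M s x y ≤ 1 := by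
  have h : 0 ≤ dist x y := dist_nonneg
  refine pow_le_one₀ (by positivity) ?_
  rw [div_le_one (by positivity)]
  linarith

lemma decay_comm (x y : ℂ) : decay M s x y = decay M s y x := by
  simp [decay, dist_comm]

lemma decay_mul_le (hs : 0 < s) (x y z : ℂ) :
    decay M s x y * decay M s y z ≤ decay M s x z := by
  have h1 : 0 ≤ dist x y := dist_nonneg
  have h2 : 0 ≤ dist y z := dist_nonneg
  have h3 : 0 ≤ dist x z := dist_nonneg
  have h4 := dist_triangle x y z
  unfold decay
  rw [← mul_pow]
  refine pow_le_pow_left₀ (by positivity) ?_ M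
  rw [div_mul_div_comm, div_le_div_iff₀ (by positivity) (by positivity)]
  have h5 : s + dist x z ≤ s + dist x y + dist y z := by linarith
  nlinarith [mul_nonneg h1 h2, mul_nonneg hs.le (mul_nonneg h1 h2), mul_pos hs hs]

lemma le_decay_of_dist_le (hs : 0 < s) {K : ℝ} (hK : 0 ≤ K) {x y : ℂ} (h : dist x y ≤ K * s) :
    ((1 + K)⁻¹) ^ M ≤ decay M s x y := by
  have h1 : 0 ≤ dist x y := dist_nonneg
  refine pow_le_pow_left₀ (by positivity) ?_ M
  rw [inv_eq_one_div, div_le_div_iff₀ (by positivity) (by positivity)]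
  nlinarith

lemma continuous_decay_left (hs : 0 < s) (y : ℂ) : Continuous fun x => decay M s x y := by
  unfold decay
  refine (continuous_const.div (by fun_prop) fun x => ?_).pow M
  have h : 0 ≤ dist x y := dist_nonneg
  positivity

lemma decay_le_tsum (hs : 0 < s) (x y : ℂ) :
    ENNReal.ofReal (decay M s x y) ≤
      ∑' k : ℕ, ENNReal.ofReal (2 ^ M * ((2 ^ M)⁻¹) ^ k) *
        (ball y (2 ^ k * s)).indicator 1 x := by
  have hd : 0 ≤ dist x y := dist_nonneg
  have hex : ∃ k : ℕ, dist x y < 2 ^ k * s := by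
    obtain ⟨k, hk⟩ := pow_unbounded_of_one_lt (dist x y / s) (one_lt_two)
    exact ⟨k, by rwa [div_lt_iff₀ hs] at hk⟩
  classical
  set k := Nat.find hex with hkdef
  have hk : dist x y < 2 ^ k * s := Nat.find_spec hex
  refine le_trans ?_ (ENNReal.le_tsum k)
  rw [indicator_of_mem (by exact hk)]
  simp only [Pi.one_apply, mul_one]
  apply ENNReal.ofReal_le_ofReal
  rcases Nat.eq_zero_or_pos k with h0 | h0
  · rw [h0, pow_zero, mul_one]
    exact (decay_le_one hs x y).trans (one_le_pow₀ (by norm_num))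
  · obtain ⟨j, hj⟩ := Nat.exists_eq_succ_of_ne_zero h0.ne'
    have h1 : 2 ^ j * s ≤ dist x y := by
      have := Nat.find_min hex (m := j) (by omega)
      exact not_lt.1 this
    have e : (2:ℝ) ^ M * ((2 ^ M)⁻¹) ^ k = ((2 ^ j)⁻¹) ^ M := by
      rw [hj, Nat.succ_eq_add_one, pow_succ, mul_comm, mul_assoc, inv_mul_cancel₀ (by positivity),
        mul_one, inv_pow, inv_pow, ← pow_mul, ← pow_mul, mul_comm]
    rw [e]
    refine pow_le_pow_left₀ (by positivity) ?_ M
    rw [inv_eq_one_div, div_le_div_iff₀ (by positivity) (by positivity)]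
    linarith

end decay

namespace IsRegularPair

variable {Γ : Set ℂ} {m N : Measure ℂ} {ρ : ℂ → ℝ} {a b : ℝ≥0}

lemma lintegral_decay_mul_meanDensity_le (h : IsRegularPair Γ m N ρ a b) {M : ℕ}
    (hM : 4 * b ≤ 2 ^ M) {s : ℝ} (hs : 0 < s) {t : ℂ} (ht : t ∈ Γ) :
    ∫⁻ x, ENNReal.ofReal (decay M s x t) * meanDensity N ρ x ∂m ≤
      (12 * a * b ^ 2 * 2 ^ M : ℝ≥0) * meanVolume N ρ t s := by
  have hw := h.measurable_meanDensity
  have hc : ∀ k : ℕ, ENNReal.ofReal (2 ^ M * ((2 ^ M)⁻¹) ^ k) =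
      ((2 ^ M * ((2 ^ M)⁻¹) ^ k : ℝ≥0) : ℝ≥0∞) := fun k => by
    rw [← ENNReal.ofReal_coe_nnreal]
    push_cast
    rfl
  calc _ ≤ ∫⁻ x, ∑' k : ℕ, ENNReal.ofReal (2 ^ M * ((2 ^ M)⁻¹) ^ k) *
        (ball t (2 ^ k * s)).indicator (meanDensity N ρ) x ∂m := by
        refine lintegral_mono fun x => ?_
        refine (mul_le_mul_left (decay_le_tsum hs x t) _).trans (le_of_eq ?_)
        rw [← ENNReal.tsum_mul_right]
        refine tsum_congr fun k => ?_
        rw [mul_assoc]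
        congr 1
        by_cases hx : x ∈ ball t (2 ^ k * s) <;> simp [Set.indicator]
    _ = ∑' k : ℕ, ENNReal.ofReal (2 ^ M * ((2 ^ M)⁻¹) ^ k) *
        ∫⁻ x in ball t (2 ^ k * s), meanDensity N ρ x ∂m := by
        rw [lintegral_tsum fun k =>
          ((hw.indicator measurableSet_ball).const_mul _).aemeasurable]
        refine tsum_congr fun k => ?_
        rw [lintegral_const_mul _ (hw.indicator measurableSet_ball),
          lintegral_indicator measurableSet_ball]
    _ ≤ ∑' k : ℕ, ((6 * a * b ^ 2 * 2 ^ M : ℝ≥0) * meanVolume N ρ t s) * (2⁻¹) ^ k := by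
        refine ENNReal.tsum_le_tsum fun k => ?_
        have h1 := h.setLIntegral_meanDensity_le ht (r := 2 ^ k * s) (by positivity)
        have h2 := h.meanVolume_two_pow_mul_le ht hs k
        have h3 : ((2 ^ M)⁻¹) ^ k * (2 * b) ^ k ≤ (2⁻¹ : ℝ≥0) ^ k := by
          rw [← mul_pow]
          refine pow_le_pow_left₀ (by positivity) ?_ k
          rw [inv_mul_le_iff₀ (by positivity)]
          refine le_trans ?_ (mul_le_mul_left hM _)
          apply le_of_eq
          ring_nf
        have h4 : (2⁻¹ : ℝ≥0∞) = ((2⁻¹ : ℝ≥0) : ℝ≥0∞) := by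
          rw [ENNReal.coe_inv two_ne_zero]; rfl
        calc _ ≤ ENNReal.ofReal (2 ^ M * ((2 ^ M)⁻¹) ^ k) * ((6 * a * b ^ 2 : ℝ≥0) *
              ((2 * b : ℝ≥0) ^ k * meanVolume N ρ t s)) := by
              gcongr
              exact h1.trans (by gcongr)
          _ = ((6 * a * b ^ 2 * 2 ^ M * (((2 ^ M)⁻¹) ^ k * (2 * b) ^ k) : ℝ≥0) : ℝ≥0∞) *
              meanVolume N ρ t s := by
              rw [hc k, ← mul_assoc, ← mul_assoc, ← ENNReal.coe_pow, ← ENNReal.coe_mul,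
                ← ENNReal.coe_mul]
              congr 2
              ring
          _ ≤ ((6 * a * b ^ 2 * 2 ^ M * (2⁻¹) ^ k : ℝ≥0) : ℝ≥0∞) * meanVolume N ρ t s := by
              gcongr
          _ = _ := by
              rw [h4]
              push_cast
              ring
    _ = _ := by
        rw [ENNReal.tsum_mul_left, ENNReal.tsum_geometric]
        have : (1 - 2⁻¹ : ℝ≥0∞)⁻¹ = 2 := by
          rw [ENNReal.one_sub_inv_two, inv_inv]
        rw [this]
        push_cast
        ring

end IsRegularPair

namespace IsLoop

variable {Γ : Set ℂ} {g : ℝ → ℂ} {T Λ lam : ℝ} {ν : Measure ℂ}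

lemma isRegularPair [IsFiniteMeasure ν] (h : IsLoop Γ g T) (hq : IsQuasismooth Γ Λ)
    (hν : IsAInftyMeasure Γ ν lam) {k : ℕ} (hk : 16 * Λ ^ 2 + 1 ≤ 2 ^ k) {ρ : ℂ → ℝ}
    (hlip : ∀ x y, ρ x ≤ ρ y + dist x y) (hpos : ∀ z ∈ Γ, 0 < ρ z) :
    IsRegularPair Γ (μH[1].restrict Γ) (ν.restrict Γ) ρ (4 * Λ).toNNReal
      (lam.toNNReal ^ (2 * k + 2)) where
  finite_left := ⟨by simpa using h.length_lt_top hq⟩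
  finite_right := inferInstance
  upper x r := by
    have hΛ := hq.1
    rw [Measure.restrict_apply measurableSet_ball, inter_comm]
    refine (h.measure_ball_le hq x r).trans (le_of_eq ?_)
    rw [ENNReal.ofReal_mul (by positivity)]
    rfl
  lower z hz r hr := by
    rw [Measure.restrict_apply measurableSet_ball, inter_comm]
    exact h.le_measure_ball hz hr
  doubling z hz r := by
    rw [Measure.restrict_apply measurableSet_ball, inter_comm,
      Measure.restrict_apply measurableSet_ball, inter_comm (ball z r)]
    have := h.measure_ball_two_mul_le hq hν k hk hz r
    rw [ENNReal.coe_pow]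
    exact this
  one_le := one_le_pow₀ (Real.one_le_toNNReal.2 hν.1)
  lip := hlip
  pos := hpos
  ae_left := ae_restrict_mem h.isCompact.measurableSet
  ae_right := ae_restrict_mem h.isCompact.measurableSet

lemma exists_arc_at_scale (h : IsLoop Γ g T) (hq : IsQuasismooth Γ Λ) {z : ℂ} (hz : z ∈ Γ)
    {s : ℝ} (hs : 0 < s) (hsd : 4 * s < diam Γ) :
    ∃ J w, IsSubarc Γ J ∧ z ∈ J ∧ w ∈ J ∧ 2 * s ≤ dist z w ∧
      (∀ t ∈ J, dist t z ≤ 8 * Λ * s) ∧ ENNReal.ofReal (4 * s) ≤ μH[1] J := by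
  have hΛ := hq.1
  by_cases hex : ∃ w ∈ Γ, 4 * s ≤ dist z w
  · obtain ⟨w, hw, hzw⟩ := h.exists_dist_eq hz (by positivity) hex
    have hne : z ≠ w := dist_pos.1 (by linarith)
    obtain ⟨J, hJ, hzJ, hwJ, hJl⟩ := exists_short_arc hq hz hw hne
    refine ⟨J, w, hJ, hzJ, hwJ, by linarith, fun t ht => ?_, ?_⟩
    · have := (ofReal_dist_le_length hJ.2.2 ht hzJ).trans hJl
      rw [ENNReal.ofReal_le_ofReal_iff (by positivity)] at this
      rw [hzw] at this
      linarith
    · rw [← hzw]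
      exact ofReal_dist_le_length hJ.2.2 hzJ hwJ
  · push Not at hex
    obtain ⟨w, hw, hzw⟩ := h.exists_le_dist hz (r := 2 * s) (by linarith)
    refine ⟨Γ, w, h.isSubarc_self, hz, hw, hzw, fun t ht => ?_, ?_⟩
    · have := hex t ht
      rw [dist_comm]
      nlinarith
    · have hfin := (h.length_lt_top hq).ne
      rw [ENNReal.ofReal_le_iff_le_toReal hfin]
      refine hsd.le.trans (diam_le_of_forall_dist_le ENNReal.toReal_nonneg fun x hx y hy => ?_)
      exact (ENNReal.ofReal_le_iff_le_toReal hfin).1 (ofReal_dist_le_length h.isPreconnected hx hy)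

/-- The weighted mass of a set filling most of an arc of size `s` is at least comparable to the
mass of a ball of radius `s`. -/
lemma exists_meanVolume_le (h : IsLoop Γ g T) (hq : IsQuasismooth Γ Λ) (lam : ℝ) (a b : ℝ≥0)
    (ha : 0 < a) :
    ∃ C : ℝ≥0, ∀ (ν : Measure ℂ) (ρ : ℂ → ℝ), IsAInftyMeasure Γ ν lam →
      IsRegularPair Γ (μH[1].restrict Γ) (ν.restrict Γ) ρ a b →
      ∀ (z w : ℂ) (s : ℝ) (J S : Set ℂ), 0 < s → 4 * s < diam Γ → IsSubarc Γ J → z ∈ J → w ∈ J →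
        2 * s ≤ dist z w → (∀ t ∈ J, dist t z ≤ 8 * Λ * s) → ENNReal.ofReal (4 * s) ≤ μH[1] J →
        MeasurableSet S → S ⊆ J → μH[1] (J \ S) ≤ ENNReal.ofReal (9 / 8 * s) →
        meanVolume (ν.restrict Γ) ρ z s ≤
          C * ∫⁻ y in S, meanDensity (ν.restrict Γ) ρ y ∂μH[1] := by
  have hΛ := hq.1
  have ha' : (0:ℝ) < a := ha
  obtain ⟨k, hk⟩ := pow_unbounded_of_one_lt (64 * Λ ^ 2 + 1) (one_lt_two (α := ℝ))
  set c : ℝ := 1 / (40 * (20 + 72 * Λ) * a * (8 * Λ + 72 * Λ)) with hc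
  have hcpos : 0 < c := by positivity
  refine ⟨2 * b ^ 2 + lam.toNNReal ^ (2 * k + 3) * (c⁻¹).toNNReal, ?_⟩
  intro ν ρ hν hr z w s J S hs hsd hJ hz hw hzw hJz hJl hS hSJ hJS
  have hzΓ := hJ.1 hz
  have hJm : MeasurableSet J := hJ.2.1.measurableSet
  have hrest : ∀ X ⊆ J, μH[1].restrict Γ X = μH[1] X := fun X hX => by
    rw [Measure.restrict_apply' h.isCompact.measurableSet,
      inter_eq_self_of_subset_left (hX.trans hJ.1)]
  have hrest' : (μH[1].restrict Γ).restrict S = μH[1].restrict S := by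
    rw [Measure.restrict_restrict hS, inter_eq_self_of_subset_left (hSJ.trans hJ.1)]
  rcases le_or_gt (64 * Λ * s) (ρ z) with hρ | hρ
  · have hSs : ENNReal.ofReal s ≤ μH[1].restrict Γ S := by
      rw [hrest S hSJ]
      have h1 : μH[1] J ≤ μH[1] S + ENNReal.ofReal (9 / 8 * s) := by
        calc μH[1] J = μH[1] (S ∪ J \ S) := by rw [union_sdiff_cancel hSJ]
          _ ≤ _ := (measure_union_le _ _).trans (by gcongr)
      have h2 := hJl.trans h1
      have e : 4 * s = (4 - 9 / 8) * s + 9 / 8 * s := by ring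
      rw [e, ENNReal.ofReal_add (by linarith) (by positivity)] at h2
      refine le_trans (ENNReal.ofReal_le_ofReal (by linarith))
        ((ENNReal.add_le_add_iff_right ENNReal.ofReal_ne_top).1 h2)
    have h1 := hr.meanVolume_le_of_le_scale hzΓ hs (by nlinarith) (S := S)
      (fun y hy => by linarith [hJz y (hSJ hy)]) hSs
    rw [hrest'] at h1
    refine h1.trans ?_
    gcongr
    exact le_self_add
  · obtain ⟨U, hUS, hUm, hU1, hU2⟩ := hr.exists_dense_subset (z := z) (s := s) (C := 8 * Λ)
      (K := 72 * Λ) hs (by positivity) (by positivity) ha hsd.le hS hSJ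
      (fun t ht => ⟨hJ.1 ht, hJz t ht, by linarith [hJz t ht, hr.lip t z]⟩)
      (by rwa [hrest J Subset.rfl]) (by rwa [hrest _ sdiff_subset])
    rw [hrest', ← hc, Measure.restrict_apply hUm,
      inter_eq_self_of_subset_left ((hUS.trans hSJ).trans hJ.1)] at hU2
    rw [hrest J Subset.rfl, hrest U (hUS.trans hSJ)] at hU1
    have h1 := h.measure_ball_le_of_subarc hq hν hJ hz hw (R := 64 * Λ * s) (by positivity) k (by
      nlinarith [mul_le_mul_of_nonneg_left hzw (by positivity : 0 ≤ Λ ^ 2),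
        mul_le_mul_of_nonneg_right hk.le (dist_nonneg (x := z) (y := w))])
    have h2 := hν.2 J U hJ (hUS.trans hSJ) hUm hU1
    have hmax : max s (ρ z) ≤ 64 * Λ * s := max_le (by nlinarith) hρ.le
    unfold meanVolume
    calc _ ≤ 1 * (ν.restrict Γ) (ball z (64 * Λ * s)) := by
          gcongr
          rw [← ENNReal.ofReal_one]
          apply ENNReal.ofReal_le_ofReal
          rw [div_le_one (lt_max_of_lt_left hs)]
          exact le_max_left _ _
      _ ≤ ENNReal.ofReal lam ^ (2 * k + 2) * (ENNReal.ofReal lam * ν U) := by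
          rw [one_mul, Measure.restrict_apply measurableSet_ball, inter_comm]
          exact h1.trans (by gcongr)
      _ = ENNReal.ofReal lam ^ (2 * k + 3) * (ENNReal.ofReal c⁻¹ * (ENNReal.ofReal c * ν U)) := by
          rw [← mul_assoc (ENNReal.ofReal c⁻¹), ← ENNReal.ofReal_mul (by positivity),
            inv_mul_cancel₀ hcpos.ne', ENNReal.ofReal_one]
          ring
      _ ≤ ENNReal.ofReal lam ^ (2 * k + 3) * (ENNReal.ofReal c⁻¹ *
          ∫⁻ y in S, meanDensity (ν.restrict Γ) ρ y ∂μH[1]) := by gcongr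
      _ = ((lam.toNNReal ^ (2 * k + 3) * (c⁻¹).toNNReal : ℝ≥0) : ℝ≥0∞) *
          ∫⁻ y in S, meanDensity (ν.restrict Γ) ρ y ∂μH[1] := by
          rw [ENNReal.coe_mul, ENNReal.coe_pow, mul_assoc]
          rfl
      _ ≤ _ := by
          gcongr
          exact le_add_self

end IsLoop

/-- A Harnack inequality for holomorphic functions without zeros. -/
lemma norm_pow_three_le_of_ne_zero {f : ℂ → ℂ} {c w : ℂ} {r : ℝ}
    (hf : DifferentiableOn ℂ f (ball c r)) (h0 : ∀ z ∈ ball c r, f z ≠ 0)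
    (h1 : ∀ z ∈ ball c r, ‖f z‖ ≤ 1) (hr : 0 < r) (hw : dist w c ≤ r / 2) :
    ‖f c‖ ^ 3 ≤ ‖f w‖ := by
  have hc : c ∈ ball c r := mem_ball_self hr
  have hwb : w ∈ ball c r := by rw [mem_ball]; linarith
  have hfd : ∀ z ∈ ball c r, HasDerivAt f (deriv f z) z := fun z hz =>
    (hf.differentiableAt (isOpen_ball.mem_nhds hz)).hasDerivAt
  have hlog : DifferentiableOn ℂ (fun z => deriv f z / f z) (ball c r) :=
    (hf.deriv isOpen_ball).div hf h0
  obtain ⟨G, hG0, hG⟩ := hlog.isExactOn_ball.with_val_at c 0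
  have hconst : ∀ z ∈ ball c r, f z = f c * Complex.exp (G z) := by
    have hd : ∀ z ∈ ball c r, HasDerivAt (fun z => f z * Complex.exp (-G z)) 0 z := by
      intro z hz
      refine ((hfd z hz).mul (hG z hz).neg.cexp).congr_deriv ?_
      have h3 : f z * (deriv f z / f z) = deriv f z := mul_div_cancel₀ _ (h0 z hz)
      linear_combination -Complex.exp ((-G) z) * h3
    intro z hz
    have := isOpen_ball.is_const_of_deriv_eq_zero (convex_ball c r).isPreconnected
      (fun x hx => (hd x hx).differentiableAt.differentiableWithinAt)
      (fun x hx => (hd x hx).deriv) hz hc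
    simp only [hG0, neg_zero, Complex.exp_zero, mul_one] at this
    rw [← this, mul_assoc, ← Complex.exp_add, neg_add_cancel, Complex.exp_zero, mul_one]
  have hfc : 0 < ‖f c‖ := norm_pos_iff.2 (h0 c hc)
  have hnorm : ∀ z ∈ ball c r, ‖f z‖ = ‖f c‖ * Real.exp (G z).re := fun z hz => by
    rw [hconst z hz, norm_mul, Complex.norm_exp]
  have hM0 : 0 ≤ -Real.log ‖f c‖ := by
    have := Real.log_nonpos hfc.le (h1 c hc)
    linarith
  have hre : ∀ z ∈ ball c r, (G z).re ≤ -Real.log ‖f c‖ := by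
    intro z hz
    have h2 := h1 z hz
    rw [hnorm z hz] at h2
    have h3 := Real.log_le_log (by positivity) h2
    rw [Real.log_mul hfc.ne' (Real.exp_pos _).ne', Real.log_exp, Real.log_one] at h3
    linarith
  have hkey : ∀ ε > 0, ‖G w‖ ≤ 2 * (-Real.log ‖f c‖ + ε) := by
    intro ε hε
    have hmaps : ∀ z ∈ ball (0:ℂ) r, c + z ∈ ball c r := fun z hz => by
      simpa [mem_ball, dist_eq_norm] using hz
    have hb := Complex.borelCaratheodory_zero (f := fun z => G (c + z)) (R := r)
      (M := -Real.log ‖f c‖ + ε) (z := w - c) (by linarith)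
      (fun z hz => ((hG _ (hmaps z hz)).differentiableAt.comp z
        (by fun_prop : DifferentiableAt ℂ (fun z => c + z) z)).differentiableWithinAt)
      (fun z hz => by
        have := hre _ (hmaps z hz)
        change (G (c + z)).re ≤ _
        linarith) hr (by simpa [mem_ball, dist_eq_norm] using hwb) (by simpa using hG0)
    simp only [add_sub_cancel] at hb
    refine hb.trans ?_
    rw [dist_eq_norm] at hw
    rw [div_le_iff₀ (by linarith)]
    have : 0 ≤ -Real.log ‖f c‖ + ε := by linarith
    nlinarith
  have hGw : ‖G w‖ ≤ 2 * -Real.log ‖f c‖ := by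
    refine le_of_forall_pos_le_add fun ε hε => ?_
    have := hkey (ε / 2) (by positivity)
    linarith
  have h2 : 2 * Real.log ‖f c‖ ≤ (G w).re := by
    have := (abs_le.1 ((Complex.abs_re_le_norm (G w)).trans hGw)).1
    linarith
  rw [hnorm w hwb]
  calc ‖f c‖ ^ 3 = ‖f c‖ * ‖f c‖ ^ 2 := by ring
    _ = ‖f c‖ * Real.exp (2 * Real.log ‖f c‖) := by
        rw [two_mul, Real.exp_add, Real.exp_log hfc]
        ring
    _ ≤ _ := by gcongr

section unboundedComponent

variable {Γ : Set ℂ}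

lemma mem_unboundedComponent_of_preconnected {S : Set ℂ} (hS : IsPreconnected S) (hSΓ : S ⊆ Γᶜ)
    {x y : ℂ} (hx : x ∈ S) (hy : y ∈ S) (hxΩ : x ∈ unboundedComponent Γ) :
    y ∈ unboundedComponent Γ := by
  refine ⟨hSΓ hy, ?_⟩
  have h1 := hS.subset_connectedComponentIn hx hSΓ hy
  rw [← connectedComponentIn_eq h1]
  exact hxΩ.2

lemma isOpen_unboundedComponent (hΓ : IsClosed Γ) : IsOpen (unboundedComponent Γ) := by
  rw [Metric.isOpen_iff]
  intro z hz
  obtain ⟨r, hr, hsub⟩ := Metric.isOpen_iff.1 hΓ.isOpen_compl z hz.1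
  exact ⟨r, hr, fun w hw => mem_unboundedComponent_of_preconnected (convex_ball z r).isPreconnected
    hsub (mem_ball_self hr) hw hz⟩

lemma isOpen_compl_union_unboundedComponent (hΓ : IsClosed Γ) :
    IsOpen (Γ ∪ unboundedComponent Γ)ᶜ := by
  rw [Metric.isOpen_iff]
  intro z hz
  simp only [mem_compl_iff, mem_union, not_or] at hz
  obtain ⟨r, hr, hsub⟩ := Metric.isOpen_iff.1 hΓ.isOpen_compl z hz.1
  refine ⟨r, hr, fun w hw => ?_⟩
  simp only [mem_compl_iff, mem_union, not_or]
  exact ⟨hsub hw, fun hwΩ => hz.2 (mem_unboundedComponent_of_preconnected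
    (convex_ball z r).isPreconnected hsub hw (mem_ball_self hr) hwΩ)⟩

lemma isPreconnected_lt_norm {R : ℝ} (hR : 0 < R) : IsPreconnected {w : ℂ | R < ‖w‖} := by
  have h1 : IsPreconnected (Complex.exp '' {z | Real.log R < z.re}) :=
    (convex_halfSpace_re_gt _).isPreconnected.image _ Complex.continuous_exp.continuousOn
  convert h1 using 1
  ext w
  constructor
  · intro hw
    have hw0 : w ≠ 0 := by
      rintro rfl
      simp only [mem_ofPred_eq, norm_zero] at hw
      linarith
    refine ⟨Complex.log w, ?_, Complex.exp_log hw0⟩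
    change Real.log R < (Complex.log w).re
    rw [Complex.log_re]
    exact Real.log_lt_log hR hw
  · rintro ⟨z, hz, rfl⟩
    change R < ‖Complex.exp z‖
    rw [Complex.norm_exp]
    exact (Real.log_lt_iff_lt_exp hR).1 hz

lemma mem_unboundedComponent_of_lt_norm {R : ℝ} (hR : 0 < R) (hΓ : Γ ⊆ closedBall 0 R) {z : ℂ}
    (hz : R < ‖z‖) : z ∈ unboundedComponent Γ := by
  have hsub : {w : ℂ | R < ‖w‖} ⊆ Γᶜ := fun w hw hwΓ => by
    have := hΓ hwΓ
    rw [mem_closedBall_zero_iff] at this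
    exact absurd hw (not_lt.2 this)
  refine ⟨hsub hz, fun hb => ?_⟩
  have hb' := hb.subset ((isPreconnected_lt_norm hR).subset_connectedComponentIn hz hsub)
  obtain ⟨K, hK⟩ := hb'.subset_closedBall 0
  have h1 : ((max R K + 1 : ℝ) : ℂ) ∈ closedBall (0:ℂ) K := by
    apply hK
    change R < ‖((max R K + 1 : ℝ) : ℂ)‖
    rw [Complex.norm_real, Real.norm_eq_abs]
    have := le_max_left R K
    exact lt_of_lt_of_le (by linarith) (le_abs_self _)
  rw [mem_closedBall_zero_iff, Complex.norm_real, Real.norm_eq_abs] at h1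
  have := le_max_right R K
  have := le_abs_self (max R K + 1)
  linarith

end unboundedComponent

namespace IsExtConformal

variable {Γ : Set ℂ} {Φ : ℂ → ℂ}

section open_domain

variable {Ω : Set ℂ}

lemma one_lt_norm (h : IsExtConformal Ω Φ) {z : ℂ} (hz : z ∈ Ω) : 1 < ‖Φ z‖ := h.2.1.1 hz

lemma nhds_le_map (h : IsExtConformal Ω Φ) (hΩ : IsOpen Ω) {z : ℂ} (hz : z ∈ Ω) :
    𝓝 (Φ z) ≤ map Φ (𝓝 z) := by
  have ha : AnalyticAt ℂ Φ z := h.1.analyticAt (hΩ.mem_nhds hz)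
  refine ha.eventually_constant_or_nhds_le_map_nhds.resolve_left fun hc => ?_
  have h1 : ∀ᶠ w in 𝓝 z, w = z := by
    filter_upwards [hc, hΩ.mem_nhds hz] with w hw hwΩ using h.2.1.2.1 hwΩ hz hw
  have h2 : ∀ᶠ w in 𝓝[≠] z, w = z := h1.filter_mono nhdsWithin_le_nhds
  obtain ⟨w, hw1, hw2⟩ := (h2.and self_mem_nhdsWithin).exists
  exact hw2 hw1

lemma continuousOn_invFunOn (h : IsExtConformal Ω Φ) (hΩ : IsOpen Ω) :
    ContinuousOn (Function.invFunOn Φ Ω) extDisk := by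
  intro w hw
  have hz : Function.invFunOn Φ Ω w ∈ Ω := Function.invFunOn_mem (h.2.1.2.2 hw)
  have hzw : Φ (Function.invFunOn Φ Ω w) = w := Function.invFunOn_eq (h.2.1.2.2 hw)
  refine ContinuousAt.continuousWithinAt fun V hV => ?_
  have h1 : Φ '' (V ∩ Ω) ∈ 𝓝 w := by
    have := h.nhds_le_map hΩ hz (image_mem_map (inter_mem hV (hΩ.mem_nhds hz)))
    rwa [hzw] at this
  refine mem_map.2 (mem_of_superset h1 ?_)
  rintro _ ⟨x, ⟨hxV, hxΩ⟩, rfl⟩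
  rw [mem_preimage, h.2.1.2.1.leftInvOn_invFunOn hxΩ]
  exact hxV

lemma tendsto_norm_atTop (h : IsExtConformal Ω Φ) :
    Tendsto (fun z => ‖Φ z‖) (cobounded ℂ) atTop := by
  obtain ⟨c, hc, hlim⟩ := h.2.2
  have h1 : Tendsto (fun z => ‖Φ z / z‖ * ‖z‖) (cobounded ℂ) atTop :=
    hlim.norm.pos_mul_atTop (by simpa using hc.ne') tendsto_norm_cobounded_atTop
  refine h1.congr' ?_
  filter_upwards [eventually_ne_cobounded 0] with z hz
  rw [norm_div, div_mul_cancel₀ _ (norm_ne_zero_iff.2 hz)]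

end open_domain

lemma exists_lt_norm (h : IsExtConformal (unboundedComponent Γ) Φ) (hΓ : IsClosed Γ) {R : ℝ}
    (hR : 0 < R) (hΓR : Γ ⊆ closedBall 0 R) :
    ∃ R', 1 ≤ R' ∧ ∀ z ∈ unboundedComponent Γ, R' < ‖Φ z‖ → R < ‖z‖ := by
  have hΩ := isOpen_unboundedComponent hΓ
  have hsph : sphere (0:ℂ) (R + 1) ⊆ unboundedComponent Γ := fun z hz =>
    mem_unboundedComponent_of_lt_norm hR hΓR (by rw [mem_sphere_zero_iff_norm.1 hz]; linarith)
  obtain ⟨K, hK⟩ := (isCompact_sphere (0:ℂ) (R + 1)).exists_bound_of_continuousOn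
    (h.1.continuousOn.mono hsph)
  refine ⟨max 1 K, le_max_left _ _, fun z hz hzK => ?_⟩
  by_contra! hzR
  have hR' : 0 < max 1 K := lt_of_lt_of_le one_pos (le_max_left _ _)
  have hsub : {w : ℂ | max 1 K < ‖w‖} ⊆ extDisk := fun w hw => by
    change 1 < ‖w‖
    exact (le_max_left 1 K).trans_lt hw
  have hconn := ((isPreconnected_lt_norm hR').image _
    ((h.continuousOn_invFunOn hΩ).mono hsub)).image _ continuous_norm.continuousOn
  obtain ⟨x, hx1, hx2⟩ := ((h.tendsto_norm_atTop.eventually_gt_atTop (max 1 K)).and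
    (tendsto_norm_cobounded_atTop.eventually_gt_atTop (R + 1))).exists
  have hxΩ : x ∈ unboundedComponent Γ := mem_unboundedComponent_of_lt_norm hR hΓR (by linarith)
  have hmem := hconn.ordConnected.out (mem_image_of_mem _ (mem_image_of_mem _ hzK))
    (mem_image_of_mem _ (mem_image_of_mem _ hx1))
  rw [h.2.1.2.1.leftInvOn_invFunOn hz, h.2.1.2.1.leftInvOn_invFunOn hxΩ] at hmem
  obtain ⟨_, ⟨w, hw, rfl⟩, hwn⟩ := hmem (⟨by linarith, hx2.le⟩ : R + 1 ∈ Icc ‖z‖ ‖x‖)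
  have h1 := hK _ (mem_sphere_zero_iff_norm.2 hwn)
  rw [Function.invFunOn_eq (h.2.1.2.2 (hsub hw))] at h1
  exact absurd (h1.trans (le_max_right _ _)) (not_le.2 hw)

lemma isClosed_superlevel (h : IsExtConformal (unboundedComponent Γ) Φ) (hΓ : IsCompact Γ) {δ : ℝ}
    (hδ : 0 < δ) : IsClosed {z ∈ unboundedComponent Γ | 1 + δ ≤ ‖Φ z‖} := by
  have hΩ := isOpen_unboundedComponent hΓ.isClosed
  rw [← isOpen_compl_iff, isOpen_iff_mem_nhds]
  intro z hz
  by_cases hzΩ : z ∈ unboundedComponent Γ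
  · have hlt : ‖Φ z‖ < 1 + δ := by
      by_contra! hge
      exact hz ⟨hzΩ, hge⟩
    have hc : ContinuousAt (fun z => ‖Φ z‖) z :=
      (h.1.continuousOn.continuousAt (hΩ.mem_nhds hzΩ)).norm
    filter_upwards [hc.eventually_lt continuousAt_const hlt] with w hw hw2
    exact absurd hw2.2 (not_le.2 hw)
  by_cases hzΓ : z ∈ Γ
  · obtain ⟨R, hR, hΓR⟩ := hΓ.isBounded.subset_closedBall_lt 0 0
    obtain ⟨R', hR'1, hR'⟩ := h.exists_lt_norm hΓ.isClosed (R := R + 1) (by linarith)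
      (hΓR.trans (closedBall_subset_closedBall (by linarith)))
    set K : Set ℂ := {w | 1 + δ ≤ ‖w‖} ∩ closedBall 0 R' with hK
    have hKc : IsCompact K := (isCompact_closedBall (0:ℂ) R').inter_left
      (isClosed_le continuous_const continuous_norm)
    have hKsub : K ⊆ extDisk := fun w hw => by
      have : 1 + δ ≤ ‖w‖ := hw.1
      change 1 < ‖w‖
      linarith
    have hcl : IsClosed (Function.invFunOn Φ (unboundedComponent Γ) '' K) :=
      (hKc.image_of_continuousOn ((h.continuousOn_invFunOn hΩ).mono hKsub)).isClosed
    have hzn : z ∉ Function.invFunOn Φ (unboundedComponent Γ) '' K := by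
      rintro ⟨w, hw, rfl⟩
      exact hzΩ (Function.invFunOn_mem (h.2.1.2.2 (hKsub hw)))
    have hzR : ‖z‖ < R + 1 := by
      have := mem_closedBall_zero_iff.1 (hΓR hzΓ)
      linarith
    filter_upwards [hcl.isOpen_compl.mem_nhds hzn,
      continuous_norm.continuousAt.eventually_lt continuousAt_const hzR] with w hw1 hw2 hw3
    by_cases hwR : R' < ‖Φ w‖
    · exact absurd (hR' w hw3.1 hwR) (not_lt.2 hw2.le)
    · refine hw1 ⟨Φ w, ⟨hw3.2, mem_closedBall_zero_iff.2 (not_lt.1 hwR)⟩, ?_⟩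
      exact h.2.1.2.1.leftInvOn_invFunOn hw3.1
  · have hmem : z ∈ (Γ ∪ unboundedComponent Γ)ᶜ := by simp [hzΓ, hzΩ]
    filter_upwards [(isOpen_compl_union_unboundedComponent hΓ.isClosed).mem_nhds hmem] with w hw hw2
    exact hw (Or.inr hw2.1)

lemma levelCurve_nonempty (h : IsExtConformal (unboundedComponent Γ) Φ) {δ : ℝ} (hδ : 0 < δ) :
    (levelCurve (unboundedComponent Γ) Φ δ).Nonempty := by
  have hw : ‖((1 + δ : ℝ) : ℂ)‖ = 1 + δ := by
    rw [Complex.norm_real, Real.norm_eq_abs, abs_of_pos (by linarith)]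
  have : ((1 + δ : ℝ) : ℂ) ∈ extDisk := by
    change 1 < ‖_‖
    rw [hw]
    linarith
  obtain ⟨z, hz, hzw⟩ := h.2.1.2.2 this
  exact ⟨z, hz, by rw [hzw, hw]⟩

/-- The scales `ρ_δ`, `δ ≥ δ₀`, are bounded below on `Γ`. -/
lemma exists_le_rho (h : IsExtConformal (unboundedComponent Γ) Φ) (hΓ : IsCompact Γ) {δ₀ : ℝ}
    (hδ₀ : 0 < δ₀) :
    ∃ c > 0, ∀ δ, δ₀ ≤ δ → ∀ z ∈ Γ, c ≤ rho (unboundedComponent Γ) Φ δ z := by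
  have hcl := h.isClosed_superlevel hΓ hδ₀
  have hsub : ∀ δ, δ₀ ≤ δ → levelCurve (unboundedComponent Γ) Φ δ ⊆
      {z ∈ unboundedComponent Γ | 1 + δ₀ ≤ ‖Φ z‖} := fun δ hδ z hz =>
    ⟨hz.1, by rw [hz.2]; linarith⟩
  have hne := (h.levelCurve_nonempty hδ₀).mono (hsub δ₀ le_rfl)
  rcases Γ.eq_empty_or_nonempty with rfl | hΓne
  · exact ⟨1, one_pos, by simp⟩
  obtain ⟨z₀, hz₀, hmin⟩ := hΓ.exists_isMinOn hΓne (continuous_infDist_pt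
    {z ∈ unboundedComponent Γ | 1 + δ₀ ≤ ‖Φ z‖}).continuousOn
  refine ⟨infDist z₀ {z ∈ unboundedComponent Γ | 1 + δ₀ ≤ ‖Φ z‖}, ?_, fun δ hδ z hz => ?_⟩
  · rw [gt_iff_lt, ← hcl.notMem_iff_infDist_pos hne]
    exact fun hmem => hmem.1.1 hz₀
  · exact (hmin hz).trans (infDist_le_infDist_of_subset (hsub δ hδ)
      (h.levelCurve_nonempty (hδ₀.trans_le hδ)))

lemma rho_pos (h : IsExtConformal (unboundedComponent Γ) Φ) (hΓ : IsCompact Γ) {δ : ℝ}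
    (hδ : 0 < δ) {z : ℂ} (hz : z ∈ Γ) : 0 < rho (unboundedComponent Γ) Φ δ z := by
  obtain ⟨c, hc, hle⟩ := h.exists_le_rho hΓ hδ
  exact hc.trans_le (hle δ le_rfl z hz)

section growth

variable {δ : ℝ}

/-- The segment from a nearest boundary point stays in the exterior domain. -/
lemma add_mul_sub_mem {z q : ℂ} (hz : z ∈ unboundedComponent Γ) (hzq : infDist z Γ = dist z q)
    {t : ℝ} (ht : t ∈ Ioc (0:ℝ) 1) : q + t * (z - q) ∈ unboundedComponent Γ ∧
      t * dist z q ≤ infDist (q + t * (z - q)) Γ := by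
  have hdist : ∀ u ∈ Ioc (0:ℝ) 1, u * dist z q ≤ infDist (q + u * (z - q)) Γ := by
    intro u hu
    have h1 : infDist z Γ ≤ infDist (q + u * (z - q)) Γ + dist z (q + u * (z - q)) :=
      infDist_le_infDist_add_dist
    have h2 : dist z (q + u * (z - q)) = (1 - u) * dist z q := by
      rw [dist_eq_norm, dist_eq_norm]
      have : z - (q + u * (z - q)) = ((1 - u : ℝ) : ℂ) * (z - q) := by push_cast; ring
      rw [this, norm_mul, Complex.norm_real, Real.norm_eq_abs, abs_of_nonneg (by linarith [hu.2])]
    rw [hzq, h2] at h1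
    linarith
  refine ⟨?_, hdist t ht⟩
  by_cases hzeq : z = q
  · simpa [hzeq] using hzeq ▸ hz
  have hpos : 0 < dist z q := dist_pos.2 hzeq
  have hconn : IsPreconnected ((fun u : ℝ => q + u * (z - q)) '' Ioc 0 1) :=
    isPreconnected_Ioc.image _ (by fun_prop)
  refine mem_unboundedComponent_of_preconnected hconn ?_ (x := z) ⟨1, by simp, by simp⟩
    (mem_image_of_mem _ ht) hz
  rintro _ ⟨u, hu, rfl⟩ hmem
  have h1 := hdist u hu
  rw [infDist_zero_of_mem hmem] at h1
  have := mul_pos hu.1 hpos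
  linarith

lemma norm_lt_of_infDist_lt (h : IsExtConformal (unboundedComponent Γ) Φ) (hΓ : IsCompact Γ)
    (hΓne : Γ.Nonempty) (hδ : 0 < δ) {z : ℂ} (hz : z ∈ unboundedComponent Γ)
    (hlt : infDist z Γ < setDist Γ (levelCurve (unboundedComponent Γ) Φ δ)) :
    ‖Φ z‖ < 1 + δ := by
  by_contra! hge
  have hΩ := isOpen_unboundedComponent hΓ.isClosed
  obtain ⟨q, hq, hzq⟩ := hΓ.exists_infDist_eq_dist hΓne z
  have hcont : ContinuousOn (fun u : ℝ => ‖Φ (q + u * (z - q))‖) (Ioc 0 1) :=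
    ((h.1.continuousOn.comp (by fun_prop) fun u hu => (add_mul_sub_mem hz hzq hu).1).norm)
  have hne : ∀ u ∈ Ioc (0:ℝ) 1, ‖Φ (q + u * (z - q))‖ ≠ 1 + δ := by
    intro u hu he
    have h1 : setDist Γ (levelCurve (unboundedComponent Γ) Φ δ) ≤ dist q (q + u * (z - q)) := by
      refine csInf_le ⟨0, ?_⟩ (mem_image2_of_mem hq ⟨(add_mul_sub_mem hz hzq hu).1, he⟩)
      rintro _ ⟨_, _, _, _, rfl⟩
      exact dist_nonneg
    have h2 : dist q (q + u * (z - q)) = u * dist z q := by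
      rw [dist_eq_norm, dist_eq_norm]
      have : q - (q + u * (z - q)) = -((u : ℝ) * (z - q)) := by ring
      rw [this, norm_neg, norm_mul, Complex.norm_real, Real.norm_eq_abs, abs_of_pos hu.1]
    rw [h2] at h1
    rw [hzq] at hlt
    nlinarith [hu.2, dist_nonneg (x := z) (y := q)]
  have hgt : ∀ u ∈ Ioc (0:ℝ) 1, 1 + δ ≤ ‖Φ (q + u * (z - q))‖ := by
    intro u hu
    by_contra! hcon
    have hpre := (isPreconnected_Ioc.image _ hcont).ordConnected.out (mem_image_of_mem _ hu)
      (mem_image_of_mem _ (⟨one_pos, le_rfl⟩ : (1:ℝ) ∈ Ioc (0:ℝ) 1))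
    simp only [Complex.ofReal_one, one_mul, add_sub_cancel] at hpre
    obtain ⟨v, hv, hve⟩ := hpre ⟨hcon.le, hge⟩
    exact hne v hv hve
  have hmem : q ∈ {z ∈ unboundedComponent Γ | 1 + δ ≤ ‖Φ z‖} := by
    have hlim : Tendsto (fun u : ℝ => q + u * (z - q)) (𝓝[>] 0) (𝓝 q) := by
      have : Tendsto (fun u : ℝ => q + u * (z - q)) (𝓝 0) (𝓝 (q + ((0:ℝ):ℂ) * (z - q))) :=
        (by fun_prop : Continuous fun u : ℝ => q + u * (z - q)).tendsto 0
      simp only [Complex.ofReal_zero, zero_mul, add_zero] at this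
      exact this.mono_left nhdsWithin_le_nhds
    refine (h.isClosed_superlevel hΓ hδ).mem_of_tendsto hlim ?_
    filter_upwards [Ioc_mem_nhdsGT (one_pos : (0:ℝ) < 1)] with u hu
    exact ⟨(add_mul_sub_mem hz hzq hu).1, hgt u hu⟩
  exact hmem.1.1 hq

lemma norm_le_pow_of_infDist_lt (h : IsExtConformal (unboundedComponent Γ) Φ) (hΓ : IsCompact Γ)
    (hΓne : Γ.Nonempty) (hδ : 0 < δ) (k : ℕ) {z : ℂ} (hz : z ∈ unboundedComponent Γ)
    (hlt : infDist z Γ < (3 / 2) ^ k * setDist Γ (levelCurve (unboundedComponent Γ) Φ δ)) :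
    ‖Φ z‖ ≤ (1 + δ) ^ 3 ^ k := by
  induction k generalizing z with
  | zero => simpa using (h.norm_lt_of_infDist_lt hΓ hΓne hδ hz (by simpa using hlt)).le
  | succ k ih =>
    obtain ⟨q, hq, hzq⟩ := hΓ.exists_infDist_eq_dist hΓne z
    obtain ⟨hx, hxd⟩ := add_mul_sub_mem hz hzq (t := 2 / 3) (by norm_num)
    set x := q + (2 / 3 : ℝ) * (z - q) with hxdef
    have hzq0 : 0 < dist z q := dist_pos.2 fun he => hz.1 (he ▸ hq)
    have hxq : dist x q = 2 / 3 * dist z q := by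
      rw [dist_eq_norm, dist_eq_norm, hxdef]
      have : q + (2 / 3 : ℝ) * (z - q) - q = (2 / 3 : ℝ) * (z - q) := by ring
      rw [this, norm_mul, Complex.norm_real, Real.norm_eq_abs, abs_of_pos (by norm_num)]
    have hzx : dist z x = 1 / 3 * dist z q := by
      rw [dist_eq_norm, dist_eq_norm, hxdef]
      have : z - (q + (2 / 3 : ℝ) * (z - q)) = (1 / 3 : ℝ) * (z - q) := by push_cast; ring
      rw [this, norm_mul, Complex.norm_real, Real.norm_eq_abs, abs_of_pos (by norm_num)]
    have hball : ball x (2 / 3 * dist z q) ⊆ unboundedComponent Γ := by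
      intro y hy
      refine mem_unboundedComponent_of_preconnected
        (convex_ball x (2 / 3 * dist z q)).isPreconnected
        ?_ (mem_ball_self (by positivity)) hy hx
      intro w hw hwΓ
      have h1 := infDist_le_dist_of_mem (x := x) hwΓ
      rw [mem_ball, dist_comm] at hw
      linarith
    have hxlt : infDist x Γ < (3 / 2) ^ k * setDist Γ (levelCurve (unboundedComponent Γ) Φ δ) := by
      have h1 := infDist_le_dist_of_mem (x := x) hq
      rw [hzq, pow_succ] at hlt
      linarith
    have h0 : ∀ y ∈ ball x (2 / 3 * dist z q), Φ y ≠ 0 := fun y hy hy0 => by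
      have := h.one_lt_norm (hball hy)
      rw [hy0, norm_zero] at this
      linarith
    have hH := norm_pow_three_le_of_ne_zero (f := fun y => (Φ y)⁻¹) (c := x) (w := z)
      (r := 2 / 3 * dist z q) ((h.1.mono hball).inv h0) (fun y hy => inv_ne_zero (h0 y hy))
      (fun y hy => by
        rw [norm_inv]
        exact inv_le_one_of_one_le₀ (h.one_lt_norm (hball hy)).le) (by positivity)
      (by rw [hzx]; linarith)
    rw [norm_inv, norm_inv, inv_pow, inv_le_inv₀ (pow_pos (one_pos.trans (h.one_lt_norm hx)) 3)
      (one_pos.trans (h.one_lt_norm hz))] at hH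
    calc ‖Φ z‖ ≤ ‖Φ x‖ ^ 3 := hH
      _ ≤ ((1 + δ) ^ 3 ^ k) ^ 3 := by gcongr; exact ih hx hxlt
      _ = _ := by rw [← pow_mul, pow_succ]

end growth

end IsExtConformal

section

variable {Γ : Set ℂ} {ν : Measure ℂ} {lam Λ T : ℝ} {g : ℝ → ℂ}

lemma ofReal_dist_le_shorterArcLength (Γ : Set ℂ) (x y : ℂ) :
    ENNReal.ofReal (dist x y) ≤ shorterArcLength Γ x y :=
  le_iInf₂ fun _ hJ => ofReal_dist_le_length hJ.1.2.2 hJ.2.1 hJ.2.2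

lemma IsShorterArc.dist_le (hq : IsQuasismooth Γ Λ) {z z' z'' : ℂ} {J : Set ℂ} {r : ℝ}
    (hr : 0 < r) (hJ : IsShorterArc Γ z' z'' J)
    (h1 : shorterArcLength Γ z' z = ENNReal.ofReal (r / 2))
    (h2 : shorterArcLength Γ z z'' = ENNReal.ofReal (r / 2)) (hz : z ∈ J) {t : ℂ} (ht : t ∈ J) :
    dist t z ≤ Λ * r := by
  have hΛ := hq.1
  have h3 := ofReal_dist_le_shorterArcLength Γ z' z
  have h4 := ofReal_dist_le_shorterArcLength Γ z z''
  rw [h1, ENNReal.ofReal_le_ofReal_iff (by positivity)] at h3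
  rw [h2, ENNReal.ofReal_le_ofReal_iff (by positivity)] at h4
  have h5 := (ofReal_dist_le_length hJ.1.2.2 ht hz).trans (hJ.2.2.2.le.trans
    (hq.2 z' (hJ.1.1 hJ.2.1) z'' (hJ.1.1 hJ.2.2.1)))
  rw [ENNReal.ofReal_le_ofReal_iff (by positivity)] at h5
  have h6 : dist z' z'' ≤ r := by linarith [dist_triangle z' z z'']
  exact h5.trans (by gcongr)

lemma IsShorterArc.measure_ball_le (h : IsLoop Γ g T) (hq : IsQuasismooth Γ Λ)
    (hν : IsAInftyMeasure Γ ν lam) {z z' z'' : ℂ} {J : Set ℂ} {r : ℝ}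
    (hr : 0 < r) (hJ : IsShorterArc Γ z' z'' J)
    (h1 : shorterArcLength Γ z' z = ENNReal.ofReal (r / 2)) (hz : z ∈ J) {k : ℕ}
    (hk : 16 * Λ ^ 2 + 1 ≤ 2 ^ k) :
    ν (Γ ∩ ball z (r / 2)) ≤ ENNReal.ofReal lam ^ (2 * k + 2) * ν J := by
  have hΛ := hq.1
  refine h.measure_ball_le_of_subarc hq hν hJ.1 hz hJ.2.1 (by positivity) k ?_
  have h2 := hq.2 z' (hJ.1.1 hJ.2.1) z (hJ.1.1 hz)
  rw [h1, ENNReal.ofReal_le_ofReal_iff (by positivity), dist_comm] at h2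
  have h3 : 0 ≤ dist z z' := dist_nonneg
  calc 2 * Λ * (r / 2) + dist z z' ≤ 2 * Λ * (Λ * dist z z') + dist z z' := by gcongr
    _ = (2 * Λ ^ 2 + 1) * dist z z' := by ring
    _ ≤ 2 ^ k * dist z z' := by
      gcongr
      nlinarith

/-- The weight `w_n` is comparable to the mean density of `ν` at scale `ρ_{1/n}`. -/
lemma IsLoop.exists_wFun_compare {Φ : ℂ → ℂ} {δ₀ : ℝ} (h : IsLoop Γ g T) (hq : IsQuasismooth Γ Λ)
    (hΦ : IsExtConformal (unboundedComponent Γ) Φ) (hδ₀ : 0 < δ₀) (lam : ℝ) {k : ℕ}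
    (hk : 16 * Λ ^ 2 + 1 ≤ 2 ^ k) :
    ∃ C : ℝ≥0, ∀ ν : Measure ℂ, IsFiniteMeasure ν → IsAInftyMeasure Γ ν lam →
      ∀ n : ℕ, 0 < n → ∀ ℓ, IsArcFamily Γ (unboundedComponent Γ) Φ δ₀ n ℓ → ∀ z ∈ Γ,
        ENNReal.ofReal (wFun ν (unboundedComponent Γ) Φ n ℓ z) ≤
          C * meanDensity (ν.restrict Γ) (rho (unboundedComponent Γ) Φ (1 / n)) z ∧
        meanDensity (ν.restrict Γ) (rho (unboundedComponent Γ) Φ (1 / n)) z ≤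
          C * ENNReal.ofReal (wFun ν (unboundedComponent Γ) Φ n ℓ z) := by
  obtain ⟨c, hc, hcle⟩ := hΦ.exists_le_rho h.isCompact hδ₀
  have hΛ := hq.1
  set b : ℝ≥0 := lam.toNNReal ^ (2 * k + 2) with hb
  obtain ⟨j, hj⟩ := pow_unbounded_of_one_lt (max (4 * Λ) (2 * (diam Γ + 1) / c)) one_lt_two
  refine ⟨max (b ^ j) (max b 1), fun ν hfin hν n hn ℓ hℓ z hz => ?_⟩
  set C : ℝ≥0 := max (b ^ j) (max b 1)
  set ρ := rho (unboundedComponent Γ) Φ (1 / n)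
  have hn' : (0:ℝ) < 1 / n := by positivity
  have hpos : ∀ z ∈ Γ, 0 < ρ z := fun z hz => hΦ.rho_pos h.isCompact hn' hz
  have hR := h.isRegularPair (ν := ν) (ρ := ρ) hq hν hk
    (fun x y => infDist_le_infDist_add_dist) hpos
  rw [← hb] at hR
  have hρ := hpos z hz
  have hN : ∀ r, (ν.restrict Γ) (ball z r) = ν (Γ ∩ ball z r) := fun r => by
    rw [Measure.restrict_apply measurableSet_ball, inter_comm]
  have hlamb : ENNReal.ofReal lam ^ (2 * k + 2) = b := by
    rw [hb, ENNReal.coe_pow]; rfl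
  have key : ν (ℓ z) ≤ C * ν (Γ ∩ ball z (ρ z / 2)) ∧
      ν (Γ ∩ ball z (ρ z / 2)) ≤ C * ν (ℓ z) := by
    rcases lt_or_ge (1 / (n:ℝ)) δ₀ with hlt | hge
    · obtain ⟨z', z'', -, -, hJ, hzJ, h1, h2⟩ := (hℓ z hz).1 hlt
      constructor
      · have hsub : ℓ z ⊆ Γ ∩ ball z (2 * Λ * ρ z) := fun t ht => ⟨hJ.1.1 ht, by
          have := hJ.dist_le hq hρ h1 h2 hzJ ht
          rw [mem_ball]
          nlinarith⟩
        refine (measure_mono hsub).trans ?_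
        rw [← hN, ← hN]
        refine (hR.measure_ball_le_pow hz j (r := ρ z / 2) ?_).trans ?_
        · have := (le_max_left (4 * Λ) (2 * (diam Γ + 1) / c)).trans hj.le
          nlinarith
        · gcongr
          exact_mod_cast le_max_left _ _
      · refine (hJ.measure_ball_le h hq hν hρ h1 hzJ hk).trans ?_
        rw [hlamb]
        gcongr
        exact (le_max_left _ _).trans (le_max_right _ _)
    · rw [(hℓ z hz).2 hge]
      constructor
      · have hsub : Γ ⊆ Γ ∩ ball z (diam Γ + 1) := fun t ht => ⟨ht, by
          have := dist_le_diam_of_mem h.isCompact.isBounded ht hz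
          rw [mem_ball]
          linarith⟩
        refine (measure_mono hsub).trans ?_
        rw [← hN, ← hN]
        refine (hR.measure_ball_le_pow hz j (r := ρ z / 2) ?_).trans ?_
        · have h1 := (le_max_right (4 * Λ) (2 * (diam Γ + 1) / c)).trans hj.le
          have h2 := hcle _ hge z hz
          rw [div_le_iff₀ hc] at h1
          have : (2:ℝ) ^ j * c ≤ 2 ^ j * ρ z := by gcongr
          linarith
        · gcongr
          exact_mod_cast le_max_left _ _
      · refine (measure_mono inter_subset_left).trans (le_mul_of_one_le_left zero_le ?_)
        exact_mod_cast (le_max_right _ _).trans (le_max_right _ _)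
  have hw : ENNReal.ofReal (wFun ν (unboundedComponent Γ) Φ n ℓ z) =
      ν (ℓ z) * (ENNReal.ofReal (ρ z))⁻¹ := by
    rw [wFun, ENNReal.ofReal_div_of_pos hρ, ENNReal.ofReal_toReal (measure_ne_top ν _)]
    rfl
  rw [hw, meanDensity, hN, ← mul_assoc, ← mul_assoc]
  exact ⟨by gcongr; exact key.1, by gcongr; exact key.2⟩

end

section

variable {m : Measure ℂ} {a : ℝ≥0}

lemma ofReal_log_div_le_tsum {r : ℝ} (hr : 0 < r) (x y : ℂ) :
    ENNReal.ofReal (Real.log (r / dist y x)) ≤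
      ∑' k : ℕ, (ball x (r * 2⁻¹ ^ k)).indicator (1 : ℂ → ℝ≥0∞) y := by
  rcases (dist_nonneg (x := y) (y := x)).eq_or_lt with hd | hd
  · simp [← hd]
  set L := Real.log (r / dist y x) with hL
  calc ENNReal.ofReal L ≤ (⌈L⌉₊ : ℝ≥0∞) := by
        rw [← ENNReal.ofReal_natCast]
        exact ENNReal.ofReal_le_ofReal (Nat.le_ceil L)
    _ = ∑ k ∈ Finset.range ⌈L⌉₊, (ball x (r * 2⁻¹ ^ k)).indicator (1 : ℂ → ℝ≥0∞) y := by
        rw [Finset.sum_congr rfl (g := fun _ => (1 : ℝ≥0∞)), Finset.sum_const, Finset.card_range,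
          nsmul_one]
        intro k hk
        have hk : (k : ℝ) < L := Nat.lt_ceil.1 (Finset.mem_range.1 hk)
        have h1 : Real.exp k < r / dist y x := by
          rw [hL] at hk
          exact (Real.lt_log_iff_exp_lt (by positivity)).1 hk
        have h2 : (2 : ℝ) ^ k ≤ Real.exp k := by
          rw [← mul_one (k : ℝ), Real.exp_nat_mul]
          gcongr
          linarith [Real.add_one_le_exp 1]
        rw [indicator_of_mem, Pi.one_apply]
        rw [mem_ball, inv_pow, ← div_eq_mul_inv, lt_div_iff₀ (by positivity)]
        rw [lt_div_iff₀ hd] at h1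
        nlinarith
    _ ≤ _ := ENNReal.sum_le_tsum _

lemma lintegral_log_div_le (hm : ∀ x r, m (ball x r) ≤ a * ENNReal.ofReal r) {r : ℝ} (hr : 0 < r)
    (x : ℂ) : ∫⁻ y, ENNReal.ofReal (Real.log (r / dist y x)) ∂m ≤ 2 * a * ENNReal.ofReal r := by
  calc ∫⁻ y, ENNReal.ofReal (Real.log (r / dist y x)) ∂m
      ≤ ∫⁻ y, ∑' k : ℕ, (ball x (r * 2⁻¹ ^ k)).indicator (1 : ℂ → ℝ≥0∞) y ∂m :=
        lintegral_mono (ofReal_log_div_le_tsum hr x)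
    _ = ∑' k : ℕ, m (ball x (r * 2⁻¹ ^ k)) := by
        rw [lintegral_tsum fun k => (measurable_one.indicator measurableSet_ball).aemeasurable]
        exact tsum_congr fun k => lintegral_indicator_one measurableSet_ball
    _ ≤ ∑' k : ℕ, a * ENNReal.ofReal r * 2⁻¹ ^ k := by
        refine ENNReal.tsum_le_tsum fun k => (hm _ _).trans_eq ?_
        rw [ENNReal.ofReal_mul hr.le, ENNReal.ofReal_pow (by positivity),
          ENNReal.ofReal_inv_of_pos two_pos, ENNReal.ofReal_ofNat, mul_assoc]
    _ = _ := by
        rw [ENNReal.tsum_mul_left, ENNReal.tsum_geometric, ENNReal.one_sub_inv_two, inv_inv]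
        ring

lemma ae_ne_of_measure_ball_le (hm : ∀ x r, m (ball x r) ≤ a * ENNReal.ofReal r) (x : ℂ) :
    ∀ᵐ y ∂m, y ≠ x := by
  refine measure_eq_zero_iff_ae_notMem.1 (?_ : m {x} = 0)
  refine le_antisymm (ENNReal.le_of_forall_pos_le_add fun ε hε _ => ?_) zero_le
  rw [zero_add]
  have hε' : (0:ℝ) < ε / (a + 1) := by positivity
  calc m {x} ≤ m (ball x (ε / (a + 1))) := measure_mono (by simpa using hε')
    _ ≤ a * ENNReal.ofReal (ε / (a + 1)) := hm _ _
    _ ≤ ENNReal.ofReal ε := by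
      rw [← ENNReal.ofReal_coe_nnreal, ← ENNReal.ofReal_mul (by positivity)]
      refine ENNReal.ofReal_le_ofReal ?_
      rw [← mul_div_assoc, div_le_iff₀ (by positivity)]
      nlinarith [ε.2, a.2, hε.le]
    _ = ε := ENNReal.ofReal_coe_nnreal

lemma integrable_log_div [IsFiniteMeasure m] (hm : ∀ x r, m (ball x r) ≤ a * ENNReal.ofReal r)
    {r : ℝ} (hr : 0 < r) (x : ℂ) (hmr : ∀ᵐ y ∂m, dist y x ≤ r) :
    (∀ᵐ y ∂m, 0 ≤ Real.log (r / dist y x)) ∧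
      Integrable (fun y => Real.log (r / dist y x)) m := by
  have h0 : ∀ᵐ y ∂m, 0 ≤ Real.log (r / dist y x) := by
    filter_upwards [hmr, ae_ne_of_measure_ball_le hm x] with y hy hne
    exact Real.log_nonneg ((one_le_div (dist_pos.2 hne)).2 hy)
  have hmeas : Measurable fun y => Real.log (r / dist y x) := by fun_prop
  refine ⟨h0, hmeas.aestronglyMeasurable, ?_⟩
  rw [hasFiniteIntegral_iff_ofReal h0]
  exact (lintegral_log_div_le hm hr x).trans_lt (by finiteness)

/-- The logarithmic potential of the normalized measure `m`. -/
def logPotential (m : Measure ℂ) (x : ℂ) : ℝ :=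
  (m.real univ)⁻¹ * ∫ y, Real.log (dist y x) ∂m

lemma integral_log_dist [IsFiniteMeasure m] (hm : ∀ x r, m (ball x r) ≤ a * ENNReal.ofReal r)
    {r : ℝ} (hr : 0 < r) (x : ℂ) (hmr : ∀ᵐ y ∂m, dist y x ≤ r) :
    Integrable (fun y => Real.log (dist y x)) m ∧
    ∫ y, Real.log (dist y x) ∂m =
      m.real univ * Real.log r - ∫ y, Real.log (r / dist y x) ∂m := by
  have h1 := (integrable_log_div hm hr x hmr).2
  have h2 : (fun y => Real.log r - Real.log (r / dist y x)) =ᵐ[m]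
      fun y => Real.log (dist y x) := by
    filter_upwards [ae_ne_of_measure_ball_le hm x] with y hne
    rw [Real.log_div hr.ne' (dist_pos.2 hne).ne']
    ring
  refine ⟨((integrable_const _).sub h1).congr h2, ?_⟩
  rw [← integral_congr_ae h2, integral_sub (integrable_const _) h1, integral_const, smul_eq_mul]

lemma logPotential_bounds [IsFiniteMeasure m]
    (hm : ∀ x r, m (ball x r) ≤ a * ENNReal.ofReal r) {z : ℂ} {s : ℝ} (hs : 0 < s)
    (hms : ∀ᵐ y ∂m, dist y z ≤ s) (hmass : s ≤ m.real univ) (x : ℂ) :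
    logPotential m x ≤ Real.log (s + dist x z) ∧
      Real.log (s + dist x z) - (6 * a + 2) ≤ logPotential m x := by
  have hr : 0 < s + dist x z := by positivity
  have hmr : ∀ᵐ y ∂m, dist y x ≤ s + dist x z := by
    filter_upwards [hms] with y hy
    linarith [dist_triangle_right y x z]
  obtain ⟨h0, hint⟩ := integrable_log_div hm hr x hmr
  have hμ : 0 < m.real univ := hs.trans_le hmass
  have hle : ∫ y, Real.log ((s + dist x z) / dist y x) ∂m ≤ (6 * a + 2) * m.real univ := by
    rcases le_or_gt (dist x z) (2 * s) with h1 | h1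
    · have h2 : ∫ y, Real.log ((s + dist x z) / dist y x) ∂m ≤ 2 * a * (s + dist x z) := by
        rw [integral_eq_lintegral_of_nonneg_ae h0 hint.1]
        refine ENNReal.toReal_le_of_le_ofReal (by positivity)
          ((lintegral_log_div_le hm hr x).trans_eq ?_)
        rw [ENNReal.ofReal_mul (by positivity), ENNReal.ofReal_mul (by positivity),
          ENNReal.ofReal_ofNat, ENNReal.ofReal_coe_nnreal]
      have h3 : 2 * a * (s + dist x z) ≤ 2 * a * (3 * m.real univ) := by
        gcongr
        linarith
      linarith
    · have h2 : ∫ y, Real.log ((s + dist x z) / dist y x) ∂m ≤ ∫ y, (2:ℝ) ∂m := by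
        refine integral_mono_ae hint (integrable_const _) ?_
        filter_upwards [hms] with y hy
        have h3 : dist x z ≤ dist y x + s := by
          linarith [dist_triangle_left x z y]
        have h4 : 0 < dist y x := by linarith
        have h5 : (s + dist x z) / dist y x ≤ 3 := by
          rw [div_le_iff₀ h4]
          linarith
        have h6 := Real.log_le_sub_one_of_pos (div_pos hr h4)
        linarith
      rw [integral_const, smul_eq_mul] at h2
      have h3 : 0 ≤ 6 * a * m.real univ := by positivity
      linarith
  have hnn : 0 ≤ ∫ y, Real.log ((s + dist x z) / dist y x) ∂m := integral_nonneg_of_ae h0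
  rw [logPotential, (integral_log_dist hm hr x hmr).2]
  constructor
  · rw [inv_mul_le_iff₀ hμ]
    linarith
  · rw [le_inv_mul_iff₀ hμ]
    linarith

lemma integrable_log_dist [IsFiniteMeasure m]
    (hm : ∀ x r, m (ball x r) ≤ a * ENNReal.ofReal r) {z : ℂ} {s : ℝ} (hs : 0 < s)
    (hms : ∀ᵐ y ∂m, dist y z ≤ s) (x : ℂ) : Integrable (fun y => Real.log (dist y x)) m := by
  refine (integral_log_dist hm (r := s + dist x z) (by positivity) x ?_).1
  filter_upwards [hms] with y hy
  linarith [dist_triangle_right y x z]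

/-- Off the support, the logarithmic potential is locally the real part of a holomorphic
function. -/
lemma exists_differentiableAt_re_eq_logPotential [IsFiniteMeasure m]
    (hm : ∀ x r, m (ball x r) ≤ a * ENNReal.ofReal r) {z : ℂ} {s : ℝ} (hs : 0 < s)
    (hms : ∀ᵐ y ∂m, dist y z ≤ s) {x : ℂ} {r : ℝ} (hr : 0 < r)
    (hmr : ∀ᵐ y ∂m, r ≤ dist x y) :
    ∃ F : ℂ → ℂ, ∀ w ∈ ball x (r / 2), DifferentiableAt ℂ F w ∧
      (F w).re = logPotential m w := by
  set f : ℂ → ℂ → ℂ := fun w y => Complex.log ((w - y) / (x - y)) with hf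
  have hmeas : ∀ w, AEStronglyMeasurable (f w) m := fun w =>
    (Complex.measurable_log.comp (by fun_prop)).aestronglyMeasurable
  have hform : ∀ w y, r ≤ dist x y → (w - y) / (x - y) = 1 + (w - x) / (x - y) := by
    intro w y hy
    have : x - y ≠ 0 := sub_ne_zero.2 (dist_pos.1 (hr.trans_le hy))
    field_simp
    ring
  have hhalf : ∀ w ∈ ball x (r / 2), ∀ y, r ≤ dist x y → ‖(w - x) / (x - y)‖ ≤ 1 / 2 := by
    intro w hw y hy
    rw [norm_div, ← dist_eq_norm, ← dist_eq_norm, div_le_iff₀ (hr.trans_le hy)]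
    rw [mem_ball] at hw
    linarith
  have hint : ∀ w ∈ ball x (r / 2), Integrable (f w) m := by
    intro w hw
    refine Integrable.of_bound (hmeas w) 1 ?_
    filter_upwards [hmr] with y hy
    have h1 := hhalf w hw y hy
    rw [hf]
    simp only
    rw [hform w y hy]
    have h2 := Complex.norm_log_one_add_half_le_self h1
    linarith
  refine ⟨fun w => (m.real univ)⁻¹ * ∫ y, f w y ∂m + logPotential m x, fun w hw => ⟨?_, ?_⟩⟩
  · have hd := (hasDerivAt_integral_of_dominated_loc_of_deriv_le (μ := m) (F := f) (x₀ := w)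
      (s := ball x (r / 2)) (F' := fun w y => (w - y)⁻¹) (bound := fun _ => 2 / r)
      (isOpen_ball.mem_nhds hw) (Eventually.of_forall hmeas) (hint w hw)
      (by fun_prop) ?_ (integrable_const _) ?_).2
    · exact (hd.differentiableAt.const_mul _).add_const _
    · filter_upwards [hmr] with y hy v hv
      have h1 : r / 2 ≤ ‖v - y‖ := by
        rw [← dist_eq_norm]
        rw [mem_ball] at hv
        linarith [dist_triangle_left x y v]
      rw [norm_inv, inv_le_comm₀ (by linarith) (by positivity), inv_div]
      exact h1
    · filter_upwards [hmr] with y hy v hv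
      have hxy : x - y ≠ 0 := sub_ne_zero.2 (dist_pos.1 (hr.trans_le hy))
      have hs : (v - y) / (x - y) ∈ slitPlane := by
        rw [hform v y hy]
        exact Complex.mem_slitPlane_of_norm_lt_one ((hhalf v hv y hy).trans_lt (by norm_num))
      have hvy : v - y ≠ 0 := fun h0 => Complex.slitPlane_ne_zero hs (by simp [h0])
      refine ((((hasDerivAt_id v).sub_const y).div_const (x - y)).clog hs).congr_deriv ?_
      simp only [id_eq]
      field_simp
  · have h1 : (∫ y, f w y ∂m).re = ∫ y, (Real.log (dist y w) - Real.log (dist y x)) ∂m := by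
      have : (∫ y, f w y ∂m).re = ∫ y, (f w y).re ∂m :=
        (Complex.reCLM.integral_comp_comm (hint w hw)).symm
      rw [this]
      refine integral_congr_ae ?_
      filter_upwards [hmr] with y hy
      have h2 : 0 < dist x y := hr.trans_le hy
      have h3 : 0 < dist w y := by
        rw [mem_ball] at hw
        linarith [dist_triangle_left x y w]
      rw [hf]
      simp only
      rw [Complex.log_re, norm_div, ← dist_eq_norm, ← dist_eq_norm, Real.log_div h3.ne' h2.ne',
        dist_comm w, dist_comm x]
    rw [integral_sub (integrable_log_dist hm hs hms w) (integrable_log_dist hm hs hms x)] at h1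
    beta_reduce
    rw [Complex.add_re, Complex.re_ofReal_mul, Complex.ofReal_re, h1,
      logPotential, logPotential]
    ring

end

/-- A maximum principle for functions which are locally moduli of holomorphic functions off a
compact set and tend to zero at infinity. -/
lemma le_of_locally_eq_norm {Γ : Set ℂ} (hne : Γ.Nonempty) {u v : ℂ → ℝ} {E : ℝ} (hE : 0 ≤ E)
    (hΓ : IsClosed Γ)
    (hloc : ∀ x ∉ Γ, ∃ F : ℂ → ℂ, (∀ᶠ w in 𝓝 x, DifferentiableAt ℂ F w) ∧
      ∀ᶠ w in 𝓝 x, ‖F w‖ = v w)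
    (hu : Continuous u) (hvu : ∀ x ∉ Γ, v x ≤ u x) (huE : ∀ x ∈ Γ, u x ≤ E)
    (hinf : Tendsto v (cobounded ℂ) (𝓝 0)) {x : ℂ} (hx : x ∉ Γ) : v x ≤ E := by
  by_contra! hlt
  have hcont : ∀ w ∉ Γ, ContinuousAt v w := by
    intro w hw
    obtain ⟨F, hF, hFv⟩ := hloc w hw
    exact (hF.self_of_nhds.continuousAt.norm).congr hFv
  have hnear : ∀ w ∈ Γ, ∀ᶠ w' in 𝓝 w, w' ∉ Γ → v w' < v x := by
    intro w hw
    filter_upwards [hu.continuousAt.eventually_lt_const ((huE w hw).trans_lt hlt)] with w' h1 h2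
    exact (hvu w' h2).trans_lt h1
  have hK : IsClosed {w | w ∉ Γ ∧ v x ≤ v w} := by
    rw [← isOpen_compl_iff, isOpen_iff_mem_nhds]
    intro w hw
    by_cases hwΓ : w ∈ Γ
    · filter_upwards [hnear w hwΓ] with w' h1 h2
      exact absurd (h1 h2.1) (not_lt.2 h2.2)
    · have h1 : v w < v x := by
        by_contra! hcon
        exact hw ⟨hwΓ, hcon⟩
      filter_upwards [(hcont w hwΓ).eventually_lt_const h1] with w' h2 h3
      exact absurd h2 (not_lt.2 h3.2)
  have hKb : Bornology.IsBounded {w | w ∉ Γ ∧ v x ≤ v w} := by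
    rw [isBounded_def]
    filter_upwards [hinf.eventually_lt_const (hE.trans_lt hlt)] with w h1 h2
    exact absurd h1 (not_lt.2 h2.2)
  obtain ⟨y, hy, hmax⟩ := (isCompact_of_isClosed_isBounded hK hKb).exists_isMaxOn (f := v)
    ⟨x, hx, le_rfl⟩ fun w hw => (hcont w hw.1).continuousWithinAt
  have hglob : ∀ w ∉ Γ, v w ≤ v y := by
    intro w hw
    rcases le_or_gt (v x) (v w) with h1 | h1
    · exact hmax ⟨hw, h1⟩
    · exact h1.le.trans hy.2
  have hclopen : IsClopen {w | w ∉ Γ ∧ v w = v y} := by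
    constructor
    · rw [← isOpen_compl_iff, isOpen_iff_mem_nhds]
      intro w hw
      by_cases hwΓ : w ∈ Γ
      · filter_upwards [hnear w hwΓ] with w' h1 h2
        have := h1 h2.1
        linarith [h2.2, hy.2]
      · filter_upwards [(hcont w hwΓ).eventually_ne fun h1 => hw ⟨hwΓ, h1⟩] with w' h2 h3
        exact h2 h3.2
    · rw [isOpen_iff_mem_nhds]
      rintro w ⟨hw, hwy⟩
      obtain ⟨F, hF, hFv⟩ := hloc w hw
      have hlm : IsLocalMax (norm ∘ F) w := by
        filter_upwards [hFv, hΓ.isOpen_compl.mem_nhds hw] with w' h1 h2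
        rw [Function.comp_apply, Function.comp_apply, h1, hFv.self_of_nhds, hwy]
        exact hglob w' h2
      filter_upwards [Complex.norm_eventually_eq_of_isLocalMax hF hlm, hFv,
        hΓ.isOpen_compl.mem_nhds hw] with w' h1 h2 h3
      exact ⟨h3, by rw [← h2, h1, hFv.self_of_nhds, hwy]⟩
  obtain ⟨q, hq⟩ := hne
  have huniv := hclopen.eq_univ ⟨y, hy.1, rfl⟩
  exact (huniv ▸ mem_univ q : q ∈ {w | w ∉ Γ ∧ v w = v y}).1 hq

lemma exists_norm_eval_le (P : Polynomial ℂ) {n : ℕ} (hP : P.natDegree ≤ n) :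
    ∃ B, 0 ≤ B ∧ ∀ x : ℂ, 1 ≤ ‖x‖ → ‖P.eval x‖ ≤ B * ‖x‖ ^ n := by
  refine ⟨∑ i ∈ Finset.range (P.natDegree + 1), ‖P.coeff i‖, by positivity, fun x hx => ?_⟩
  rw [Polynomial.eval_eq_sum_range, Finset.sum_mul]
  refine (norm_sum_le _ _).trans (Finset.sum_le_sum fun i hi => ?_)
  rw [norm_mul, norm_pow]
  have := Finset.mem_range.1 hi
  gcongr
  omega

lemma exp_neg_mul_log_sub {M : ℕ} {x C : ℝ} (hx : 0 < x) :
    Real.exp (-(M * (Real.log x - C))) = Real.exp (M * C) * (x⁻¹) ^ M := by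
  rw [show -(M * (Real.log x - C)) = M * C + M * (-Real.log x) by ring, Real.exp_add,
    Real.exp_nat_mul (-Real.log x), Real.exp_neg, Real.exp_log hx]

/-- A Bernstein–Walsh type inequality with polynomially decaying weights. -/
lemma IsExtConformal.norm_eval_le {Γ : Set ℂ} {Φ : ℂ → ℂ} {Λ T : ℝ} {g : ℝ → ℂ}
    (hΦ : IsExtConformal (unboundedComponent Γ) Φ) (h : IsLoop Γ g T) (hq : IsQuasismooth Γ Λ)
    {s : ℝ} (hs : 0 < s) (hsd : 2 * s ≤ diam Γ) {δ : ℝ} (hδ : 0 < δ)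
    (hset : setDist Γ (levelCurve (unboundedComponent Γ) Φ δ) = s) {M n : ℕ} (hM : M ≠ 0)
    {P : Polynomial ℂ} (hP : P.natDegree ≤ n) {z : ℂ} (hz : z ∈ Γ) {D : ℝ}
    (hD : ∀ t ∈ Γ, decay M s z t * ‖P.eval t‖ ≤ D) {K : ℝ} (hK : 0 ≤ K) {k : ℕ}
    (hk : K ≤ (3 / 2) ^ k) {ζ : ℂ} (hζ : ζ ∈ ball z (K * s)) :
    ‖P.eval ζ‖ ≤ Real.exp (M * (24 * Λ + 2)) * (1 + K) ^ M * Real.exp (3 ^ k * δ * n) * D := by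
  classical
  have hΛ := hq.1
  have hD0 : 0 ≤ D := (by have := decay_pos (M := M) hs z z; positivity : (0:ℝ) ≤ _).trans (hD z hz)
  have hζz : dist ζ z < K * s := hζ
  have hgrow : s + dist ζ z ≤ (1 + K) * s := by linarith
  by_cases hζΓ : ζ ∈ Γ
  · have h1 := hD ζ hζΓ
    have h2 := le_decay_of_dist_le (M := M) hs hK (x := z) (y := ζ)
      (by rw [dist_comm]; exact hζz.le)
    have h3 : ‖P.eval ζ‖ ≤ (1 + K) ^ M * D := by
      rw [inv_pow] at h2
      have : ((1 + K) ^ M)⁻¹ * ‖P.eval ζ‖ ≤ D :=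
        (mul_le_mul_of_nonneg_right h2 (norm_nonneg _)).trans h1
      rwa [inv_mul_le_iff₀ (by positivity)] at this
    refine h3.trans ?_
    gcongr
    calc (1 + K) ^ M = 1 * (1 + K) ^ M * 1 := by ring
      _ ≤ _ := by
        gcongr
        · exact Real.one_le_exp (by positivity)
        · exact Real.one_le_exp (by positivity)
  set C : ℝ := 24 * Λ + 2 with hC
  set m : Measure ℂ := μH[1].restrict (Γ ∩ ball z s) with hmdef
  have hmeas : MeasurableSet (Γ ∩ ball z s) := h.isCompact.measurableSet.inter measurableSet_ball
  have hfin : IsFiniteMeasure m :=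
    ⟨by rw [hmdef, Measure.restrict_apply_univ]
        exact (measure_mono inter_subset_left).trans_lt (h.length_lt_top hq)⟩
  have hm : ∀ x r, m (ball x r) ≤ (4 * Λ).toNNReal * ENNReal.ofReal r := by
    intro x r
    rw [hmdef, Measure.restrict_apply measurableSet_ball]
    refine (measure_mono ?_).trans ((h.measure_ball_le hq x r).trans_eq ?_)
    · exact fun w hw => ⟨hw.2.1, hw.1⟩
    · rw [ENNReal.ofReal_mul (by positivity)]
      rfl
  have hmΓ : ∀ᵐ y ∂m, y ∈ Γ ∩ ball z s := ae_restrict_mem hmeas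
  have hms : ∀ᵐ y ∂m, dist y z ≤ s := by
    filter_upwards [hmΓ] with y hy using (mem_ball.1 hy.2).le
  have hmass : s ≤ m.real univ := by
    rw [Measure.real, hmdef, Measure.restrict_apply_univ,
      ← ENNReal.ofReal_le_iff_le_toReal
        ((measure_mono inter_subset_left).trans_lt (h.length_lt_top hq)).ne]
    exact h.le_measure_ball hz hsd
  have hUb := logPotential_bounds hm hs hms hmass
  have hCa : (6 : ℝ) * ((4 * Λ).toNNReal : ℝ≥0) + 2 = C := by
    rw [Real.coe_toNNReal _ (by positivity), hC]
    ring
  rw [hCa] at hUb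
  set U := logPotential m with hU
  set G : ℂ → ℂ := fun w => if w ∈ unboundedComponent Γ then Φ w else 1 with hG
  have hG1 : ∀ w, 1 ≤ ‖G w‖ := by
    intro w
    rw [hG]
    beta_reduce
    split_ifs with hw
    · exact (hΦ.one_lt_norm hw).le
    · simp
  set u : ℂ → ℝ := fun w => ‖P.eval w‖ * Real.exp (-(M * (Real.log (s + dist w z) - C))) with hu
  set v : ℂ → ℝ := fun w => ‖P.eval w‖ * Real.exp (-(M * U w)) * (‖G w‖ ^ n)⁻¹ with hv
  have hpos : ∀ w, 0 < s + dist w z := fun w => by positivity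
  have hvu' : ∀ w, v w ≤ u w * (‖G w‖ ^ n)⁻¹ := by
    intro w
    rw [hv, hu]
    beta_reduce
    gcongr
    exact (hUb w).2
  have hvu : ∀ w, v w ≤ u w := fun w => by
    refine (hvu' w).trans (mul_le_of_le_one_right (by rw [hu]; positivity) ?_)
    exact inv_le_one_of_one_le₀ (one_le_pow₀ (hG1 w))
  have hucont : Continuous u := by
    rw [hu]
    refine P.continuous.norm.mul (Real.continuous_exp.comp ?_)
    have : Continuous fun w => Real.log (s + dist w z) :=
      Continuous.log (by fun_prop) fun w => (hpos w).ne'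
    fun_prop
  have huform : ∀ w, u w = ‖P.eval w‖ * (Real.exp (M * C) * (s + dist w z)⁻¹ ^ M) := fun w => by
    rw [hu]
    beta_reduce
    rw [exp_neg_mul_log_sub (hpos w)]
  have huE : ∀ w ∈ Γ, u w ≤ (s⁻¹) ^ M * Real.exp (M * C) * D := by
    intro w hw
    have h1 := hD w hw
    rw [huform]
    calc _ = (s⁻¹) ^ M * Real.exp (M * C) * (decay M s z w * ‖P.eval w‖) := by
          rw [decay, dist_comm z w, div_eq_mul_inv, mul_pow, inv_pow s]
          field_simp
      _ ≤ _ := by gcongr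
  have hE : 0 ≤ (s⁻¹) ^ M * Real.exp (M * C) * D := by positivity
  have hloc : ∀ x ∉ Γ, ∃ F : ℂ → ℂ, (∀ᶠ w in 𝓝 x, DifferentiableAt ℂ F w) ∧
      ∀ᶠ w in 𝓝 x, ‖F w‖ = v w := by
    intro x hx
    obtain ⟨r, hr, hball⟩ := Metric.isOpen_iff.1 h.isCompact.isClosed.isOpen_compl x hx
    obtain ⟨F, hF⟩ := exists_differentiableAt_re_eq_logPotential hm hs hms (x := x) hr (by
      filter_upwards [hmΓ] with y hy
      by_contra! hcon
      rw [dist_comm] at hcon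
      exact hball hcon hy.1)
    have hGd : ∀ᶠ w in 𝓝 x, DifferentiableAt ℂ G w := by
      have hΩ := isOpen_unboundedComponent h.isCompact.isClosed
      by_cases hxΩ : x ∈ unboundedComponent Γ
      · filter_upwards [hΩ.mem_nhds hxΩ] with w hw
        refine (hΦ.1.differentiableAt (hΩ.mem_nhds hw)).congr_of_eventuallyEq ?_
        filter_upwards [hΩ.mem_nhds hw] with w' hw'
        exact if_pos hw'
      · have hO := isOpen_compl_union_unboundedComponent h.isCompact.isClosed
        have hxO : x ∈ (Γ ∪ unboundedComponent Γ)ᶜ := fun hcon => hcon.elim hx hxΩ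
        filter_upwards [hO.mem_nhds hxO] with w hw
        refine (differentiableAt_const (1:ℂ)).congr_of_eventuallyEq ?_
        filter_upwards [hO.mem_nhds hw] with w' hw'
        exact if_neg fun hcon => hw' (Or.inr hcon)
    refine ⟨fun w => P.eval w * Complex.exp (-(M * F w)) * (G w ^ n)⁻¹, ?_, ?_⟩
    · filter_upwards [hGd, isOpen_ball.mem_nhds (mem_ball_self (half_pos hr))] with w h1 h2
      have h3 := (hF w h2).1
      have h4 : G w ^ n ≠ 0 := pow_ne_zero _ (norm_pos_iff.1 (one_pos.trans_le (hG1 w)))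
      exact (P.differentiableAt.mul ((h3.const_mul _).neg.cexp)).mul ((h1.pow n).inv h4)
    · filter_upwards [isOpen_ball.mem_nhds (mem_ball_self (half_pos hr))] with w h2
      rw [norm_mul, norm_mul, norm_inv, norm_pow, Complex.norm_exp, hv]
      beta_reduce
      rw [Complex.neg_re, ← Complex.ofReal_natCast, Complex.re_ofReal_mul, (hF w h2).2]
  have hinf : Tendsto v (cobounded ℂ) (𝓝 0) := by
    obtain ⟨R, hR, hΓR⟩ := h.isCompact.isBounded.subset_closedBall_lt 0 0
    obtain ⟨B, hB, hPB⟩ := exists_norm_eval_le P hP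
    obtain ⟨c, hc, hlim⟩ := hΦ.2.2
    have h1 : ∀ᶠ w in cobounded ℂ, c / 2 < ‖Φ w / w‖ := by
      refine hlim.norm.eventually_const_lt ?_
      rw [Complex.norm_real, Real.norm_eq_abs, abs_of_pos hc]
      linarith
    have h0 : Tendsto (fun w : ℂ => B * (2 / c) ^ n * (Real.exp (M * C) * (s + dist w z)⁻¹ ^ M))
        (cobounded ℂ) (𝓝 0) := by
      have ht : Tendsto (fun w : ℂ => (s + dist w z)⁻¹) (cobounded ℂ) (𝓝 0) :=
        tendsto_inv_atTop_zero.comp (tendsto_atTop_add_const_left _ s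
          (tendsto_dist_right_cobounded_atTop z))
      have := (((ht.pow M).const_mul (Real.exp (M * C))).const_mul (B * (2 / c) ^ n))
      simpa [hM] using this
    refine squeeze_zero' (Eventually.of_forall fun w => by rw [hv]; positivity) ?_ h0
    filter_upwards [h1, tendsto_norm_cobounded_atTop.eventually_gt_atTop R,
      tendsto_norm_cobounded_atTop.eventually_gt_atTop 1] with w h2 h3 h4
    have hwΩ := mem_unboundedComponent_of_lt_norm hR hΓR h3
    have hGw : G w = Φ w := if_pos hwΩ
    have hw0 : 0 < ‖w‖ := by linarith
    rw [norm_div, lt_div_iff₀ hw0] at h2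
    refine (hvu' w).trans ?_
    rw [huform, hGw, mul_right_comm]
    refine mul_le_mul_of_nonneg_right ?_ (by positivity)
    rw [← div_eq_mul_inv, div_le_iff₀ (pow_pos (one_pos.trans (hΦ.one_lt_norm hwΩ)) n)]
    calc ‖P.eval w‖ ≤ B * ‖w‖ ^ n := hPB w h4.le
      _ = B * (2 / c) ^ n * (c / 2 * ‖w‖) ^ n := by
        rw [mul_pow, mul_assoc, ← mul_assoc ((2 / c) ^ n), ← mul_pow,
          show 2 / c * (c / 2) = 1 by field_simp, one_pow, one_mul]
      _ ≤ _ := by gcongr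
  have hmain := le_of_locally_eq_norm ⟨z, hz⟩ hE h.isCompact.isClosed hloc hucont
    (fun w _ => hvu w) huE hinf hζΓ
  have hGζ : ‖G ζ‖ ^ n ≤ Real.exp (3 ^ k * δ * n) := by
    rw [hG]
    beta_reduce
    split_ifs with hw
    · have h1 := hΦ.norm_le_pow_of_infDist_lt h.isCompact ⟨z, hz⟩ hδ k hw (by
        rw [hset]
        exact (infDist_le_dist_of_mem hz).trans_lt (hζz.trans_le (by gcongr)))
      calc ‖Φ ζ‖ ^ n ≤ ((1 + δ) ^ 3 ^ k) ^ n := by gcongr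
        _ ≤ ((Real.exp δ) ^ 3 ^ k) ^ n := by
          gcongr
          linarith [Real.add_one_le_exp δ]
        _ = _ := by
          rw [← Real.exp_nat_mul, ← Real.exp_nat_mul]
          push_cast
          ring_nf
    · rw [norm_one, one_pow]
      exact Real.one_le_exp (by positivity)
  have hexpU : Real.exp (M * U ζ) ≤ ((1 + K) * s) ^ M := by
    rw [Real.exp_nat_mul]
    gcongr
    calc Real.exp (U ζ) ≤ Real.exp (Real.log (s + dist ζ z)) := by
          gcongr
          exact (hUb ζ).1
      _ = s + dist ζ z := Real.exp_log (hpos ζ)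
      _ ≤ _ := hgrow
  have hGpos : 0 < ‖G ζ‖ ^ n := pow_pos (one_pos.trans_le (hG1 ζ)) n
  have hPv : ‖P.eval ζ‖ = v ζ * Real.exp (M * U ζ) * ‖G ζ‖ ^ n := by
    rw [hv]
    beta_reduce
    rw [Real.exp_neg]
    field_simp
  rw [hPv]
  calc v ζ * Real.exp (M * U ζ) * ‖G ζ‖ ^ n
      ≤ (s⁻¹ ^ M * Real.exp (M * C) * D) * ((1 + K) * s) ^ M * Real.exp (3 ^ k * δ * n) := by
        gcongr
    _ = _ := by
        rw [mul_pow, inv_pow]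
        field_simp

section

open Polynomial

lemma norm_eval_prod_X_sub_C (S : Multiset ℂ) (w : ℂ) :
    ‖((S.map fun x => X - C x).prod).eval w‖ = (S.map fun x => dist w x).prod := by
  induction S using Multiset.induction_on with
  | empty => simp
  | cons x S ih => simp [ih, dist_eq_norm]

/-- A polynomial that does not grow much on a disk is bounded below by a product over few of its
zeros. -/
lemma exists_multiset_prod_le_norm_eval {P : ℂ[X]} {z : ℂ} {R B : ℝ} (hR : 0 < R) (hB : 1 < B)
    (hPz : P.eval z ≠ 0) (hP : ∀ w, dist w z ≤ R → ‖P.eval w‖ ≤ B * ‖P.eval z‖) :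
    ∃ S : Multiset ℂ, (S.card : ℝ) ≤ Real.log B ∧ ∀ w, dist w z ≤ R / 8 →
      (B ^ 2)⁻¹ * ‖P.eval z‖ * (S.map fun x => dist w x / (R / 4)).prod ≤ ‖P.eval w‖ := by
  classical
  set S := P.roots.filter fun x => x ∈ ball z (R / 4) with hS
  set S' := P.roots.filter fun x => x ∉ ball z (R / 4) with hS'
  set h : ℂ[X] := C P.leadingCoeff * (S'.map fun x => X - C x).prod with hh
  have hSb : ∀ x ∈ S, dist z x ≤ R / 4 := by
    intro x hx
    rw [dist_comm]
    exact (mem_ball.1 (Multiset.mem_filter.1 hx).2).le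
  have hfac : P = h * (S.map fun x => X - C x).prod := by
    conv_lhs => rw [(IsAlgClosed.splits P).eq_prod_roots,
      ← Multiset.filter_add_not (fun x => x ∈ ball z (R / 4)) P.roots, Multiset.map_add,
      Multiset.prod_add]
    rw [hh]
    ring
  have hnorm : ∀ w, ‖P.eval w‖ = ‖h.eval w‖ * (S.map fun x => dist w x).prod := fun w => by
    conv_lhs => rw [hfac, eval_mul, norm_mul, norm_eval_prod_X_sub_C]
  have hlead : P.leadingCoeff ≠ 0 := leadingCoeff_ne_zero.2 fun h0 => hPz (by simp [h0])
  have hh0 : ∀ w ∈ ball z (R / 4), h.eval w ≠ 0 := by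
    intro w hw h0
    rw [← norm_eq_zero, hh, eval_mul, eval_C, norm_mul, norm_eval_prod_X_sub_C, mul_eq_zero,
      norm_eq_zero, or_iff_right hlead, Multiset.prod_eq_zero_iff, Multiset.mem_map] at h0
    obtain ⟨x, hx, hwx⟩ := h0
    rw [dist_eq_zero] at hwx
    exact (Multiset.mem_filter.1 hx).2 (hwx ▸ hw)
  have hz : z ∈ ball z (R / 4) := mem_ball_self (by positivity)
  have hhz : 0 < ‖h.eval z‖ := norm_pos_iff.2 (hh0 z hz)
  have hprodz : (S.map fun x => dist z x).prod ≤ (R / 4) ^ S.card := by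
    refine (Multiset.prod_map_le_prod_map₀ _ (fun _ => R / 4) (fun _ _ => dist_nonneg) hSb).trans_eq
      ?_
    rw [Multiset.map_const', Multiset.prod_replicate]
  have hPzle : ‖P.eval z‖ ≤ ‖h.eval z‖ * (R / 4) ^ S.card := by
    rw [hnorm]
    gcongr
  have hbound : ∀ w ∈ closure (ball z R),
      ‖h.eval w‖ ≤ B * ‖h.eval z‖ * ((3 : ℝ) ^ S.card)⁻¹ := by
    intro w hw
    refine Complex.norm_le_of_forall_mem_frontier_norm_le isBounded_ball
      h.differentiable.diffContOnCl (fun v hv => ?_) hw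
    rw [frontier_ball z hR.ne', mem_sphere] at hv
    have h1 : (3 * (R / 4)) ^ S.card ≤ (S.map fun x => dist v x).prod := by
      refine (Multiset.prod_map_le_prod_map₀ (fun _ => 3 * (R / 4)) _ (fun _ _ => by positivity)
        fun x hx => ?_).trans_eq' ?_
      · have := hSb x hx
        linarith [dist_triangle_right v z x, dist_comm z x]
      · rw [Multiset.map_const', Multiset.prod_replicate]
    have h2 : ‖h.eval v‖ * (3 * (R / 4)) ^ S.card ≤ B * (‖h.eval z‖ * (R / 4) ^ S.card) :=
      calc ‖h.eval v‖ * (3 * (R / 4)) ^ S.card ≤ ‖P.eval v‖ := by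
            rw [hnorm]
            gcongr
        _ ≤ B * ‖P.eval z‖ := hP v hv.le
        _ ≤ _ := by gcongr
    rw [← div_eq_mul_inv, le_div_iff₀ (by positivity)]
    rw [mul_pow] at h2
    have h3 : 0 < (R / 4) ^ S.card := by positivity
    nlinarith
  have hcard : (3 : ℝ) ^ S.card ≤ B := by
    have h1 := hbound z (subset_closure (mem_ball_self hR))
    rw [← div_eq_mul_inv, le_div_iff₀ (by positivity)] at h1
    nlinarith
  refine ⟨S, ?_, fun w hw => ?_⟩
  · rw [Real.le_log_iff_exp_le (by linarith), ← mul_one (S.card : ℝ), Real.exp_nat_mul]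
    refine le_trans ?_ hcard
    gcongr
    linarith [Real.exp_one_lt_d9]
  have hlow : (B ^ 2)⁻¹ * ‖h.eval z‖ ≤ ‖h.eval w‖ := by
    have h0 : 0 < B * ‖h.eval z‖ := by positivity
    have h1 := norm_pow_three_le_of_ne_zero (f := fun v => h.eval v / (B * ‖h.eval z‖ : ℝ))
      (c := z) (w := w) (r := R / 4) (h.differentiable.div_const _).differentiableOn
      (fun v hv => div_ne_zero (hh0 v hv) (Complex.ofReal_ne_zero.2 h0.ne')) (fun v hv => by
        rw [norm_div, Complex.norm_real, Real.norm_eq_abs, abs_of_pos h0, div_le_one h0]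
        refine (hbound v (subset_closure (ball_subset_ball (by linarith) hv))).trans ?_
        exact mul_le_of_le_one_right h0.le (inv_le_one_of_one_le₀ (one_le_pow₀ (by norm_num))))
      (by positivity) (by linarith)
    rw [norm_div, norm_div, Complex.norm_real, Real.norm_eq_abs, abs_of_pos h0,
      le_div_iff₀ h0] at h1
    refine le_trans (le_of_eq ?_) h1
    field_simp
  rw [hnorm w]
  have hprod : (S.map fun x => dist w x / (R / 4)).prod * (R / 4) ^ S.card =
      (S.map fun x => dist w x).prod := by
    rw [← Multiset.prod_replicate, ← Multiset.map_const', ← Multiset.prod_map_mul]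
    congr 1
    refine Multiset.map_congr rfl fun x _ => ?_
    field_simp
  have hpn : 0 ≤ (S.map fun x => dist w x / (R / 4)).prod :=
    Multiset.prod_map_nonneg fun _ _ => by positivity
  calc (B ^ 2)⁻¹ * ‖P.eval z‖ * (S.map fun x => dist w x / (R / 4)).prod
      ≤ (B ^ 2)⁻¹ * (‖h.eval z‖ * (R / 4) ^ S.card) * (S.map fun x => dist w x / (R / 4)).prod := by
        gcongr
    _ = (B ^ 2)⁻¹ * ‖h.eval z‖ * (S.map fun x => dist w x).prod := by
        rw [← hprod]
        ring
    _ ≤ _ := by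
        gcongr
        exact Multiset.prod_map_nonneg fun _ _ => dist_nonneg

variable {m : Measure ℂ} {a : ℝ≥0}

lemma measurable_multiset_sum_log (S : Multiset ℂ) (r : ℝ) : Measurable fun w =>
    (S.map fun x => ENNReal.ofReal (Real.log (r / dist w x))).sum := by
  induction S using Multiset.induction_on with
  | empty => simp
  | cons x S ih =>
    simp only [Multiset.map_cons, Multiset.sum_cons]
    exact Measurable.add (by fun_prop) ih

lemma lintegral_multiset_sum_log_le (hm : ∀ x r, m (ball x r) ≤ a * ENNReal.ofReal r) {r : ℝ}
    (hr : 0 < r) (S : Multiset ℂ) :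
    ∫⁻ w, (S.map fun x => ENNReal.ofReal (Real.log (r / dist w x))).sum ∂m ≤
      S.card * (2 * a * ENNReal.ofReal r) := by
  induction S using Multiset.induction_on with
  | empty => simp
  | cons x S ih =>
    simp only [Multiset.map_cons, Multiset.sum_cons, Multiset.card_cons]
    rw [lintegral_add_left (by fun_prop), Nat.cast_add, Nat.cast_one, add_mul, one_mul, add_comm]
    exact add_le_add ih (lintegral_log_div_le hm hr x)

lemma ae_log_prod_le (hm : ∀ x r, m (ball x r) ≤ a * ENNReal.ofReal r) {r : ℝ} (hr : 0 < r)
    (S : Multiset ℂ) : ∀ᵐ w ∂m, 0 < (S.map fun x => dist w x / r).prod ∧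
      ENNReal.ofReal (-Real.log (S.map fun x => dist w x / r).prod) ≤
        (S.map fun x => ENNReal.ofReal (Real.log (r / dist w x))).sum := by
  induction S using Multiset.induction_on with
  | empty => simp
  | cons x S ih =>
    filter_upwards [ih, ae_ne_of_measure_ball_le hm x] with w h1 h2
    simp only [Multiset.map_cons, Multiset.sum_cons, Multiset.prod_cons]
    have h3 : 0 < dist w x / r := div_pos (dist_pos.2 h2) hr
    refine ⟨mul_pos h3 h1.1, ?_⟩
    rw [Real.log_mul h3.ne' h1.1.ne', neg_add, ← Real.log_inv, inv_div]
    exact ENNReal.ofReal_add_le.trans (by gcongr; exact h1.2)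

/-- A local Remez type inequality. -/
lemma measure_norm_eval_lt_le (hm : ∀ x r, m (ball x r) ≤ a * ENNReal.ofReal r)
    {P : ℂ[X]} {z : ℂ} {R B : ℝ} (hR : 0 < R) (hB : 1 < B)
    (hPz : P.eval z ≠ 0) (hP : ∀ w, dist w z ≤ R → ‖P.eval w‖ ≤ B * ‖P.eval z‖) (l : ℕ) :
    l * m {w | dist w z ≤ R / 8 ∧ ‖P.eval w‖ < (B ^ (l + 2))⁻¹ * ‖P.eval z‖} ≤
      a * ENNReal.ofReal R := by
  obtain ⟨S, hcard, hS⟩ := exists_multiset_prod_le_norm_eval hR hB hPz hP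
  have hlogB : 0 < Real.log B := Real.log_pos hB
  have hPz' : 0 < ‖P.eval z‖ := norm_pos_iff.2 hPz
  have hB0 : 0 < B := by linarith
  set f : ℂ → ℝ≥0∞ := fun w =>
    (S.map fun x => ENNReal.ofReal (Real.log (R / 4 / dist w x))).sum with hf
  set Bad := {w | dist w z ≤ R / 8 ∧ ‖P.eval w‖ < (B ^ (l + 2))⁻¹ * ‖P.eval z‖} with hBad
  have hle : m Bad ≤ m {w | ENNReal.ofReal (l * Real.log B) ≤ f w} := by
    refine measure_mono_ae ?_
    filter_upwards [ae_log_prod_le hm (r := R / 4) (by positivity) S] with w hw hwB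
    refine le_trans (ENNReal.ofReal_le_ofReal ?_) hw.2
    have h1 := (hS w hwB.1).trans_lt hwB.2
    have h2 : (S.map fun x => dist w x / (R / 4)).prod ≤ (B ^ l)⁻¹ := by
      rw [pow_add, mul_inv] at h1
      have h3 : 0 < (B ^ 2)⁻¹ * ‖P.eval z‖ := by positivity
      nlinarith
    have h3 := Real.log_le_log hw.1 h2
    rw [Real.log_inv, Real.log_pow] at h3
    linarith
  have hmk : ENNReal.ofReal (l * Real.log B) * m Bad ≤
      ENNReal.ofReal (Real.log B) * (a * ENNReal.ofReal R) := by
    calc ENNReal.ofReal (l * Real.log B) * m Bad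
        ≤ ENNReal.ofReal (l * Real.log B) * m {w | ENNReal.ofReal (l * Real.log B) ≤ f w} := by
          gcongr
      _ ≤ ∫⁻ w, f w ∂m := mul_meas_ge_le_lintegral (measurable_multiset_sum_log S (R / 4)) _
      _ ≤ S.card * (2 * a * ENNReal.ofReal (R / 4)) :=
          lintegral_multiset_sum_log_le hm (by positivity) S
      _ ≤ ENNReal.ofReal (Real.log B) * (a * ENNReal.ofReal R) := by
          refine mul_le_mul' ?_ ?_
          · rw [← ENNReal.ofReal_natCast]
            exact ENNReal.ofReal_le_ofReal hcard
          · rw [mul_comm 2, mul_assoc]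
            refine mul_le_mul' le_rfl ?_
            rw [← ENNReal.ofReal_ofNat 2, ← ENNReal.ofReal_mul (by norm_num)]
            exact ENNReal.ofReal_le_ofReal (by linarith)
  rw [ENNReal.ofReal_mul (by positivity), ENNReal.ofReal_natCast, mul_comm (l : ℝ≥0∞),
    mul_assoc] at hmk
  exact (ENNReal.mul_le_mul_iff_right (by simpa using hlogB) ENNReal.ofReal_ne_top).1 hmk

end

namespace IsLoop

variable {Γ : Set ℂ} {Λ T : ℝ} {g : ℝ → ℂ}

/-- Every value of a polynomial on `Γ` is controlled by its values on most of a nearby arc. -/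
lemma exists_norm_eval_le_decay_mul {Φ : ℂ → ℂ} (h : IsLoop Γ g T) (hq : IsQuasismooth Γ Λ)
    (hΦ : IsExtConformal (unboundedComponent Γ) Φ) {M : ℕ} (hM : M ≠ 0) :
    ∃ C > (0:ℝ), ∃ c > (0:ℝ), ∀ (n : ℕ) (P : Polynomial ℂ) (s δ : ℝ), P.natDegree ≤ n → 0 < s →
      2 * s ≤ diam Γ → 0 < δ → setDist Γ (levelCurve (unboundedComponent Γ) Φ δ) = s →
      ∀ ζ ∈ Γ, ∃ z ∈ Γ, ‖P.eval ζ‖ ≤ decay M s ζ z * ‖P.eval z‖ ∧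
        μH[1] (Γ ∩ {w | dist w z ≤ 8 * Λ * s ∧
          ‖P.eval w‖ < (C * Real.exp (c * δ * n))⁻¹ * ‖P.eval z‖}) ≤ ENNReal.ofReal (s / 8) := by
  have hΛ := hq.1
  obtain ⟨κ, hκ⟩ := pow_unbounded_of_one_lt (65 * Λ) (by norm_num : (1:ℝ) < 3 / 2)
  obtain ⟨B₀, hB₀⟩ : ∃ B₀ : ℝ, B₀ = Real.exp (M * (24 * Λ + 2)) * (1 + 65 * Λ) ^ M := ⟨_, rfl⟩
  have hB₀pos : 0 < B₀ := by
    rw [hB₀]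
    positivity
  set l : ℕ := ⌈2048 * Λ ^ 2⌉₊ with hl
  refine ⟨B₀ ^ (l + 2), by positivity, 3 ^ κ * (l + 2 : ℕ), by positivity,
    fun n P s δ hP hs hsd hδ hset ζ hζ => ?_⟩
  obtain ⟨B, hB⟩ : ∃ B : ℝ, B = B₀ * Real.exp (3 ^ κ * δ * n) := ⟨_, rfl⟩
  have hBpow : B₀ ^ (l + 2) * Real.exp (3 ^ κ * (l + 2 : ℕ) * δ * n) = B ^ (l + 2) := by
    rw [hB, mul_pow _ _ (l + 2), ← Real.exp_nat_mul]
    congr 2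
    ring
  have hB1 : 1 < B := by
    have h1 : 1 < Real.exp (M * (24 * Λ + 2)) := Real.one_lt_exp_iff.2 (by positivity)
    have h2 : (1:ℝ) ≤ (1 + 65 * Λ) ^ M := one_le_pow₀ (by linarith)
    have h3 : 1 ≤ Real.exp (3 ^ κ * δ * n) := Real.one_le_exp (by positivity)
    rw [hB, hB₀]
    exact one_lt_mul_of_lt_of_le (one_lt_mul_of_lt_of_le h1 h2) h3
  obtain ⟨z, hz, hmax⟩ := h.isCompact.exists_isMaxOn ⟨ζ, hζ⟩
    (f := fun w => decay M s ζ w * ‖P.eval w‖) (by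
      refine Continuous.continuousOn (.mul ?_ P.continuous.norm)
      exact (continuous_decay_left hs ζ).congr fun x => decay_comm x ζ)
  refine ⟨z, hz, by simpa [decay_self hs] using hmax hζ, ?_⟩
  rw [hBpow]
  by_cases hPz : P.eval z = 0
  · have : Γ ∩ {w | dist w z ≤ 8 * Λ * s ∧
        ‖P.eval w‖ < (B ^ (l + 2))⁻¹ * ‖P.eval z‖} = (∅ : Set ℂ) := by
      refine eq_empty_of_forall_notMem fun w hw => ?_
      have hw2 := hw.2.2
      rw [hPz, norm_zero, mul_zero] at hw2
      exact (norm_nonneg _).not_gt hw2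
    rw [this, measure_empty]
    exact zero_le
  have hdec : ∀ t ∈ Γ, decay M s z t * ‖P.eval t‖ ≤ ‖P.eval z‖ := by
    intro t ht
    have h1 : decay M s ζ t * ‖P.eval t‖ ≤ decay M s ζ z * ‖P.eval z‖ := hmax ht
    have h2 := decay_mul_le (M := M) hs ζ z t
    refine le_of_mul_le_mul_left ?_ (decay_pos (M := M) hs ζ z)
    refine le_trans ?_ h1
    rw [← mul_assoc]
    gcongr
  have hgrow : ∀ w, dist w z ≤ 64 * Λ * s → ‖P.eval w‖ ≤ B * ‖P.eval z‖ := fun w hw => by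
    rw [hB, hB₀]
    exact hΦ.norm_eval_le h hq hs hsd hδ hset hM hP hz hdec (by positivity) hκ.le (by
      rw [mem_ball]
      nlinarith)
  have hm : ∀ x r, (μH[1].restrict Γ) (ball x r) ≤ (4 * Λ).toNNReal * ENNReal.ofReal r := by
    intro x r
    rw [Measure.restrict_apply measurableSet_ball, inter_comm]
    refine (h.measure_ball_le hq x r).trans_eq ?_
    rw [ENNReal.ofReal_mul (by positivity)]
    rfl
  have hrem := measure_norm_eval_lt_le hm (R := 64 * Λ * s) (by positivity) hB1 hPz hgrow l
  rw [show 64 * Λ * s / 8 = 8 * Λ * s by ring, Measure.restrict_apply' h.isCompact.measurableSet,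
    inter_comm] at hrem
  have h1 : ENNReal.ofReal (2048 * Λ ^ 2) ≤ l := by
    rw [← ENNReal.ofReal_natCast]
    exact ENNReal.ofReal_le_ofReal (Nat.le_ceil _)
  have h2 : ((4 * Λ).toNNReal : ℝ≥0∞) * ENNReal.ofReal (64 * Λ * s) =
      ENNReal.ofReal (2048 * Λ ^ 2) * ENNReal.ofReal (s / 8) := by
    rw [← ENNReal.ofReal_mul (by positivity)]
    change ENNReal.ofReal (4 * Λ) * _ = _
    rw [← ENNReal.ofReal_mul (by positivity)]
    congr 1
    ring
  rw [h2] at hrem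
  exact (ENNReal.mul_le_mul_iff_right (ENNReal.ofReal_pos.2 (by positivity)).ne'
    ENNReal.ofReal_ne_top).1 ((mul_le_mul' h1 le_rfl).trans hrem)

end IsLoop

lemma measurable_decay_left {M : ℕ} {s : ℝ} :
    Measurable fun q : ℂ × ℂ => ENNReal.ofReal (decay M s q.1 q.2) := by
  unfold decay
  fun_prop

/-- Schur's test for a kernel of the form `K t * D x t`. -/
lemma lintegral_mul_le_of_le_kernel {m : Measure ℂ} [SFinite m] {Γ A : Set ℂ}
    (hm : ∀ᵐ y ∂m, y ∈ Γ) {f u V : ℂ → ℝ≥0∞} {D : ℂ → ℂ → ℝ≥0∞} (hf : Measurable f)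
    (hu : Measurable u) (hV : Measurable V) (hD : Measurable (Function.uncurry D))
    {K C : ℝ≥0∞} (hC : C ≠ ∞) (hK : ∀ t ∈ Γ, ∫⁻ x, D x t * u x ∂m ≤ K * V t)
    (hle : ∀ x ∈ Γ, f x ≤ C * ∫⁻ t in A, f t * u t * (V t)⁻¹ * D x t ∂m) :
    ∫⁻ x, f x * u x ∂m ≤ C * K * ∫⁻ t in A, f t * u t ∂m := by
  set F : ℂ → ℝ≥0∞ := fun t => f t * u t * (V t)⁻¹ with hF
  have hFm : Measurable F := (hf.mul hu).mul hV.inv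
  have hd : ∀ t, Measurable fun x => D x t := fun t =>
    hD.comp (measurable_id.prodMk measurable_const)
  have hd' : ∀ x, Measurable fun t => D x t := fun x =>
    hD.comp (measurable_const.prodMk measurable_id)
  calc ∫⁻ x, f x * u x ∂m
      ≤ ∫⁻ x, C * ∫⁻ t in A, F t * D x t * u x ∂m ∂m := by
        refine lintegral_mono_ae ?_
        filter_upwards [hm] with x hx
        have h1 : Measurable fun t => F t * D x t := hFm.mul (hd' x)
        rw [lintegral_mul_const _ h1, ← mul_assoc]
        gcongr
        exact hle x hx
    _ = C * ∫⁻ t in A, ∫⁻ x, F t * D x t * u x ∂m ∂m := by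
        rw [lintegral_const_mul' _ _ hC, lintegral_lintegral_swap]
        exact (((hFm.comp measurable_snd).mul hD).mul (hu.comp measurable_fst)).aemeasurable
    _ ≤ C * ∫⁻ t in A, K * (f t * u t) ∂m := by
        gcongr 1
        refine lintegral_mono_ae ?_
        filter_upwards [ae_restrict_of_ae hm] with t ht
        have h1 : Measurable fun x => D x t * u x := (hd t).mul hu
        simp_rw [mul_assoc (F t)]
        rw [lintegral_const_mul _ h1]
        calc F t * ∫⁻ x, D x t * u x ∂m
            ≤ F t * (K * V t) := by
              gcongr
              exact hK t ht
          _ = K * (f t * u t) * ((V t)⁻¹ * V t) := by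
              rw [hF]
              ring
          _ ≤ _ := mul_le_of_le_one_right zero_le (ENNReal.inv_mul_le_one _)
    _ = _ := by
        have h1 : Measurable fun t => f t * u t := hf.mul hu
        rw [lintegral_const_mul _ h1, mul_assoc]

namespace IsRegularPair

variable {Γ : Set ℂ} {m N : Measure ℂ} {ρ : ℂ → ℝ} {a b : ℝ≥0}

lemma measurable_meanVolume (h : IsRegularPair Γ m N ρ a b) (s : ℝ) :
    Measurable fun z => meanVolume N ρ z s := by
  have := h.finite_right
  have h1 := h.continuous.measurable
  exact (Measurable.ennreal_ofReal (by fun_prop)).mul (measurable_measure_ball (by fun_prop))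

lemma meanVolume_ne_zero (h : IsRegularPair Γ m N ρ a b) (hΓ : Bornology.IsBounded Γ) (hN : N ≠ 0)
    {z : ℂ} (hz : z ∈ Γ) {s : ℝ} (hs : 0 < s) : meanVolume N ρ z s ≠ 0 := by
  have hr : 0 < max s (ρ z) := lt_max_of_lt_left hs
  refine mul_ne_zero (ENNReal.ofReal_pos.2 (by positivity)).ne' fun h0 => hN ?_
  obtain ⟨j, hj⟩ := pow_unbounded_of_one_lt ((diam Γ + 1) / max s (ρ z)) one_lt_two
  rw [div_lt_iff₀ hr] at hj
  have h1 := h.measure_ball_le_pow hz j hj.le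
  rw [h0, mul_zero, nonpos_iff_eq_zero] at h1
  refine Measure.measure_univ_eq_zero.1 (measure_mono_null_ae ?_ h1)
  filter_upwards [h.ae_right] with y hy _
  have := dist_le_diam_of_mem hΓ hy hz
  exact mem_ball.2 (by linarith)

lemma meanVolume_ne_top (h : IsRegularPair Γ m N ρ a b) (z : ℂ) (s : ℝ) :
    meanVolume N ρ z s ≠ ∞ :=
  have := h.finite_right
  ENNReal.mul_ne_top ENNReal.ofReal_ne_top (measure_ne_top _ _)

/-- Schur's test for the kernel `decay / meanVolume`. -/
lemma lintegral_le_of_le_kernel (h : IsRegularPair Γ m N ρ a b) {M : ℕ} (hM : 4 * b ≤ 2 ^ M)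
    {s : ℝ} (hs : 0 < s) {A : Set ℂ} {f : ℂ → ℝ≥0∞} (hf : Measurable f)
    {C : ℝ≥0∞} (hC : C ≠ ∞)
    (hle : ∀ x ∈ Γ, f x ≤ C * ∫⁻ t in A, f t * meanDensity N ρ t * (meanVolume N ρ t s)⁻¹ *
      ENNReal.ofReal (decay M s x t) ∂m) :
    ∫⁻ x, f x * meanDensity N ρ x ∂m ≤
      C * (12 * a * b ^ 2 * 2 ^ M : ℝ≥0) * ∫⁻ t in A, f t * meanDensity N ρ t ∂m :=
  have := h.finite_left
  lintegral_mul_le_of_le_kernel (D := fun x t => ENNReal.ofReal (decay M s x t)) h.ae_left hf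
    h.measurable_meanDensity (h.measurable_meanVolume s) measurable_decay_left hC
    (fun _ ht => h.lintegral_decay_mul_meanDensity_le hM hs ht) hle

end IsRegularPair

namespace IsLoop

variable {Γ : Set ℂ} {Λ T : ℝ} {g : ℝ → ℂ}

/-- If each value of `f` is controlled by the values of `f` on most of a nearby arc, then the
weighted `L^p` norm of `f` over `Γ` is controlled by that over a subset of almost full length. -/
lemma exists_lintegral_le (h : IsLoop Γ g T) (hq : IsQuasismooth Γ Λ) (lam : ℝ) {p : ℝ}
    (hp : 1 ≤ p) {k : ℕ} (hk : 16 * Λ ^ 2 + 1 ≤ 2 ^ k) {M : ℕ}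
    (hM : 4 * lam.toNNReal ^ (2 * k + 2) ≤ 2 ^ M) :
    ∃ C : ℝ≥0, ∀ (ν : Measure ℂ) (ρ f : ℂ → ℝ) (E s : ℝ) (A : Set ℂ), IsFiniteMeasure ν →
      IsAInftyMeasure Γ ν lam → (∀ x y, ρ x ≤ ρ y + dist x y) → (∀ z ∈ Γ, 0 < ρ z) →
      Continuous f → (∀ x, 0 ≤ f x) → 0 < E → 0 < s → 4 * s < diam Γ → MeasurableSet A → A ⊆ Γ →
      μH[1] Γ ≤ μH[1] A + ENNReal.ofReal s →
      (∀ ζ ∈ Γ, ∃ z ∈ Γ, f ζ ≤ decay M s ζ z * f z ∧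
        μH[1] (Γ ∩ {w | dist w z ≤ 8 * Λ * s ∧ f w < E⁻¹ * f z}) ≤ ENNReal.ofReal (s / 8)) →
      ∫⁻ x in Γ, ENNReal.ofReal (f x ^ p) * meanDensity (ν.restrict Γ) ρ x ∂μH[1] ≤
        C * ENNReal.ofReal (E ^ p) *
          ∫⁻ x in A, ENNReal.ofReal (f x ^ p) * meanDensity (ν.restrict Γ) ρ x ∂μH[1] := by
  have hΛ := hq.1
  set a : ℝ≥0 := (4 * Λ).toNNReal with ha
  set b : ℝ≥0 := lam.toNNReal ^ (2 * k + 2) with hb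
  have hapos : 0 < a := Real.toNNReal_pos.2 (by positivity)
  obtain ⟨C₂, hC₂⟩ := h.exists_meanVolume_le hq lam a b hapos
  obtain ⟨j, hj⟩ := pow_unbounded_of_one_lt (1 + 2 * (8 * Λ)) one_lt_two
  set c₁ : ℝ := (1 + 8 * Λ) ^ M with hc₁
  set c₂ : ℝ≥0 := (1 + 8 * Λ).toNNReal * b ^ j with hc₂
  refine ⟨C₂ * c₁.toNNReal * c₂ * (12 * a * b ^ 2 * 2 ^ M), fun ν ρ f E s A _ hν hlip hpos hf hf0 hE
    hs hsd hA hAΓ hAs hmain => ?_⟩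
  have hreg := h.isRegularPair hq hν hk hlip hpos
  rw [← ha, ← hb] at hreg
  rcases eq_or_ne (ν.restrict Γ) 0 with hN | hN
  · simp [hN, meanDensity]
  set N := ν.restrict Γ with hNdef
  have hc₂0 : (c₂ : ℝ≥0∞) ≠ 0 := by
    have := hreg.one_le
    have : 0 < c₂ := mul_pos (Real.toNNReal_pos.2 (by positivity)) (by positivity)
    exact_mod_cast this.ne'
  have hpoint : ∀ x ∈ Γ, ENNReal.ofReal (f x ^ p) ≤
      (C₂ * ENNReal.ofReal c₁ * c₂ * ENNReal.ofReal (E ^ p)) *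
      ∫⁻ t in A, ENNReal.ofReal (f t ^ p) * meanDensity N ρ t * (meanVolume N ρ t s)⁻¹ *
        ENNReal.ofReal (decay M s x t) ∂(μH[1].restrict Γ) := by
    intro x hx
    obtain ⟨z, hz, hxz, hbad⟩ := hmain x hx
    obtain ⟨J, w, hJ, hzJ, hwJ, hzw, hJz, hJs⟩ := h.exists_arc_at_scale hq hz hs hsd
    set Bad : Set ℂ := Γ ∩ {w | dist w z ≤ 8 * Λ * s ∧ f w < E⁻¹ * f z} with hBad
    have hBadm : MeasurableSet Bad := by
      refine h.isCompact.measurableSet.inter (MeasurableSet.inter (s₁ := {w | dist w z ≤ 8 * Λ * s})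
        (s₂ := {w | f w < E⁻¹ * f z}) ?_ ?_)
      · exact (isClosed_le (by fun_prop) continuous_const).measurableSet
      · exact (isOpen_lt hf continuous_const).measurableSet
    set S := (A ∩ J) \ Bad with hS
    have hSm : MeasurableSet S := (hA.inter hJ.2.1.measurableSet).diff hBadm
    have hSJ : S ⊆ J := fun t ht => ht.1.2
    have hSA : S ⊆ A := fun t ht => ht.1.1
    have hJS : μH[1] (J \ S) ≤ ENNReal.ofReal (9 / 8 * s) := by
      have h1 : J \ S ⊆ (Γ \ A) ∪ Bad := by
        rintro t ⟨htJ, htS⟩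
        by_cases htA : t ∈ A
        · by_cases htB : t ∈ Bad
          · exact Or.inr htB
          · exact absurd ⟨⟨htA, htJ⟩, htB⟩ htS
        · exact Or.inl ⟨hJ.1 htJ, htA⟩
      have hAtop : μH[1] A ≠ ∞ := ((measure_mono hAΓ).trans_lt (h.length_lt_top hq)).ne
      calc μH[1] (J \ S) ≤ μH[1] (Γ \ A) + μH[1] Bad :=
            (measure_mono h1).trans (measure_union_le _ _)
        _ ≤ ENNReal.ofReal s + ENNReal.ofReal (s / 8) := by
          gcongr
          rw [measure_sdiff hAΓ hA.nullMeasurableSet hAtop]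
          exact tsub_le_iff_left.2 hAs
        _ = ENNReal.ofReal (9 / 8 * s) := by
          rw [← ENNReal.ofReal_add hs.le (by positivity)]
          congr 1
          ring
    have hV := hC₂ ν ρ hν hreg z w s J S hs hsd hJ hzJ hwJ hzw hJz hJs hSm hSJ hJS
    have hV0 := hreg.meanVolume_ne_zero h.isCompact.isBounded hN hz hs
    have hVtop := hreg.meanVolume_ne_top z s
    have hstep : ∀ t ∈ S, ENNReal.ofReal (f x ^ p) ≤ ENNReal.ofReal c₁ * ENNReal.ofReal (E ^ p) *
        (ENNReal.ofReal (f t ^ p) * ENNReal.ofReal (decay M s x t)) := by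
      intro t ht
      have htz := hJz t (hSJ ht)
      have h1 : f z ≤ E * f t := by
        have : E⁻¹ * f z ≤ f t := by
          by_contra hcon
          exact ht.2 ⟨hAΓ (hSA ht), htz, not_le.1 hcon⟩
        rwa [inv_mul_le_iff₀ hE] at this
      have h2 : decay M s x z ≤ c₁ * decay M s x t := by
        have h3 := decay_mul_le (M := M) hs x z t
        have h4 : ((1 + 8 * Λ)⁻¹) ^ M ≤ decay M s z t :=
          le_decay_of_dist_le hs (by positivity) (by rwa [dist_comm])
        have h5 : decay M s x z * ((1 + 8 * Λ)⁻¹) ^ M ≤ decay M s x t :=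
          (mul_le_mul_of_nonneg_left h4 (decay_pos hs x z).le).trans h3
        rwa [inv_pow, ← div_eq_mul_inv, div_le_iff₀' (by positivity)] at h5
      have hd := decay_pos (M := M) hs x z
      rw [← ENNReal.ofReal_mul (by positivity), ← ENNReal.ofReal_mul (by have := hf0 t; positivity),
        ← ENNReal.ofReal_mul (by positivity)]
      refine ENNReal.ofReal_le_ofReal ?_
      have hz0 := hf0 z
      have ht0 := hf0 t
      calc f x ^ p ≤ (decay M s x z * f z) ^ p :=
            Real.rpow_le_rpow (hf0 x) hxz (by linarith)
        _ = decay M s x z ^ p * f z ^ p := Real.mul_rpow hd.le hz0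
        _ ≤ decay M s x z * f z ^ p := by
            gcongr
            exact Real.rpow_le_self_of_le_one hd.le (decay_le_one hs x z) hp
        _ ≤ (c₁ * decay M s x t) * (E * f t) ^ p := by
            have := decay_pos (M := M) hs x t
            gcongr
        _ = _ := by
            rw [Real.mul_rpow hE.le ht0]
            ring
    have hVt : ∀ t ∈ S, (meanVolume N ρ z s)⁻¹ ≤ c₂ * (meanVolume N ρ t s)⁻¹ := by
      intro t ht
      have h1 := hreg.meanVolume_le_of_dist_le hz (hAΓ (hSA ht)) hs (by positivity)
        (hJz t (hSJ ht)) j hj.le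
      have h2 : meanVolume N ρ t s ≤ c₂ * meanVolume N ρ z s := by
        refine h1.trans_eq ?_
        rw [hc₂]
        push_cast
        rfl
      calc (meanVolume N ρ z s)⁻¹ = c₂ * (c₂ * meanVolume N ρ z s)⁻¹ := by
            rw [ENNReal.mul_inv (Or.inl hc₂0) (Or.inl ENNReal.coe_ne_top), ← mul_assoc,
              ENNReal.mul_inv_cancel hc₂0 ENNReal.coe_ne_top, one_mul]
        _ ≤ _ := by
            gcongr
    have hAr : (μH[1].restrict Γ).restrict A = μH[1].restrict A := by
      rw [Measure.restrict_restrict hA, inter_eq_left.2 hAΓ]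
    rw [hAr]
    have hu := hreg.measurable_meanDensity
    calc ENNReal.ofReal (f x ^ p)
        = ENNReal.ofReal (f x ^ p) * (meanVolume N ρ z s * (meanVolume N ρ z s)⁻¹) := by
          rw [ENNReal.mul_inv_cancel hV0 hVtop, mul_one]
      _ ≤ ENNReal.ofReal (f x ^ p) * ((C₂ * ∫⁻ y in S, meanDensity N ρ y ∂μH[1]) *
            (meanVolume N ρ z s)⁻¹) := by
          gcongr
      _ = C₂ * ∫⁻ t in S, (ENNReal.ofReal (f x ^ p) * (meanVolume N ρ z s)⁻¹) *
            meanDensity N ρ t ∂μH[1] := by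
          rw [lintegral_const_mul _ hu]
          ring
      _ ≤ C₂ * ∫⁻ t in S, (ENNReal.ofReal c₁ * c₂ * ENNReal.ofReal (E ^ p)) *
            (ENNReal.ofReal (f t ^ p) * meanDensity N ρ t * (meanVolume N ρ t s)⁻¹ *
              ENNReal.ofReal (decay M s x t)) ∂μH[1] := by
          gcongr 1
          refine setLIntegral_mono' hSm fun t ht => ?_
          calc _ ≤ (ENNReal.ofReal c₁ * ENNReal.ofReal (E ^ p) *
                (ENNReal.ofReal (f t ^ p) * ENNReal.ofReal (decay M s x t))) *
                (c₂ * (meanVolume N ρ t s)⁻¹) * meanDensity N ρ t := by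
                gcongr
                · exact hstep t ht
                · exact hVt t ht
            _ = _ := by ring
      _ ≤ C₂ * ((ENNReal.ofReal c₁ * c₂ * ENNReal.ofReal (E ^ p)) *
            ∫⁻ t in A, (ENNReal.ofReal (f t ^ p) * meanDensity N ρ t * (meanVolume N ρ t s)⁻¹ *
              ENNReal.ofReal (decay M s x t)) ∂μH[1]) := by
          rw [lintegral_const_mul' _ _ (by finiteness)]
          gcongr
      _ = _ := by ring
  have hfm : Measurable fun x => ENNReal.ofReal (f x ^ p) := by
    have := hf.measurable
    fun_prop
  have hfin := hreg.lintegral_le_of_le_kernel hM hs hfm (by finiteness) hpoint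
  rw [Measure.restrict_restrict hA, inter_eq_left.2 hAΓ] at hfin
  refine hfin.trans_eq ?_
  rw [ENNReal.coe_mul (C₂ * c₁.toNNReal * c₂), ENNReal.coe_mul (C₂ * c₁.toNNReal),
    ENNReal.coe_mul C₂]
  congr 1
  change _ = C₂ * ENNReal.ofReal c₁ * c₂ * _ * _
  ring

end IsLoop

/-- Lemma 4.1: for `ν ∈ A∞(Γ)` and `1 ≤ p < ∞` there are
`c₃, c₄ > 0` depending only on `Γ, p, λ_ν` such that for every `n`, `p_n ∈ ℙ_n`,
`0 < s < (diam Γ)/4` and every Borel `A ⊆ Γ` with `|A| ≥ |Γ| - s`,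
`∫_Γ |p_n|^p w_n ds ≤ c₃ exp(c₄ δ(s) n) ∫_A |p_n|^p w_n ds`. -/
theorem weighted_remez_wn
    (Γ : Set ℂ) (Λ : ℝ) (hΓJ : IsJordanCurve Γ) (hΓq : IsQuasismooth Γ Λ)
    (lam : ℝ) (p : ℝ) (hp : 1 ≤ p)
    (Φ : ℂ → ℂ) (hΦ : IsExtConformal (unboundedComponent Γ) Φ)
    (δ₀ : ℝ) (hδ₀pos : 0 < δ₀)
    (hδ₀ : ∀ z ∈ Γ, ENNReal.ofReal (2 * rho (unboundedComponent Γ) Φ δ₀ z) < μH[1] Γ) :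
    ∃ c₃ > (0:ℝ), ∃ c₄ > (0:ℝ),
      ∀ ν : MeasureTheory.Measure ℂ, IsFiniteMeasure ν → IsAInftyMeasure Γ ν lam →
      ∀ (n : ℕ), 0 < n → ∀ ℓ : ℂ → Set ℂ, IsArcFamily Γ (unboundedComponent Γ) Φ δ₀ n ℓ →
      ∀ (P : Polynomial ℂ) (s δs : ℝ) (A : Set ℂ),
        P.natDegree ≤ n →
        0 < s → s < Metric.diam Γ / 4 →
        0 < δs → setDist Γ (levelCurve (unboundedComponent Γ) Φ δs) = s →
        MeasurableSet A → A ⊆ Γ → μH[1] Γ ≤ μH[1] A + ENNReal.ofReal s →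
        ∫ z in Γ, ‖P.eval z‖ ^ p * wFun ν (unboundedComponent Γ) Φ n ℓ z ∂μH[1] ≤
          c₃ * Real.exp (c₄ * δs * n) *
            ∫ z in A, ‖P.eval z‖ ^ p * wFun ν (unboundedComponent Γ) Φ n ℓ z ∂μH[1] := by
  obtain ⟨g, T, h⟩ := hΓJ.exists_isLoop
  have hΓm := h.isCompact.measurableSet
  obtain ⟨k, hk⟩ := pow_unbounded_of_one_lt (16 * Λ ^ 2 + 1) one_lt_two
  obtain ⟨M, hM⟩ := pow_unbounded_of_one_lt (4 * lam.toNNReal ^ (2 * k + 2)) one_lt_two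
  have hM' : 4 * lam.toNNReal ^ (2 * k + 2) ≤ 2 ^ (M + 1) :=
    hM.le.trans (pow_le_pow_right₀ one_le_two (Nat.le_succ M))
  obtain ⟨C₀, hC₀, c, hc, hpoly⟩ := h.exists_norm_eval_le_decay_mul hΓq hΦ (Nat.succ_ne_zero M)
  obtain ⟨C₁, hC₁⟩ := h.exists_wFun_compare hΓq hΦ hδ₀pos lam hk.le
  obtain ⟨C₂, hC₂⟩ := h.exists_lintegral_le hΓq lam hp hk.le hM'
  refine ⟨(C₁ * C₂ * C₁) * C₀ ^ p + 1, by positivity, c * p, by positivity,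
    fun ν hν hνA n hn ℓ hℓ P s δs A hP hs hsd hδs hset hA hAΓ hAs => ?_⟩
  set ρ := rho (unboundedComponent Γ) Φ (1 / n) with hρ
  set w := wFun ν (unboundedComponent Γ) Φ n ℓ with hw
  set E := C₀ * Real.exp (c * δs * n) with hE
  have hmain := hC₂ ν ρ (fun z => ‖P.eval z‖) E s A hν hνA (fun x y => infDist_le_infDist_add_dist)
    (fun z hz => hΦ.rho_pos h.isCompact (by positivity) hz) P.continuous.norm
    (fun _ => norm_nonneg _) (by positivity) hs (by linarith) hA hAΓ hAs
    (hpoly n P s δs hP hs (by linarith) hδs hset)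
  have hcomp := hC₁ ν hν hνA n hn ℓ hℓ
  have hw0 : ∀ z, 0 ≤ w z := fun z => div_nonneg ENNReal.toReal_nonneg infDist_nonneg
  have hF0 : ∀ z, 0 ≤ ‖P.eval z‖ ^ p * w z := fun z => by
    have := hw0 z
    positivity
  have hEp : E ^ p = C₀ ^ p * Real.exp (c * p * δs * n) := by
    rw [hE, Real.mul_rpow hC₀.le (Real.exp_pos _).le, ← Real.exp_mul]
    congr 2
    ring
  by_cases hint : IntegrableOn (fun z => ‖P.eval z‖ ^ p * w z) Γ μH[1]
  · have hlint : ∫⁻ z in Γ, ENNReal.ofReal (‖P.eval z‖ ^ p * w z) ∂μH[1] ≤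
        (C₁ * (C₂ * ENNReal.ofReal (E ^ p)) * C₁) *
          ∫⁻ z in A, ENNReal.ofReal (‖P.eval z‖ ^ p * w z) ∂μH[1] := by
      calc ∫⁻ z in Γ, ENNReal.ofReal (‖P.eval z‖ ^ p * w z) ∂μH[1]
          ≤ ∫⁻ z in Γ, C₁ * (ENNReal.ofReal (‖P.eval z‖ ^ p) *
              meanDensity (ν.restrict Γ) ρ z) ∂μH[1] := by
            refine setLIntegral_mono' hΓm fun z hz => ?_
            rw [ENNReal.ofReal_mul (by positivity), mul_left_comm]
            gcongr
            exact (hcomp z hz).1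
        _ ≤ C₁ * (C₂ * ENNReal.ofReal (E ^ p) * ∫⁻ z in A, ENNReal.ofReal (‖P.eval z‖ ^ p) *
              meanDensity (ν.restrict Γ) ρ z ∂μH[1]) := by
            rw [lintegral_const_mul' _ _ ENNReal.coe_ne_top]
            gcongr
        _ ≤ C₁ * (C₂ * ENNReal.ofReal (E ^ p) *
              ∫⁻ z in A, C₁ * ENNReal.ofReal (‖P.eval z‖ ^ p * w z) ∂μH[1]) := by
            gcongr 2
            refine setLIntegral_mono' hA fun z hz => ?_
            rw [ENNReal.ofReal_mul (by positivity), mul_left_comm]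
            gcongr
            exact (hcomp z (hAΓ hz)).2
        _ = _ := by
            rw [lintegral_const_mul' _ _ ENNReal.coe_ne_top]
            ring
    rw [← ofReal_integral_eq_lintegral_ofReal hint (ae_of_all _ hF0),
      ← ofReal_integral_eq_lintegral_ofReal (hint.mono_set hAΓ) (ae_of_all _ hF0)] at hlint
    have hA0 : 0 ≤ ∫ z in A, ‖P.eval z‖ ^ p * w z ∂μH[1] := integral_nonneg fun z => hF0 z
    have hreal : ∫ z in Γ, ‖P.eval z‖ ^ p * w z ∂μH[1] ≤ (C₁ * (C₂ * E ^ p) * C₁) *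
        ∫ z in A, ‖P.eval z‖ ^ p * w z ∂μH[1] := by
      rw [← ENNReal.ofReal_le_ofReal_iff (by positivity)]
      refine hlint.trans_eq ?_
      rw [ENNReal.ofReal_mul (by positivity), ENNReal.ofReal_mul (by positivity),
        ENNReal.ofReal_mul (by positivity), ENNReal.ofReal_mul (by positivity),
        ENNReal.ofReal_coe_nnreal, ENNReal.ofReal_coe_nnreal]
    refine hreal.trans (mul_le_mul_of_nonneg_right ?_ hA0)
    rw [hEp]
    have := Real.exp_pos (c * p * δs * n)
    linarith
  · rw [integral_undef hint]
    have hA0 : 0 ≤ ∫ z in A, ‖P.eval z‖ ^ p * w z ∂μH[1] := integral_nonneg fun z => hF0 z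
    positivity
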